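/- arXiv:2212.07974 — 3 statements merged into one kernel-verified Lean document; each statement's English description precedes it below -/
import Mathlib

section
/- For every α ∈ (0,1), β ≥ 0 and s > -1, one has the Mellin transform identity ∫_0^∞ x^s · φ(-α, β, -x) dx = Γ(1+s) / Γ(α + β + αs), the integral being absolutely convergent. -/
open MeasureTheory

/-- The Wright function `φ(ρ, β, x) = ∑ x^n / (n! Γ(β + ρ n))`. -/
noncomputable def wright (ρ β x : ℝ) : ℝ :=
  ∑' n : ℕ, x ^ n / ((n.factorial : ℝ) * Real.Gamma (β + ρ * n))

/-!
Fix `θ ∈ (π/2, π)`. Hankel's contour may be taken symmetric about the real axis, and by conjugation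
only its upper half matters: `π / Γ z` is the imaginary part of `∫ exp u * u ^ (-z) du` along the
ray from `1` in the direction `exp (θ * I)`. Both sides satisfy `f z = z * f (z + 1)` and are
continuous in `z`, so it is enough to compare them for `z ≤ -1`, where the vertex of the ray can be
moved to `0` at the cost of a real integral, leaving the Gamma integral.

Summing this representation against `x ^ n / n!` under the integral sign represents
`φ(-α, β, -x)` by the integrand `exp u * u ^ (-β) * exp (-x * u ^ α)`. If moreover `|α| θ < π/2`,
then `re (u ^ α)` is positive and comparable to `|u| ^ α` on the ray, so Fubini applies to the
Mellin transform. The inner integral is `Γ (1 + s) * u ^ (-α * (1 + s))`, and the outer one is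
Hankel's integral for `1 / Γ (α + β + α * s)`.
-/

open Set Filter Topology Asymptotics

/-! ### Integrals of powers and exponentials -/

lemma integrableOn_exp_neg_mul_rpow_mul_exp {c κ : ℝ} (hc : 0 < c) (hκ : κ < 1) (p x : ℝ)
    {v : ℝ → ℝ} (hv : ContinuousOn v (Ici 0)) (hpos : ∀ r ∈ Ici 0, 0 < v r)
    (hvΘ : v =Θ[atTop] (id : ℝ → ℝ)) :
    IntegrableOn (fun r => Real.exp (-c * r) * v r ^ p * Real.exp (x * v r ^ κ)) (Ioi 0) := by
  have hv0 : 0 ≤ᶠ[atTop] v := (eventually_ge_atTop 0).mono fun r hr => (hpos r hr).le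
  have hpow (q : ℝ) : (fun r => v r ^ q) =Θ[atTop] fun r => r ^ q :=
    hvΘ.rpow hv0 (eventually_ge_atTop 0)
  have hrpow_p : (fun r => v r ^ p) =O[atTop] fun r => Real.exp (c / 4 * r) :=
    (hpow p).isBigO.trans (isLittleO_rpow_exp_pos_mul_atTop p (by positivity)).isBigO
  have hrpow_κ : (fun r => x * v r ^ κ) =o[atTop] (id : ℝ → ℝ) := by
    refine IsLittleO.const_mul_left ((hpow κ).isBigO.trans_isLittleO ?_) x
    refine isLittleO_of_tendsto' ((eventually_gt_atTop 0).mono fun r hr h => absurd h hr.ne') ?_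
    refine (tendsto_rpow_neg_atTop (sub_pos.2 hκ)).congr' ?_
    filter_upwards [eventually_gt_atTop 0] with r hr
    rw [neg_sub, Real.rpow_sub_one hr.ne', id]
  have hexp : (fun r => Real.exp (x * v r ^ κ)) =O[atTop] fun r => Real.exp (c / 4 * r) := by
    refine IsBigO.of_bound' ?_
    filter_upwards [hrpow_κ.bound (by positivity : 0 < c / 4), eventually_ge_atTop 0] with r hr hr0
    rw [Real.norm_eq_abs, id, Real.norm_of_nonneg hr0] at hr
    simpa using (le_abs_self _).trans hr
  refine integrable_of_isBigO_exp_neg (b := c / 2) (by positivity) ?_ ?_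
  · have hcont (q : ℝ) : ContinuousOn (fun r => v r ^ q) (Ici 0) :=
      hv.rpow_const fun r hr => Or.inl (hpos r hr).ne'
    exact ((by fun_prop : Continuous fun r => Real.exp (-c * r)).continuousOn.mul (hcont p)).mul
      (continuousOn_const.mul (hcont κ)).rexp
  · refine (((isBigO_refl _ _).mul hrpow_p).mul hexp).congr_right fun r => ?_
    rw [← Real.exp_add, ← Real.exp_add]
    ring_nf

lemma rpow_le_rpow_add_rpow {x a b c : ℝ} (hx : 0 < x) (hab : a ≤ b) (hbc : b ≤ c) :
    x ^ b ≤ x ^ a + x ^ c := by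
  rcases le_total 1 x with h | h
  · linarith [Real.rpow_le_rpow_of_exponent_le h hbc, Real.rpow_pos_of_pos hx a]
  · linarith [Real.rpow_le_rpow_of_exponent_ge hx h hab, Real.rpow_pos_of_pos hx c]

lemma integrableOn_rpow_mul_exp_neg_mul_Ioi {a c : ℝ} (ha : 0 < a) (hc : 0 < c) :
    IntegrableOn (fun t => t ^ (a - 1) * Real.exp (-c * t)) (Ioi 0) := by
  simpa using integrableOn_rpow_mul_exp_neg_mul_rpow (p := 1) (by linarith : -1 < a - 1) one_pos hc

/-- The measure `t ^ (a - 1) dt` on the positive half-line. Its complex moment generating function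
is the Laplace transform of `t ^ (a - 1)`, with the sign of the variable reversed. -/
noncomputable def powerMeasure (a : ℝ) : Measure ℝ :=
  (volume.restrict (Ioi 0)).withDensity fun t => ENNReal.ofReal (t ^ (a - 1))

lemma integral_powerMeasure (a : ℝ) (f : ℝ → ℂ) :
    ∫ t, f t ∂powerMeasure a = ∫ t in Ioi 0, ((t ^ (a - 1) : ℝ) : ℂ) * f t := by
  rw [powerMeasure, integral_withDensity_eq_integral_toReal_smul (by fun_prop)
    (.of_forall fun _ => ENNReal.ofReal_lt_top)]
  refine setIntegral_congr_fun measurableSet_Ioi fun t ht => ?_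
  rw [ENNReal.toReal_ofReal (Real.rpow_nonneg (le_of_lt ht) _), Complex.real_smul]

lemma Iio_zero_subset_integrableExpSet_powerMeasure {a : ℝ} (ha : 0 < a) :
    Iio 0 ⊆ ProbabilityTheory.integrableExpSet id (powerMeasure a) := by
  intro z hz
  change Integrable _ _
  rw [powerMeasure, integrable_withDensity_iff (by fun_prop)
    (.of_forall fun _ => ENNReal.ofReal_lt_top)]
  refine (integrableOn_rpow_mul_exp_neg_mul_Ioi ha (neg_pos.2 hz)).congr_fun (fun t ht => ?_)
    measurableSet_Ioi
  dsimp only [id]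
  rw [ENNReal.toReal_ofReal (Real.rpow_nonneg (le_of_lt ht) _), neg_neg, mul_comm]

lemma integral_rpow_mul_cexp_neg_mul_Ioi {a : ℝ} (ha : 0 < a) {c : ℂ} (hc : 0 < c.re) :
    ∫ t in Ioi (0 : ℝ), ((t ^ (a - 1) : ℝ) : ℂ) * Complex.exp (-(c * t)) =
      Real.Gamma a * c ^ (-a : ℂ) := by
  set laplace : ℂ → ℂ := fun c => ProbabilityTheory.complexMGF id (powerMeasure a) (-c)
  have hlaplace (c : ℂ) : laplace c =
      ∫ t in Ioi (0 : ℝ), ((t ^ (a - 1) : ℝ) : ℂ) * Complex.exp (-(c * t)) := by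
    simp [laplace, ProbabilityTheory.complexMGF, integral_powerMeasure]
  have hreal (x : ℝ) (hx : 0 < x) : laplace x = Real.Gamma a * (x : ℂ) ^ (-a : ℂ) := by
    have h := congrArg ((↑) : ℝ → ℂ) (Real.integral_rpow_mul_exp_neg_mul_Ioi ha hx)
    rw [← integral_complex_ofReal, one_div, Real.inv_rpow hx.le, ← Real.rpow_neg hx.le,
      mul_comm] at h
    push_cast [Complex.ofReal_cpow hx.le] at h
    rw [hlaplace, ← h]
  have hpre : IsPreconnected {c : ℂ | 0 < c.re} := (convex_halfSpace_re_gt 0).isPreconnected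
  have hlaplace_an : AnalyticOnNhd ℂ laplace {c | 0 < c.re} := fun c hc =>
    (ProbabilityTheory.analyticAt_complexMGF (interior_maximal
      (Iio_zero_subset_integrableExpSet_powerMeasure ha) isOpen_Iio (by simpa using hc))).comp
      analyticAt_id.neg
  have hpow_an : AnalyticOnNhd ℂ (fun c : ℂ => Real.Gamma a * c ^ (-a : ℂ)) {c | 0 < c.re} :=
    fun c hc => analyticAt_const.mul (analyticAt_id.cpow analyticAt_const (Or.inl hc))
  rw [← hlaplace]
  refine hlaplace_an.eqOn_of_preconnected_of_frequently_eq hpow_an hpre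
    (z₀ := ((1 : ℝ) : ℂ)) (by simp) ?_ hc
  have hofReal : Tendsto ((↑) : ℝ → ℂ) (𝓝[≠] 1) (𝓝[≠] (1 : ℝ)) :=
    Complex.continuous_ofReal.continuousWithinAt.tendsto_nhdsWithin fun x hx => by simpa using hx
  exact hofReal.frequently
    ((eventually_nhdsWithin_of_eventually_nhds (lt_mem_nhds one_pos)).mono hreal).frequently

lemma ofReal_mul_exp_mul_I_cpow {r θ : ℝ} (hr : 0 < r) (hθ : θ ∈ Ioc (-Real.pi) Real.pi) (w : ℂ) :
    ((r : ℂ) * Complex.exp (θ * Complex.I)) ^ w =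
      (r : ℂ) ^ w * Complex.exp (θ * w * Complex.I) := by
  have hr0 : (r : ℂ) ≠ 0 := Complex.ofReal_ne_zero.2 hr.ne'
  have hlog : Complex.log (r * Complex.exp (θ * Complex.I)) = Complex.log r + θ * Complex.I := by
    rw [Complex.log_ofReal_mul hr (Complex.exp_ne_zero _), Complex.ofReal_log hr.le,
      Complex.log_exp (by simpa using hθ.1) (by simpa using hθ.2)]
  rw [Complex.cpow_def_of_ne_zero (mul_ne_zero hr0 (Complex.exp_ne_zero _)), hlog,
    Complex.cpow_def_of_ne_zero hr0, ← Complex.exp_add]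
  ring_nf

/-! ### The reciprocal Gamma function -/

lemma Gamma_one_sub_mul_sin {z : ℝ} (hz : z < 1) :
    Real.Gamma (1 - z) * Real.sin (Real.pi * (1 - z)) = Real.pi * (Real.Gamma z)⁻¹ := by
  have hΓ : Real.Gamma (1 - z) ≠ 0 := (Real.Gamma_pos_of_pos (sub_pos.2 hz)).ne'
  rw [mul_one_sub, Real.sin_pi_sub, ← mul_inv_cancel_right₀ hΓ (Real.Gamma z),
    Real.Gamma_mul_Gamma_one_sub]
  by_cases hsin : Real.sin (Real.pi * z) = 0
  · simp [hsin]
  · field_simp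

lemma continuous_inv_Gamma : Continuous fun z : ℝ => (Real.Gamma z)⁻¹ := by
  refine (Complex.continuous_re.comp
    (Complex.differentiable_one_div_Gamma.continuous.comp Complex.continuous_ofReal)).congr
    fun z => ?_
  rw [Function.comp_apply, Function.comp_apply, Complex.Gamma_ofReal, ← Complex.ofReal_inv,
    Complex.ofReal_re]

lemma inv_Gamma_eq_mul_inv_Gamma_add_one (z : ℝ) :
    (Real.Gamma z)⁻¹ = z * (Real.Gamma (z + 1))⁻¹ := by
  have h := Complex.one_div_Gamma_eq_self_mul_one_div_Gamma_add_one z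
  rw [← Complex.ofReal_one, ← Complex.ofReal_add, Complex.Gamma_ofReal, Complex.Gamma_ofReal] at h
  exact_mod_cast h

lemma eq_zero_of_eq_mul_add_one {f : ℝ → ℝ} (hf : Continuous f) (hrec : ∀ z, f z = z * f (z + 1))
    {b : ℝ} (hb : ∀ z ≤ b, f z = 0) (z : ℝ) : f z = 0 := by
  -- The recursion leaves out `f 1`; continuity fills in this point.
  have hstep (n : ℕ) : EqOn f 0 (Iio (b + n)) := by
    induction n with
    | zero => exact fun z hz => hb z (by simpa using (mem_Iio.1 hz).le)
    | succ n ih =>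
      have hne : EqOn f 0 (Iio (b + (n + 1 : ℕ)) ∩ {1}ᶜ) := by
        rintro z ⟨hz, hz1⟩
        have hz' : z - 1 ∈ Iio (b + n) := by
          rw [mem_Iio] at hz ⊢
          push_cast at hz
          linarith
        have h := hrec (z - 1)
        rw [ih hz', sub_add_cancel] at h
        exact (mul_eq_zero.1 h.symm).resolve_left (sub_ne_zero.2 hz1)
      exact (hne.closure hf continuous_zero).mono
        ((dense_compl_singleton 1).open_subset_closure_inter isOpen_Iio)
  obtain ⟨n, hn⟩ := exists_nat_gt (z - b)
  exact hstep n (sub_lt_iff_lt_add'.1 hn)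

/-! ### Contour integrals along rays -/

lemma cos_neg_of_mem_Ioo {θ : ℝ} (hθ : θ ∈ Ioo (Real.pi / 2) Real.pi) : Real.cos θ < 0 :=
  Real.cos_neg_of_pi_div_two_lt_of_lt hθ.1 (by linarith [hθ.2, Real.pi_pos])

lemma sin_pos_of_mem_Ioo {θ : ℝ} (hθ : θ ∈ Ioo (Real.pi / 2) Real.pi) : 0 < Real.sin θ :=
  Real.sin_pos_of_mem_Ioo (Ioo_subset_Ioo_left Real.pi_div_two_pos.le hθ)

/-- The point at distance `r` from the vertex `a` on the ray of direction `exp (θ * I)`. -/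
noncomputable def hankelRay (θ a r : ℝ) : ℂ :=
  a + r * Complex.exp (θ * Complex.I)

section HankelRay

variable {θ a r : ℝ}

lemma hankelRay_re : (hankelRay θ a r).re = a + r * Real.cos θ := by
  simp [hankelRay, Complex.exp_ofReal_mul_I_re]

lemma hankelRay_im : (hankelRay θ a r).im = r * Real.sin θ := by
  simp [hankelRay, Complex.exp_ofReal_mul_I_im]

lemma continuous_hankelRay : Continuous fun p : ℝ × ℝ => hankelRay θ p.2 p.1 := by
  unfold hankelRay
  fun_prop

lemma norm_hankelRay_le (ha : 0 ≤ a) (hr : 0 ≤ r) : ‖hankelRay θ a r‖ ≤ a + r := by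
  refine (norm_add_le _ _).trans_eq ?_
  rw [norm_mul, Complex.norm_exp_ofReal_mul_I, mul_one, Complex.norm_of_nonneg ha,
    Complex.norm_of_nonneg hr]

lemma hankelRay_mem_slitPlane (hsin : 0 < Real.sin θ) (h : 0 < a ∨ 0 < r) (hr : 0 ≤ r) :
    hankelRay θ a r ∈ Complex.slitPlane := by
  rw [Complex.mem_slitPlane_iff, hankelRay_re, hankelRay_im]
  rcases hr.eq_or_lt with rfl | hr
  · exact Or.inl (by simpa using h)
  · exact Or.inr (mul_pos hr hsin).ne'

lemma hankelRay_ne_zero (hsin : 0 < Real.sin θ) (h : 0 < a ∨ 0 < r) (hr : 0 ≤ r) :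
    hankelRay θ a r ≠ 0 :=
  Complex.slitPlane_ne_zero (hankelRay_mem_slitPlane hsin h hr)

lemma norm_hankelRay_isTheta : (fun r => ‖hankelRay θ a r‖) =Θ[atTop] (id : ℝ → ℝ) := by
  have hlin : (fun r : ℝ => (r : ℂ) * Complex.exp (θ * Complex.I)) =Θ[atTop] (id : ℝ → ℝ) :=
    .of_norm_eventuallyEq_norm (.of_forall fun r => by simp [Complex.norm_exp_ofReal_mul_I])
  have hconst : (fun _ : ℝ => (a : ℂ)) =o[atTop] (id : ℝ → ℝ) := isLittleO_const_id_atTop _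
  exact (hconst.add_isTheta hlin).norm_left

lemma hasDerivAt_hankelRay : HasDerivAt (hankelRay θ a) (Complex.exp (θ * Complex.I)) r := by
  unfold hankelRay
  simpa using
    (Complex.ofRealCLM.hasDerivAt.mul_const (Complex.exp (θ * Complex.I))).const_add (a : ℂ)

lemma hasDerivAt_hankelRay_vertex : HasDerivAt (fun a => hankelRay θ a r) 1 a :=
  Complex.ofRealCLM.hasDerivAt.add_const _

/-- The contour integral of `f` along the ray of direction `exp (θ * I)` with vertex `a`. -/
noncomputable def rayIntegral (θ a : ℝ) (f : ℂ → ℂ) : ℂ :=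
  Complex.exp (θ * Complex.I) * ∫ r in Ioi (0 : ℝ), f (hankelRay θ a r)

lemma const_mul_rayIntegral (c : ℂ) (f : ℂ → ℂ) :
    c * rayIntegral θ a f = rayIntegral θ a fun u => c * f u := by
  rw [rayIntegral, rayIntegral, integral_const_mul, mul_left_comm]

lemma rayIntegral_deriv {f f' : ℂ → ℂ}
    (hderiv : ∀ r : ℝ, 0 ≤ r → HasDerivAt f (f' (hankelRay θ a r)) (hankelRay θ a r))
    (hf : IntegrableOn (fun r => f (hankelRay θ a r)) (Ioi 0))
    (hf' : IntegrableOn (fun r => f' (hankelRay θ a r)) (Ioi 0)) :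
    rayIntegral θ a f' = -f a := by
  have hcomp (r : ℝ) (hr : r ∈ Ici 0) := (hderiv r hr).scomp r hasDerivAt_hankelRay
  have hint : IntegrableOn
      (fun r => Complex.exp (θ * Complex.I) • f' (hankelRay θ a r)) (Ioi 0) :=
    hf'.const_mul _
  rw [rayIntegral, ← smul_eq_mul, ← integral_smul,
    integral_Ioi_of_hasDerivAt_of_tendsto' hcomp hint
      (tendsto_zero_of_hasDerivAt_of_integrableOn_Ioi
        (fun r hr => hcomp r (Ioi_subset_Ici_self hr)) hint hf)]
  simp [hankelRay]

lemma rayIntegral_sub_rayIntegral {f f' : ℂ → ℂ} {a b : ℝ} (hab : a ≤ b)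
    (hderiv : ∀ ε ∈ Icc a b, ∀ r : ℝ, 0 ≤ r → a < ε ∨ 0 < r →
      HasDerivAt f (f' (hankelRay θ ε r)) (hankelRay θ ε r))
    (hf : ∀ ε ∈ Icc a b, IntegrableOn (fun r => f (hankelRay θ ε r)) (Ioi 0))
    (hf' : Integrable (fun p : ℝ × ℝ => f' (hankelRay θ p.2 p.1))
      ((volume.restrict (Ioi 0)).prod (volume.restrict (Ioc a b)))) :
    rayIntegral θ b f - rayIntegral θ a f = -∫ ε in a..b, f ε := by
  -- Both sides are evaluations of the double integral of `f'` over the strip between the rays.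
  have hacross : ∫ r in Ioi (0 : ℝ), ∫ ε in Ioc a b, f' (hankelRay θ ε r) =
      ∫ r in Ioi (0 : ℝ), (f (hankelRay θ b r) - f (hankelRay θ a r)) := by
    refine integral_congr_ae ?_
    filter_upwards [hf'.prod_right_ae, ae_restrict_mem measurableSet_Ioi] with r hr hr0
    rw [← intervalIntegral.integral_of_le hab]
    refine intervalIntegral.integral_eq_sub_of_hasDerivAt (f := fun ε => f (hankelRay θ ε r))
      (fun ε hε => ?_) ((intervalIntegrable_iff_integrableOn_Ioc_of_le hab).2 hr)
    rw [uIcc_of_le hab] at hε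
    have h := (hderiv ε hε r (le_of_lt hr0) (Or.inr hr0)).scomp ε hasDerivAt_hankelRay_vertex
    rwa [one_smul] at h
  have halong : ∫ ε in Ioc a b, rayIntegral θ ε f' = ∫ ε in Ioc a b, -f ε := by
    refine integral_congr_ae ?_
    filter_upwards [hf'.prod_left_ae, ae_restrict_mem measurableSet_Ioc] with ε hε hε0
    have hmem := Ioc_subset_Icc_self hε0
    exact rayIntegral_deriv (fun r hr => hderiv ε hmem r hr (Or.inl hε0.1)) (hf ε hmem) hε
  rw [rayIntegral, rayIntegral, ← mul_sub,
    ← integral_sub (hf b ⟨hab, le_rfl⟩) (hf a ⟨le_rfl, hab⟩), ← hacross,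
    integral_integral_swap hf', ← integral_const_mul, intervalIntegral.integral_of_le hab,
    ← integral_neg]
  exact halong

end HankelRay

/-! ### Hankel's representation of the reciprocal Gamma function -/

/-- The integrand `exp u * u ^ (-z)` of Hankel's contour integral for `1 / Γ z`. -/
noncomputable def hankelKernel (z : ℝ) (u : ℂ) : ℂ :=
  Complex.exp u * u ^ (-z : ℂ)

section HankelKernel

variable {θ a r z : ℝ} {u : ℂ}

lemma measurable_hankelKernel : Measurable (hankelKernel z) := by
  unfold hankelKernel
  fun_prop

lemma norm_hankelKernel : ‖hankelKernel z u‖ = Real.exp u.re * ‖u‖ ^ (-z) := by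
  rw [hankelKernel, norm_mul, Complex.norm_exp, ← Complex.ofReal_neg, Complex.norm_cpow_real]

lemma hankelKernel_ofReal_im (ha : 0 ≤ a) : (hankelKernel z a).im = 0 := by
  rw [hankelKernel, ← Complex.ofReal_exp, ← Complex.ofReal_neg, ← Complex.ofReal_cpow ha,
    ← Complex.ofReal_mul, Complex.ofReal_im]

lemma hankelKernel_add (hu : u ≠ 0) (w : ℝ) :
    hankelKernel (z + w) u = hankelKernel z u * u ^ (-w : ℂ) := by
  rw [hankelKernel, hankelKernel, mul_assoc, ← Complex.cpow_add _ _ hu, Complex.ofReal_add, neg_add]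

lemma hasDerivAt_hankelKernel (hu : u ∈ Complex.slitPlane) :
    HasDerivAt (hankelKernel z) (hankelKernel z u - z * hankelKernel (z + 1) u) u := by
  have h := (Complex.hasDerivAt_exp u).mul ((hasDerivAt_id u).cpow_const (c := (-z : ℂ)) hu)
  refine h.congr_deriv ?_
  simp only [hankelKernel, id]
  push_cast
  ring_nf

lemma integrableOn_hankelKernel_mul_exp (hcos : Real.cos θ < 0) (hsin : 0 < Real.sin θ) (ha : 0 < a)
    {κ : ℝ} (hκ : κ < 1) (z x : ℝ) :
    IntegrableOn (fun r => ‖hankelKernel z (hankelRay θ a r)‖ *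
      Real.exp (x * ‖hankelRay θ a r‖ ^ κ)) (Ioi 0) := by
  have h := integrableOn_exp_neg_mul_rpow_mul_exp (neg_pos.2 hcos) hκ (-z) x
    (continuous_hankelRay.comp (.prodMk_left a)).norm.continuousOn
    (fun r hr => norm_pos_iff.2 (hankelRay_ne_zero hsin (Or.inl ha) hr)) norm_hankelRay_isTheta
  refine IntegrableOn.congr_fun (h.const_mul (Real.exp a)) (fun r _ => ?_) measurableSet_Ioi
  dsimp only [Function.comp_apply]
  rw [norm_hankelKernel, hankelRay_re, Real.exp_add]
  ring_nf

lemma integrableOn_hankelKernel (hcos : Real.cos θ < 0) (hsin : 0 < Real.sin θ) (ha : 0 < a)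
    (z : ℝ) :
    IntegrableOn (fun r => hankelKernel z (hankelRay θ a r)) (Ioi 0) := by
  refine (integrable_norm_iff ?_).1 ?_
  · exact (measurable_hankelKernel.comp
      (continuous_hankelRay.comp (.prodMk_left a)).measurable).aestronglyMeasurable
  · simpa [IntegrableOn] using integrableOn_hankelKernel_mul_exp hcos hsin ha one_half_lt_one z 0

lemma norm_hankelKernel_hankelRay_le (ha : a ∈ Icc 0 1) (hr : 0 ≤ r) (hz : z ≤ 0) :
    ‖hankelKernel z (hankelRay θ a r)‖ ≤
      Real.exp 1 * (Real.exp (r * Real.cos θ) * (1 + r) ^ (-z)) := by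
  rw [norm_hankelKernel, hankelRay_re, Real.exp_add, mul_assoc]
  gcongr
  · exact ha.2
  · linarith
  · exact (norm_hankelRay_le ha.1 hr).trans (by gcongr; exact ha.2)

lemma integrableOn_exp_mul_cos_mul_one_add_rpow (hcos : Real.cos θ < 0) (z : ℝ) :
    IntegrableOn (fun r => Real.exp 1 * (Real.exp (r * Real.cos θ) * (1 + r) ^ (-z))) (Ioi 0) := by
  have h := integrableOn_exp_neg_mul_rpow_mul_exp (neg_pos.2 hcos) one_half_lt_one (-z) 0
    (v := fun r => 1 + r) (by fun_prop) (fun r (hr : 0 ≤ r) => by positivity)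
    ((isLittleO_const_id_atTop 1).add_isTheta (isTheta_refl _ _))
  refine IntegrableOn.congr_fun (h.const_mul (Real.exp 1)) (fun r _ => ?_) measurableSet_Ioi
  simp [mul_comm r]

lemma integrableOn_hankelKernel_of_nonpos (hcos : Real.cos θ < 0) (ha : a ∈ Icc 0 1) (hz : z ≤ 0) :
    IntegrableOn (fun r => hankelKernel z (hankelRay θ a r)) (Ioi 0) :=
  (integrableOn_exp_mul_cos_mul_one_add_rpow hcos z).mono'
    (measurable_hankelKernel.comp
      (continuous_hankelRay.comp (.prodMk_left a)).measurable).aestronglyMeasurable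
    (ae_restrict_of_forall_mem measurableSet_Ioi fun _ hr =>
      norm_hankelKernel_hankelRay_le ha (le_of_lt hr) hz)

lemma integrable_prod_hankelKernel_of_nonpos (hcos : Real.cos θ < 0) (hz : z ≤ 0) :
    Integrable (fun p : ℝ × ℝ => hankelKernel z (hankelRay θ p.2 p.1))
      ((volume.restrict (Ioi 0)).prod (volume.restrict (Ioc 0 1))) := by
  refine (Integrable.comp_fst (integrableOn_exp_mul_cos_mul_one_add_rpow hcos z) _).mono'
    (measurable_hankelKernel.comp continuous_hankelRay.measurable).aestronglyMeasurable ?_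
  rw [Measure.prod_restrict]
  exact ae_restrict_of_forall_mem (measurableSet_Ioi.prod measurableSet_Ioc) fun p hp =>
    norm_hankelKernel_hankelRay_le (Ioc_subset_Icc_self hp.2) (le_of_lt hp.1) hz

end HankelKernel

section HankelRepresentation

variable {θ a z : ℝ}

lemma rayIntegral_hankelKernel_im (hcos : Real.cos θ < 0) (hsin : 0 < Real.sin θ) (ha : 0 < a)
    (z : ℝ) : (rayIntegral θ a (hankelKernel z)).im =
      z * (rayIntegral θ a (hankelKernel (z + 1))).im := by
  have hint (z : ℝ) := integrableOn_hankelKernel hcos hsin ha z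
  have h := rayIntegral_deriv (f' := fun u => hankelKernel z u - z * hankelKernel (z + 1) u)
    (fun r hr => hasDerivAt_hankelKernel (hankelRay_mem_slitPlane hsin (Or.inl ha) hr))
    (hint z) ((hint z).sub ((hint (z + 1)).const_mul z))
  rw [rayIntegral, integral_sub (hint z) ((hint (z + 1)).const_mul _), integral_const_mul, mul_sub,
    mul_left_comm, ← rayIntegral, ← rayIntegral] at h
  have him := congrArg Complex.im h
  rw [Complex.sub_im, Complex.im_ofReal_mul, Complex.neg_im, hankelKernel_ofReal_im ha.le,
    neg_zero] at him
  exact sub_eq_zero.1 him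

lemma rayIntegral_one_hankelKernel_im (hcos : Real.cos θ < 0) (hsin : 0 < Real.sin θ)
    (hz : z ≤ -1) : (rayIntegral θ 1 (hankelKernel z)).im =
      (rayIntegral θ 0 (hankelKernel z)).im := by
  have h := rayIntegral_sub_rayIntegral
    (f' := fun u => hankelKernel z u - z * hankelKernel (z + 1) u) zero_le_one
    (fun _ _ r hr hεr => hasDerivAt_hankelKernel (hankelRay_mem_slitPlane hsin hεr hr))
    (fun ε hε => integrableOn_hankelKernel_of_nonpos hcos hε (by linarith))
    ((integrable_prod_hankelKernel_of_nonpos hcos (by linarith)).sub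
      ((integrable_prod_hankelKernel_of_nonpos hcos (z := z + 1) (by linarith)).const_mul (z : ℂ)))
  have hreal : ∫ ε in (0 : ℝ)..1, hankelKernel z ε =
      ((∫ ε in (0 : ℝ)..1, (hankelKernel z ε).re : ℝ) : ℂ) := by
    rw [← intervalIntegral.integral_ofReal]
    refine intervalIntegral.integral_congr fun ε hε => ?_
    rw [uIcc_of_le zero_le_one] at hε
    exact Complex.ext rfl (hankelKernel_ofReal_im hε.1)
  have him := congrArg Complex.im h
  rw [hreal, Complex.sub_im, Complex.neg_im, Complex.ofReal_im, neg_zero] at him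
  exact sub_eq_zero.1 him

lemma rayIntegral_zero_hankelKernel (hθ : θ ∈ Ioo (Real.pi / 2) Real.pi) (hz : z < 1) :
    rayIntegral θ 0 (hankelKernel z) =
      Real.Gamma (1 - z) * Complex.exp (Real.pi * (1 - z) * Complex.I) := by
  have hpi := Real.pi_pos
  set c : ℂ := Complex.exp ((θ - Real.pi : ℝ) * Complex.I) with hc
  have hneg : Complex.exp (θ * Complex.I) = -c := by
    rw [hc, Complex.ofReal_sub, sub_mul, Complex.exp_sub, Complex.exp_pi_mul_I, div_neg, div_one,
      neg_neg]
  have hc_re : 0 < c.re := by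
    rw [hc, Complex.exp_ofReal_mul_I_re]
    exact Real.cos_pos_of_mem_Ioo ⟨by linarith [hθ.1], by linarith [hθ.2]⟩
  have hkernel : ∀ r ∈ Ioi (0 : ℝ), hankelKernel z (hankelRay θ 0 r) =
      Complex.exp (-(θ * z) * Complex.I) *
        (((r ^ (1 - z - 1) : ℝ) : ℂ) * Complex.exp (-(c * r))) := by
    intro r hr
    rw [hankelKernel, hankelRay, Complex.ofReal_zero, zero_add,
      ofReal_mul_exp_mul_I_cpow hr ⟨by linarith [hθ.1], hθ.2.le⟩, hneg, sub_sub_cancel_left,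
      Complex.ofReal_cpow (le_of_lt hr)]
    push_cast
    ring_nf
  have hc_pow : c ^ (-(1 - z : ℝ) : ℂ) = Complex.exp (-((θ - Real.pi) * (1 - z)) * Complex.I) := by
    have h := ofReal_mul_exp_mul_I_cpow one_pos (θ := θ - Real.pi)
      ⟨by linarith [hθ.1], by linarith [hθ.2]⟩ (-(1 - z : ℝ))
    rw [Complex.ofReal_one, one_mul, Complex.one_cpow, one_mul] at h
    rw [hc, h]
    push_cast
    ring_nf
  rw [rayIntegral, setIntegral_congr_fun measurableSet_Ioi hkernel, integral_const_mul,
    integral_rpow_mul_cexp_neg_mul_Ioi (sub_pos.2 hz) hc_re, hc_pow,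
    mul_left_comm _ (Real.Gamma _ : ℂ), mul_left_comm _ (Real.Gamma _ : ℂ), ← Complex.exp_add,
    ← Complex.exp_add]
  ring_nf

lemma continuous_rayIntegral_hankelKernel (hcos : Real.cos θ < 0) (hsin : 0 < Real.sin θ)
    (ha : 0 < a) : Continuous fun z => rayIntegral θ a (hankelKernel z) := by
  refine continuous_const.mul (continuous_iff_continuousAt.2 fun z₀ => ?_)
  refine continuousAt_of_dominated (bound := fun r =>
      ‖hankelKernel (z₀ + 1) (hankelRay θ a r)‖ + ‖hankelKernel (z₀ - 1) (hankelRay θ a r)‖)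
    (.of_forall fun z => (integrableOn_hankelKernel hcos hsin ha z).aestronglyMeasurable) ?_
    ((integrableOn_hankelKernel hcos hsin ha _).norm.add
      (integrableOn_hankelKernel hcos hsin ha _).norm) ?_
  · filter_upwards [Icc_mem_nhds (sub_one_lt z₀) (lt_add_one z₀)] with z hz
    refine ae_restrict_of_forall_mem measurableSet_Ioi fun r hr => ?_
    rw [norm_hankelKernel, norm_hankelKernel, norm_hankelKernel, ← mul_add]
    gcongr
    exact rpow_le_rpow_add_rpow (norm_pos_iff.2 (hankelRay_ne_zero hsin (Or.inl ha) (le_of_lt hr)))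
      (neg_le_neg hz.2) (neg_le_neg hz.1)
  · refine ae_restrict_of_forall_mem measurableSet_Ioi fun r hr => ?_
    unfold hankelKernel
    have := hankelRay_ne_zero hsin (Or.inl ha) (le_of_lt hr)
    exact continuousAt_const.mul ((continuousAt_const_cpow this).comp (by fun_prop))

theorem rayIntegral_hankelKernel_im_eq_inv_Gamma (hθ : θ ∈ Ioo (Real.pi / 2) Real.pi) (z : ℝ) :
    (rayIntegral θ 1 (hankelKernel z)).im = Real.pi * (Real.Gamma z)⁻¹ := by
  have hcos := cos_neg_of_mem_Ioo hθ
  have hsin := sin_pos_of_mem_Ioo hθ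
  refine sub_eq_zero.1 (eq_zero_of_eq_mul_add_one (b := -1)
    (f := fun z => (rayIntegral θ 1 (hankelKernel z)).im - Real.pi * (Real.Gamma z)⁻¹) ?_ ?_ ?_ z)
  · exact (Complex.continuous_im.comp (continuous_rayIntegral_hankelKernel hcos hsin one_pos)).sub
      (continuous_inv_Gamma.const_mul _)
  · intro z
    rw [rayIntegral_hankelKernel_im hcos hsin one_pos, inv_Gamma_eq_mul_inv_Gamma_add_one]
    ring
  · intro z hz
    rw [rayIntegral_one_hankelKernel_im hcos hsin hz,
      rayIntegral_zero_hankelKernel hθ (by linarith), Complex.im_ofReal_mul]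
    have harg : (Real.pi * (1 - z) : ℂ) = ((Real.pi * (1 - z) : ℝ) : ℂ) := by push_cast; rfl
    rw [harg, Complex.exp_ofReal_mul_I_im, Gamma_one_sub_mul_sin (by linarith), sub_self]

end HankelRepresentation

/-! ### The Wright function as a contour integral -/

/-- The integrand representing the Wright function `wright ρ β x` as a contour integral: Hankel's
integrand for `1 / Γ (β + ρ n)`, summed against `x ^ n / n!`. -/
noncomputable def wrightKernel (ρ β x : ℝ) (u : ℂ) : ℂ :=
  hankelKernel β u * Complex.exp (x * u ^ (-ρ : ℂ))

lemma pow_div_factorial_mul_hankelKernel {u : ℂ} (hu : u ≠ 0) (ρ β x : ℝ) (n : ℕ) :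
    ((x ^ n / n.factorial : ℝ) : ℂ) * hankelKernel (β + ρ * n) u =
      hankelKernel β u * ((x * u ^ (-ρ : ℂ)) ^ n / n.factorial) := by
  have hpow : u ^ (-((ρ * n : ℝ)) : ℂ) = (u ^ (-ρ : ℂ)) ^ n := by
    rw [← Complex.cpow_mul_nat]
    push_cast
    ring_nf
  rw [hankelKernel_add hu, hpow]
  push_cast
  ring

lemma hasSum_integral_hankelKernel {θ ρ : ℝ} (hcos : Real.cos θ < 0) (hsin : 0 < Real.sin θ)
    (hρ : -1 < ρ) (β x : ℝ) :
    HasSum (fun n : ℕ => ((x ^ n / n.factorial : ℝ) : ℂ) *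
      rayIntegral θ 1 (hankelKernel (β + ρ * n))) (rayIntegral θ 1 (wrightKernel ρ β x)) := by
  have hbound (u : ℂ) : HasSum
      (fun n : ℕ => ‖hankelKernel β u‖ * ((|x| * ‖u‖ ^ (-ρ)) ^ n / n.factorial))
      (‖hankelKernel β u‖ * Real.exp (|x| * ‖u‖ ^ (-ρ))) := by
    rw [Real.exp_eq_exp_ℝ]
    have h := NormedSpace.expSeries_div_hasSum_exp (|x| * ‖u‖ ^ (-ρ))
    exact HasSum.mul_left _ h
  have hray : ∀ r ∈ Ioi (0 : ℝ), hankelRay θ 1 r ≠ 0 := fun r hr =>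
    hankelRay_ne_zero hsin (Or.inl one_pos) (le_of_lt hr)
  have hsum : HasSum
      (fun n : ℕ => ∫ r in Ioi (0 : ℝ), ((x ^ n / n.factorial : ℝ) : ℂ) *
        hankelKernel (β + ρ * n) (hankelRay θ 1 r))
      (∫ r in Ioi (0 : ℝ), wrightKernel ρ β x (hankelRay θ 1 r)) := by
    refine hasSum_integral_of_dominated_convergence (fun n r =>
      ‖hankelKernel β (hankelRay θ 1 r)‖ * ((|x| * ‖hankelRay θ 1 r‖ ^ (-ρ)) ^ n / n.factorial))
      (fun n => ?_) (fun n => ?_) (.of_forall fun r => (hbound _).summable) ?_ ?_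
    · exact ((integrableOn_hankelKernel hcos hsin one_pos _).const_mul _).aestronglyMeasurable
    · refine ae_restrict_of_forall_mem measurableSet_Ioi fun r hr => le_of_eq ?_
      rw [pow_div_factorial_mul_hankelKernel (hray r hr), norm_mul, norm_div, norm_pow, norm_mul,
        ← Complex.ofReal_neg, Complex.norm_cpow_real, Complex.norm_real, Real.norm_eq_abs,
        Complex.norm_natCast]
    · simp only [(hbound _).tsum_eq]
      exact integrableOn_hankelKernel_mul_exp hcos hsin one_pos (neg_lt.1 hρ) β |x|
    · refine ae_restrict_of_forall_mem measurableSet_Ioi fun r hr => ?_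
      simp only [pow_div_factorial_mul_hankelKernel (hray r hr), wrightKernel]
      rw [Complex.exp_eq_exp_ℂ]
      have h := NormedSpace.expSeries_div_hasSum_exp (x * hankelRay θ 1 r ^ (-ρ : ℂ))
      exact HasSum.mul_left _ h
  refine (hsum.mul_left (Complex.exp (θ * Complex.I))).congr_fun fun n => ?_
  rw [integral_const_mul, mul_left_comm, ← rayIntegral]

theorem wright_eq_rayIntegral_im {θ ρ : ℝ} (hθ : θ ∈ Ioo (Real.pi / 2) Real.pi) (hρ : -1 < ρ)
    (β x : ℝ) : wright ρ β x = Real.pi⁻¹ * (rayIntegral θ 1 (wrightKernel ρ β x)).im := by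
  have hsum := (Complex.hasSum_im (hasSum_integral_hankelKernel (cos_neg_of_mem_Ioo hθ)
    (sin_pos_of_mem_Ioo hθ) hρ β x)).mul_left Real.pi⁻¹
  rw [← hsum.tsum_eq]
  refine tsum_congr fun n => ?_
  rw [Complex.im_ofReal_mul, rayIntegral_hankelKernel_im_eq_inv_Gamma hθ, mul_left_comm,
    inv_mul_cancel_left₀ Real.pi_ne_zero, ← div_div, div_eq_mul_inv]

/-! ### The Mellin transform -/

lemma norm_mul_sin_sub_arg (u : ℂ) (θ : ℝ) :
    ‖u‖ * Real.sin (θ - u.arg) = Real.sin θ * u.re - Real.cos θ * u.im := by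
  rw [Real.sin_sub, mul_sub, mul_left_comm, mul_left_comm ‖u‖, Complex.norm_mul_cos_arg,
    Complex.norm_mul_sin_arg]

lemma abs_arg_hankelRay_le {θ a r : ℝ} (hθ : θ ∈ Ioo 0 Real.pi) (ha : 0 ≤ a) (hr : 0 ≤ r) :
    |(hankelRay θ a r).arg| ≤ θ := by
  have hsin := Real.sin_pos_of_mem_Ioo hθ
  rw [abs_of_nonneg (Complex.arg_nonneg_iff.2 (by rw [hankelRay_im]; positivity))]
  refine not_lt.1 fun hlt => ?_
  have hne : hankelRay θ a r ≠ 0 := fun h => by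
    rw [h, Complex.arg_zero] at hlt
    exact hlt.not_gt hθ.1
  have hneg := Real.sin_neg_of_neg_of_neg_pi_lt (sub_neg.2 hlt)
    (by linarith [hθ.1, Complex.arg_le_pi (hankelRay θ a r)])
  have hnonneg : 0 ≤ ‖hankelRay θ a r‖ * Real.sin (θ - (hankelRay θ a r).arg) := by
    rw [norm_mul_sin_sub_arg, hankelRay_re, hankelRay_im]
    linarith [mul_nonneg hsin.le ha]
  exact hnonneg.not_gt (mul_neg_of_pos_of_neg (norm_pos_iff.2 hne) hneg)

lemma abs_arg_hankelRay_mul_lt {θ a r α b : ℝ} (hθ : θ ∈ Ioo 0 Real.pi) (ha : 0 ≤ a) (hr : 0 ≤ r)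
    (hαθ : |α| * θ < b) : |(hankelRay θ a r).arg * α| < b := by
  rw [abs_mul, mul_comm]
  exact (mul_le_mul_of_nonneg_left (abs_arg_hankelRay_le hθ ha hr) (abs_nonneg α)).trans_lt hαθ

lemma norm_rpow_mul_cos_le_re_cpow {u : ℂ} {α θ : ℝ} (harg : |u.arg| ≤ θ)
    (hαθ : |α| * θ ≤ Real.pi) : ‖u‖ ^ α * Real.cos (|α| * θ) ≤ (u ^ (α : ℂ)).re := by
  rw [Complex.cpow_ofReal_re, ← Real.cos_abs (u.arg * α), abs_mul, mul_comm |u.arg|]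
  gcongr
  exact Real.cos_le_cos_of_nonneg_of_le_pi (by positivity) hαθ (by gcongr)

lemma re_cpow_pos {u : ℂ} {α : ℝ} (hu : u ≠ 0) (harg : |u.arg * α| < Real.pi / 2) :
    0 < (u ^ (α : ℂ)).re := by
  rw [Complex.cpow_ofReal_re]
  exact mul_pos (by positivity) (Real.cos_pos_of_mem_Ioo (abs_lt.1 harg))

lemma exists_mem_Ioo_abs_mul_lt {α : ℝ} (hα : α ∈ Ioo (-1) 1) :
    ∃ θ ∈ Ioo (Real.pi / 2) Real.pi, |α| * θ < Real.pi / 2 := by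
  have hα' : |α| < 1 := abs_lt.2 hα
  have hα0 := abs_nonneg α
  have hpi := Real.pi_pos
  refine ⟨2 * Real.pi / (3 + |α|), ⟨?_, ?_⟩, ?_⟩
  · rw [div_lt_div_iff₀ two_pos (by positivity)]
    nlinarith
  · rw [div_lt_iff₀ (by positivity)]
    nlinarith
  · rw [mul_div_assoc', div_lt_div_iff₀ (by positivity) two_pos]
    nlinarith

section WrightMellin

variable {α β s θ : ℝ} {u : ℂ}

lemma wrightKernel_neg_neg (x : ℝ) :
    wrightKernel (-α) β (-x) u = hankelKernel β u * Complex.exp (-(u ^ (α : ℂ) * x)) := by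
  rw [wrightKernel, Complex.ofReal_neg, Complex.ofReal_neg, neg_neg, neg_mul, mul_comm (x : ℂ)]

lemma norm_rpow_mul_wrightKernel {x : ℝ} (hx : 0 ≤ x) :
    ‖((x ^ s : ℝ) : ℂ) * wrightKernel (-α) β (-x) u‖ =
      ‖hankelKernel β u‖ * (x ^ s * Real.exp (-(u ^ (α : ℂ)).re * x)) := by
  rw [wrightKernel_neg_neg, norm_mul, norm_mul, Complex.norm_exp, Complex.neg_re,
    Complex.re_mul_ofReal, Complex.norm_of_nonneg (Real.rpow_nonneg hx _), neg_mul, mul_left_comm]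

lemma integral_rpow_mul_wrightKernel (hs : -1 < s) (hu : u ≠ 0)
    (harg : |u.arg * α| < Real.pi / 2) :
    ∫ x in Ioi (0 : ℝ), ((x ^ s : ℝ) : ℂ) * wrightKernel (-α) β (-x) u =
      Real.Gamma (1 + s) * hankelKernel (α + β + α * s) u := by
  obtain ⟨hlt, hgt⟩ := abs_lt.1 harg
  have hΓ := integral_rpow_mul_cexp_neg_mul_Ioi (by linarith : 0 < 1 + s) (re_cpow_pos hu harg)
  rw [add_sub_cancel_left, ← Complex.cpow_mul] at hΓ
  · simp only [wrightKernel_neg_neg, mul_left_comm _ (hankelKernel β u)]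
    rw [integral_const_mul, hΓ, (by ring : α + β + α * s = β + α * (1 + s)), hankelKernel_add hu]
    push_cast
    ring_nf
  · rw [Complex.im_mul_ofReal, Complex.log_im]
    linarith [Real.pi_pos]
  · rw [Complex.im_mul_ofReal, Complex.log_im]
    linarith [Real.pi_pos]

lemma integrableOn_rpow_mul_wrightKernel (hs : -1 < s) (hre : 0 < (u ^ (α : ℂ)).re) :
    IntegrableOn (fun x : ℝ => ((x ^ s : ℝ) : ℂ) * wrightKernel (-α) β (-x) u) (Ioi 0) := by
  refine ((integrableOn_rpow_mul_exp_neg_mul_Ioi (by linarith : 0 < 1 + s) hre).const_mul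
    ‖hankelKernel β u‖).mono' ?_ (ae_restrict_of_forall_mem measurableSet_Ioi fun x hx => ?_)
  · unfold wrightKernel
    exact Measurable.aestronglyMeasurable (by fun_prop)
  · rw [norm_rpow_mul_wrightKernel (le_of_lt hx), add_sub_cancel_left]

lemma integral_norm_rpow_mul_wrightKernel_le (hs : -1 < s) (hu : u ≠ 0) (harg : |u.arg| ≤ θ)
    (hαθ : |α| * θ < Real.pi / 2) :
    ∫ x in Ioi (0 : ℝ), ‖((x ^ s : ℝ) : ℂ) * wrightKernel (-α) β (-x) u‖ ≤
      Real.Gamma (1 + s) * Real.cos (|α| * θ) ^ (-(1 + s)) *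
        ‖hankelKernel (α + β + α * s) u‖ := by
  have hs' : 0 < 1 + s := by linarith
  have hθ : 0 ≤ |α| * θ := mul_nonneg (abs_nonneg α) ((abs_nonneg _).trans harg)
  have hcos : 0 < Real.cos (|α| * θ) := Real.cos_pos_of_mem_Ioo ⟨by linarith [Real.pi_pos], hαθ⟩
  have hnorm : 0 < ‖u‖ ^ α * Real.cos (|α| * θ) := by positivity
  have hle := norm_rpow_mul_cos_le_re_cpow harg (hαθ.le.trans (half_le_self Real.pi_pos.le))
  have hre := hnorm.trans_le hle
  have hkernel : ∀ x ∈ Ioi (0 : ℝ), ‖((x ^ s : ℝ) : ℂ) * wrightKernel (-α) β (-x) u‖ =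
      ‖hankelKernel β u‖ * (x ^ (1 + s - 1) * Real.exp (-((u ^ (α : ℂ)).re * x))) := by
    intro x hx
    rw [norm_rpow_mul_wrightKernel (le_of_lt hx), add_sub_cancel_left, neg_mul]
  calc ∫ x in Ioi (0 : ℝ), ‖((x ^ s : ℝ) : ℂ) * wrightKernel (-α) β (-x) u‖
      = Real.Gamma (1 + s) * ((u ^ (α : ℂ)).re ^ (-(1 + s)) * ‖hankelKernel β u‖) := by
        rw [setIntegral_congr_fun measurableSet_Ioi hkernel, integral_const_mul,
          Real.integral_rpow_mul_exp_neg_mul_Ioi hs' hre, one_div, Real.inv_rpow hre.le,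
          ← Real.rpow_neg hre.le]
        ring
    _ ≤ Real.Gamma (1 + s) *
          ((‖u‖ ^ α * Real.cos (|α| * θ)) ^ (-(1 + s)) * ‖hankelKernel β u‖) := by
        have := Real.Gamma_pos_of_pos hs'
        have := Real.rpow_le_rpow_of_nonpos hnorm hle (by linarith : -(1 + s) ≤ 0)
        gcongr
    _ = Real.Gamma (1 + s) * Real.cos (|α| * θ) ^ (-(1 + s)) *
          ‖hankelKernel (α + β + α * s) u‖ := by
        rw [(by ring : α + β + α * s = β + α * (1 + s)), hankelKernel_add hu, norm_mul,
          ← Complex.ofReal_neg, Complex.norm_cpow_real, Real.mul_rpow (by positivity) hcos.le,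
          ← Real.rpow_mul (norm_nonneg u), mul_neg]
        ring

lemma integrable_prod_rpow_mul_wrightKernel (hs : -1 < s)
    (hθ : θ ∈ Ioo (Real.pi / 2) Real.pi) (hαθ : |α| * θ < Real.pi / 2) :
    Integrable (fun p : ℝ × ℝ => ((p.1 ^ s : ℝ) : ℂ) * wrightKernel (-α) β (-p.1)
      (hankelRay θ 1 p.2)) ((volume.restrict (Ioi 0)).prod (volume.restrict (Ioi 0))) := by
  have hθ0 := Ioo_subset_Ioo_left Real.pi_div_two_pos.le hθ
  have hray : ∀ r ∈ Ioi (0 : ℝ), hankelRay θ 1 r ≠ 0 := fun r hr =>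
    hankelRay_ne_zero (sin_pos_of_mem_Ioo hθ) (Or.inl one_pos) (le_of_lt hr)
  have hmeas : Measurable fun p : ℝ × ℝ =>
      ((p.1 ^ s : ℝ) : ℂ) * wrightKernel (-α) β (-p.1) (hankelRay θ 1 p.2) := by
    have := measurable_hankelKernel (z := β)
    have : Measurable (hankelRay θ 1) := (continuous_hankelRay.comp (.prodMk_left 1)).measurable
    unfold wrightKernel
    fun_prop
  refine (integrable_prod_iff' hmeas.aestronglyMeasurable).2 ⟨?_, ?_⟩
  · refine ae_restrict_of_forall_mem measurableSet_Ioi fun r hr => ?_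
    dsimp only
    exact integrableOn_rpow_mul_wrightKernel hs (re_cpow_pos (hray r hr)
      (abs_arg_hankelRay_mul_lt hθ0 zero_le_one (le_of_lt hr) hαθ))
  · refine ((integrableOn_hankelKernel (cos_neg_of_mem_Ioo hθ) (sin_pos_of_mem_Ioo hθ) one_pos
      (α + β + α * s)).norm.const_mul (Real.Gamma (1 + s) * Real.cos (|α| * θ) ^ (-(1 + s)))).mono'
      hmeas.stronglyMeasurable.norm.integral_prod_left'.aestronglyMeasurable ?_
    refine ae_restrict_of_forall_mem measurableSet_Ioi fun r hr => ?_
    dsimp only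
    rw [Real.norm_of_nonneg (integral_nonneg fun _ => norm_nonneg _)]
    exact integral_norm_rpow_mul_wrightKernel_le hs (hray r hr)
      (abs_arg_hankelRay_le hθ0 zero_le_one (le_of_lt hr)) hαθ

lemma integrableOn_rpow_mul_rayIntegral_wrightKernel (hs : -1 < s)
    (hθ : θ ∈ Ioo (Real.pi / 2) Real.pi) (hαθ : |α| * θ < Real.pi / 2) :
    IntegrableOn (fun x : ℝ => ((x ^ s : ℝ) : ℂ) * rayIntegral θ 1 (wrightKernel (-α) β (-x)))
      (Ioi 0) := by
  simp only [const_mul_rayIntegral]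
  exact (integrable_prod_rpow_mul_wrightKernel hs hθ hαθ).integral_prod_left.const_mul _

lemma integral_rpow_mul_rayIntegral_wrightKernel (hs : -1 < s)
    (hθ : θ ∈ Ioo (Real.pi / 2) Real.pi) (hαθ : |α| * θ < Real.pi / 2) :
    ∫ x in Ioi (0 : ℝ), ((x ^ s : ℝ) : ℂ) * rayIntegral θ 1 (wrightKernel (-α) β (-x)) =
      Real.Gamma (1 + s) * rayIntegral θ 1 (hankelKernel (α + β + α * s)) := by
  simp_rw [const_mul_rayIntegral, rayIntegral]
  rw [integral_const_mul, integral_integral_swap (integrable_prod_rpow_mul_wrightKernel hs hθ hαθ)]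
  congr 1
  refine setIntegral_congr_fun measurableSet_Ioi fun r hr => integral_rpow_mul_wrightKernel hs ?_ ?_
  · exact hankelRay_ne_zero (sin_pos_of_mem_Ioo hθ) (Or.inl one_pos) (le_of_lt hr)
  · exact abs_arg_hankelRay_mul_lt (Ioo_subset_Ioo_left Real.pi_div_two_pos.le hθ) zero_le_one
      (le_of_lt hr) hαθ

end WrightMellin

theorem wright_mellin_general (α β s : ℝ) (hα : α ∈ Set.Ioo (-1 : ℝ) 1) (hs : -1 < s) :
    IntegrableOn (fun x => x ^ s * wright (-α) β (-x)) (Set.Ioi 0) ∧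
    ∫ x in Set.Ioi 0, x ^ s * wright (-α) β (-x) =
      Real.Gamma (1 + s) / Real.Gamma (α + β + α * s) := by
  obtain ⟨θ, hθ, hαθ⟩ := exists_mem_Ioo_abs_mul_lt hα
  have hwright (x : ℝ) : x ^ s * wright (-α) β (-x) = Real.pi⁻¹ *
      (((x ^ s : ℝ) : ℂ) * rayIntegral θ 1 (wrightKernel (-α) β (-x))).im := by
    rw [wright_eq_rayIntegral_im hθ (neg_lt_neg hα.2), Complex.im_ofReal_mul, mul_left_comm]
  have hint := integrableOn_rpow_mul_rayIntegral_wrightKernel (β := β) hs hθ hαθ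
  simp only [hwright]
  refine ⟨hint.im.const_mul _, ?_⟩
  calc
    _ = Real.pi⁻¹ * (∫ x in Ioi (0 : ℝ),
          ((x ^ s : ℝ) : ℂ) * rayIntegral θ 1 (wrightKernel (-α) β (-x))).im := by
      rw [integral_const_mul]
      exact congrArg _ (integral_im hint)
    _ = Real.pi⁻¹ * (Real.Gamma (1 + s) * (Real.pi * (Real.Gamma (α + β + α * s))⁻¹)) := by
      rw [integral_rpow_mul_rayIntegral_wrightKernel hs hθ hαθ, Complex.im_ofReal_mul,
        rayIntegral_hankelKernel_im_eq_inv_Gamma hθ]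
    _ = Real.Gamma (1 + s) / Real.Gamma (α + β + α * s) := by
      rw [mul_left_comm, inv_mul_cancel_left₀ Real.pi_ne_zero, div_eq_mul_inv]

/-- Mellin transform identity: for `α ∈ (0,1)`, `β ≥ 0` and `s > -1`,
`∫_0^∞ x^s φ(-α, β, -x) dx = Γ(1+s)/Γ(α+β+αs)`, the integral being absolutely
convergent. -/
theorem wright_mellin (α β s : ℝ) (hα : α ∈ Set.Ioo (0 : ℝ) 1) (hβ : 0 ≤ β)
    (hs : -1 < s) :
    IntegrableOn (fun x => x ^ s * wright (-α) β (-x)) (Set.Ioi 0) ∧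
    ∫ x in Set.Ioi 0, x ^ s * wright (-α) β (-x) =
      Real.Gamma (1 + s) / Real.Gamma (α + β + α * s) :=
  wright_mellin_general α β s ⟨by linarith [hα.1], hα.2⟩ hs
end

section
/- Let α ∈ (0,1], let E_α(z) = ∑_{n=0}^∞ z^n / Γ(1 + αn) be the classical Mittag-Leffler function, and let L : (0,∞) → ℝ be a function satisfying E_α(L(x)) = x for all x ∈ (0,1] and L(E_α(z)) = z for all z ≤ 0 (so L is the inverse on (0,1] of the restriction of E_α to (-∞,0]). Then the function x ↦ − x · L(x) is concave on (0,1] if and only if α ≤ α_* or α = 1, where α_* ∈ (0,1) is the unique solution in (0,1) of 1/Γ(1-2a)² = 1/(Γ(1-a)·Γ(1-3a)). -/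
/-- The two-parameter Mittag-Leffler function `E_{α,β}(z) = ∑ z^n / Γ(β + αn)`;
the classical Mittag-Leffler function is `E_α = E_{α,1}`. -/
noncomputable def mittagLeffler (α β z : ℝ) : ℝ :=
  ∑' n : ℕ, z ^ n / Real.Gamma (β + α * n)

/-!
With `x = 1 / t` and inversion of a monotone function, `-x L(x)` is concave on `(0, 1]` if and only
if `t ↦ 1 / E_α(-t)` is convex on `[0, ∞)`.

Let `q_n` be the law of the number of occupied tables after `n` steps of the Chinese restaurant
process with parameters `(α, 0)`, and `Q_n(y) = ∑ q_n(j) / (1 + y) ^ (j + 1)`. Then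
`Q_n(t / n ^ α) → E_α(-t)`. If `q_n` is log-concave, then Chebyshev's sum inequality makes `1 / Q_n`
convex, and convexity passes to the limit.

For `α ≤ 1/2` log-concavity follows by induction on `n`. For `α > 1/2` the numbers `q_n(j)` are
integrals of `(1 + u) ^ j`, with `u = σ ^ α`, against an oscillating weight, and variation
diminishing reduces log-concavity to its first instance `q_n(0) q_n(2) < q_n(1)²`. After rescaling,
`q_n(1)² - q_n(0) q_n(2)` tends to `1 / Γ(1 - 2α)² - 1 / (Γ(1 - α) Γ(1 - 3α))`, which is positive
between `1/2` and `α_*`. The case `α = α_*` follows by continuity in `α`.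

Beyond `α_*` this difference is negative, and then the expansion
`E_α(-t) ~ ∑ (-1) ^ (m + 1) / (Γ(1 - mα) t ^ m)` at infinity contradicts the convexity
of `1 / E_α(-t)`.
-/

open Filter Finset MeasureTheory Topology
open scoped fwdDiff Real

/-! ### Pochhammer ratios and table laws -/

/-- The ratio `(1 + z)ₙ / n!` of a rising factorial to a factorial; it grows like
`n ^ z / Γ(1 + z)`. -/
noncomputable def pochhammerRatio (z : ℝ) (n : ℕ) : ℝ :=
  ∏ k ∈ range n, (1 + z / (k + 1))

lemma pochhammerRatio_succ (z : ℝ) (n : ℕ) :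
    pochhammerRatio z (n + 1) = pochhammerRatio z n * (1 + z / (n + 1)) :=
  prod_range_succ _ _

lemma pochhammerRatio_neg_natCast_of_le {m n : ℕ} (hm : m ≠ 0) (hmn : m ≤ n) :
    pochhammerRatio (-m) n = 0 := by
  obtain ⟨k, rfl⟩ := Nat.exists_eq_succ_of_ne_zero hm
  refine prod_eq_zero (mem_range.2 hmn) ?_
  push_cast
  field_simp
  ring

lemma pochhammerRatio_mul_rpow_eq_inv_GammaSeq {z : ℝ} (hz : z ≠ 0) {n : ℕ} (hn : 0 < n) :
    pochhammerRatio z n * (n : ℝ) ^ (-z) = (z * Real.GammaSeq z n)⁻¹ := by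
  have prod_eq (n : ℕ) :
      ∏ k ∈ range n, (z + (k + 1 : ℕ)) = n.factorial * pochhammerRatio z n := by
    rw [pochhammerRatio, ← prod_range_add_one_eq_factorial, Nat.cast_prod, ← prod_mul_distrib]
    refine prod_congr rfl fun k _ => ?_
    push_cast
    field_simp
    ring
  have hfac : (n.factorial : ℝ) ≠ 0 := by positivity
  have hpow : (n : ℝ) ^ z ≠ 0 := (Real.rpow_pos_of_pos (by exact_mod_cast hn) z).ne'
  rw [Real.GammaSeq, prod_range_succ', prod_eq, Real.rpow_neg (by positivity)]
  simp only [Nat.cast_zero, add_zero]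
  field_simp

lemma tendsto_pochhammerRatio_mul_rpow (z : ℝ) :
    Tendsto (fun n : ℕ => pochhammerRatio z n * (n : ℝ) ^ (-z)) atTop
      (𝓝 (Real.Gamma (1 + z))⁻¹) := by
  rcases eq_or_ne z 0 with rfl | hz
  · simp [pochhammerRatio]
  rw [add_comm, Real.Gamma_add_one hz]
  by_cases hpole : Real.Gamma z = 0
  · obtain ⟨m, rfl⟩ := (Real.Gamma_eq_zero_iff z).1 hpole
    have hm : m ≠ 0 := by rintro rfl; simp at hz
    rw [hpole, mul_zero, inv_zero]
    refine tendsto_const_nhds.congr' ?_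
    filter_upwards [eventually_ge_atTop m] with n hn
    rw [pochhammerRatio_neg_natCast_of_le hm hn, zero_mul]
  · refine (((Real.GammaSeq_tendsto_Gamma z).const_mul z).inv₀ (mul_ne_zero hz hpole)).congr' ?_
    filter_upwards [eventually_gt_atTop 0] with n hn
    exact (pochhammerRatio_mul_rpow_eq_inv_GammaSeq hz hn).symm

/-- The law of the number of occupied tables in the Chinese restaurant process with parameters
`(a, 0)`: `tableLaw a n j` is the probability that `n + 1` customers occupy `j + 1` tables. -/
noncomputable def tableLaw (a : ℝ) : ℕ → ℕ → ℝ
  | 0, j => if j = 0 then 1 else 0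
  | n + 1, j =>
    (1 - a * (j + 1) / (n + 1)) * tableLaw a n j + a * j / (n + 1) * tableLaw a n (j - 1)

lemma tableLaw_succ (a : ℝ) (n j : ℕ) :
    tableLaw a (n + 1) j =
      (1 - a * (j + 1) / (n + 1)) * tableLaw a n j + a * j / (n + 1) * tableLaw a n (j - 1) :=
  rfl

lemma tableLaw_eq_zero_of_lt (a : ℝ) {n j : ℕ} (hj : n < j) : tableLaw a n j = 0 := by
  induction n generalizing j with
  | zero => exact if_neg hj.ne'
  | succ n ih =>
    rw [tableLaw_succ, ih (by lia), ih (by lia)]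
    ring

lemma tableLaw_nonneg {a : ℝ} (ha₀ : 0 ≤ a) (ha₁ : a ≤ 1) (n j : ℕ) : 0 ≤ tableLaw a n j := by
  induction n generalizing j with
  | zero => rw [tableLaw]; positivity
  | succ n ih =>
    rw [tableLaw_succ]
    rcases le_or_gt j n with hj | hj
    · have hstay : 0 ≤ 1 - a * (j + 1) / (n + 1) := by
        have : (j : ℝ) ≤ n := by exact_mod_cast hj
        rw [sub_nonneg, div_le_one (by positivity)]
        nlinarith
      exact add_nonneg (mul_nonneg hstay (ih j)) (mul_nonneg (by positivity) (ih _))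
    · rw [tableLaw_eq_zero_of_lt a hj, mul_zero, zero_add]
      exact mul_nonneg (by positivity) (ih _)

lemma tableLaw_pos {a : ℝ} (ha₀ : 0 < a) (ha₁ : a < 1) {n j : ℕ} (hj : j ≤ n) :
    0 < tableLaw a n j := by
  induction n generalizing j with
  | zero => simp [tableLaw, Nat.le_zero.1 hj]
  | succ n ih =>
    rw [tableLaw_succ]
    rcases hj.lt_or_eq with hj | rfl
    · have hstay : 0 < 1 - a * (j + 1) / (n + 1) := by
        have : (j : ℝ) ≤ n := by exact_mod_cast Nat.lt_succ_iff.1 hj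
        rw [sub_pos, div_lt_one (by positivity)]
        nlinarith
      exact add_pos_of_pos_of_nonneg (mul_pos hstay (ih (Nat.lt_succ_iff.1 hj)))
        (mul_nonneg (by positivity) (tableLaw_nonneg ha₀.le ha₁.le n _))
    · rw [tableLaw_eq_zero_of_lt a n.lt_succ_self, mul_zero, zero_add]
      exact mul_pos (by positivity) (ih le_rfl)

lemma sum_tableLaw_succ_mul (a : ℝ) (n : ℕ) (g : ℕ → ℝ) :
    ∑ j ∈ range (n + 2), tableLaw a (n + 1) j * g j =
      ∑ j ∈ range (n + 1), tableLaw a n j *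
        ((1 - a * (j + 1) / (n + 1)) * g j + a * (j + 1) / (n + 1) * g (j + 1)) := by
  simp_rw [tableLaw_succ, add_mul _ _ (g _), mul_add (tableLaw a n _), sum_add_distrib]
  congr 1
  · rw [sum_range_succ, tableLaw_eq_zero_of_lt a n.lt_succ_self, mul_zero, zero_mul, add_zero]
    exact sum_congr rfl fun j _ => by ring
  · rw [sum_range_succ', Nat.cast_zero, mul_zero, zero_div, zero_mul, zero_mul, add_zero]
    refine sum_congr rfl fun j _ => ?_
    rw [Nat.add_sub_cancel]
    push_cast
    ring

lemma sum_tableLaw_mul_choose (a : ℝ) (m n : ℕ) :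
    ∑ j ∈ range (n + 1), tableLaw a n j * ((j + m).choose m : ℝ) = pochhammerRatio (a * m) n := by
  induction n with
  | zero => simp [tableLaw, pochhammerRatio]
  | succ n ih =>
    rw [sum_tableLaw_succ_mul, pochhammerRatio_succ, ← ih, sum_mul]
    refine sum_congr rfl fun j _ => ?_
    have hchoose : ((j : ℝ) + 1) * ((j + 1 + m).choose m : ℝ) =
        (j + 1 + m) * ((j + m).choose m : ℝ) := by
      have h := Nat.add_one_mul_choose_eq (j + m) j
      rw [Nat.choose_symm_add, show j + m + 1 = j + 1 + m by ring, Nat.choose_symm_add] at h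
      exact_mod_cast (mul_comm _ _).trans h.symm
    field_simp
    linear_combination (tableLaw a n j * a) * hchoose

lemma sum_tableLaw (a : ℝ) (n : ℕ) : ∑ j ∈ range (n + 1), tableLaw a n j = 1 := by
  simpa [pochhammerRatio] using sum_tableLaw_mul_choose a 0 n

lemma fwdDiff_iter_tableLaw_succ (a : ℝ) (m n j : ℕ) :
    Δ_[1] ^[m] (tableLaw a (n + 1)) j =
      (1 - a * (j + 1 + m) / (n + 1)) * Δ_[1] ^[m] (tableLaw a n) j +
        a * j / (n + 1) * Δ_[1] ^[m] (tableLaw a n) (j - 1) := by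
  induction m generalizing j with
  | zero => simpa using tableLaw_succ a n j
  | succ m ih =>
    simp only [Function.iterate_succ_apply', fwdDiff, ih, Nat.add_sub_cancel]
    cases j with
    | zero => push_cast; ring
    | succ j => simp only [Nat.add_sub_cancel]; push_cast; ring

lemma fwdDiff_iter_eq_zero_of_support {q : ℕ → ℝ} {n : ℕ} (hq : ∀ j, n < j → q j = 0)
    (m : ℕ) {j : ℕ} (hj : n < j) : Δ_[1] ^[m] q j = 0 := by
  induction m generalizing j with
  | zero => exact hq j hj
  | succ m ih => simp [Function.iterate_succ_apply', fwdDiff, ih hj, ih (hj.trans j.lt_succ_self)]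

lemma fwdDiff_iter_tableLaw_zero (a : ℝ) (m n : ℕ) :
    Δ_[1] ^[m] (tableLaw a n) 0 = (-1) ^ m * pochhammerRatio (-(a * (m + 1))) n := by
  induction n with
  | zero =>
    simp only [pochhammerRatio, range_zero, prod_empty, mul_one]
    induction m with
    | zero => simp [tableLaw]
    | succ m ih =>
      rw [Function.iterate_succ_apply', fwdDiff, ih,
        fwdDiff_iter_eq_zero_of_support (fun j => tableLaw_eq_zero_of_lt a) m (Nat.succ_pos 0)]
      ring
  | succ n ih =>
    rw [fwdDiff_iter_tableLaw_succ, ih, pochhammerRatio_succ]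
    push_cast
    ring

lemma tableLaw_eq_sum_pochhammerRatio (a : ℝ) (n j : ℕ) :
    tableLaw a n j =
      ∑ i ∈ range (j + 1), (j.choose i : ℝ) * (-1) ^ i * pochhammerRatio (-(a * (i + 1))) n := by
  simpa [fwdDiff_iter_tableLaw_zero, mul_assoc] using
    shift_eq_sum_fwdDiff_iter 1 (tableLaw a n) j 0

/-! ### The Mittag-Leffler function as a limit of geometric transforms -/

lemma rpow_mul_exp_neg_le_Gamma {x K : ℝ} (hx : 0 ≤ x) (hK : 0 ≤ K) :
    K ^ x * Real.exp (-K) ≤ Real.Gamma (1 + x) := by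
  have hconv := Real.GammaIntegral_convergent (show 0 < 1 + x by linarith)
  have hsub : Set.Ioi K ⊆ Set.Ioi 0 := Set.Ioi_subset_Ioi hK
  calc K ^ x * Real.exp (-K)
      = ∫ s in Set.Ioi K, K ^ x * Real.exp (-s) := by
        rw [integral_const_mul, integral_exp_neg_Ioi]
    _ ≤ ∫ s in Set.Ioi K, Real.exp (-s) * s ^ (1 + x - 1) := by
        refine setIntegral_mono_on ((integrableOn_exp_neg_Ioi K).const_mul _)
          (hconv.mono_set hsub) measurableSet_Ioi fun s (hs : K < s) => ?_
        rw [mul_comm, add_sub_cancel_left]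
        gcongr
    _ ≤ ∫ s in Set.Ioi 0, Real.exp (-s) * s ^ (1 + x - 1) := by
        refine setIntegral_mono_set hconv ?_ hsub.eventuallyLE
        filter_upwards [ae_restrict_mem measurableSet_Ioi] with s (hs : 0 < s)
        positivity
    _ = Real.Gamma (1 + x) := (Real.Gamma_eq_integral (by linarith)).symm

lemma exists_forall_abs_pow_div_Gamma_le {a₀ : ℝ} (ha₀ : 0 < a₀) (t : ℝ) :
    ∃ C, ∀ a, a₀ ≤ a → ∀ n : ℕ, |t ^ n / Real.Gamma (1 + a * n)| ≤ C * (1 / 2) ^ n := by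
  obtain ⟨K, hK₁, hKt⟩ : ∃ K : ℝ, 1 ≤ K ∧ 2 * |t| ≤ K ^ a₀ := by
    refine ⟨(2 * |t| + 1) ^ a₀⁻¹, Real.one_le_rpow (by simp) (by positivity), ?_⟩
    rw [Real.rpow_inv_rpow (by positivity) ha₀.ne']
    linarith
  have hK₀ : 0 ≤ K := zero_le_one.trans hK₁
  refine ⟨Real.exp K, fun a ha n => ?_⟩
  have ha' : 0 < a := ha₀.trans_le ha
  have hGamma : 0 < Real.Gamma (1 + a * n) := Real.Gamma_pos_of_pos (by positivity)
  rw [abs_div, abs_pow, abs_of_pos hGamma, div_le_iff₀ hGamma]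
  have hpow : (2 * |t|) ^ n ≤ K ^ (a * n) := by
    calc (2 * |t|) ^ n ≤ (K ^ a₀) ^ n := by gcongr
      _ = K ^ (a₀ * n) := by rw [Real.rpow_mul_natCast hK₀]
      _ ≤ K ^ (a * n) := by gcongr
  calc |t| ^ n = Real.exp K * (1 / 2) ^ n * ((2 * |t|) ^ n * Real.exp (-K)) := by
        rw [Real.exp_neg, mul_pow, one_div, inv_pow]
        field_simp
    _ ≤ Real.exp K * (1 / 2) ^ n * (K ^ (a * n) * Real.exp (-K)) := by gcongr
    _ ≤ Real.exp K * (1 / 2) ^ n * Real.Gamma (1 + a * n) := by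
        gcongr
        exact rpow_mul_exp_neg_le_Gamma (by positivity) hK₀

lemma summable_const_mul_half_pow (C : ℝ) : Summable fun n : ℕ => C * (1 / 2 : ℝ) ^ n :=
  summable_geometric_two.mul_left C

lemma summable_mittagLeffler {a : ℝ} (ha : 0 < a) (z : ℝ) :
    Summable fun n : ℕ => z ^ n / Real.Gamma (1 + a * n) := by
  obtain ⟨C, hC⟩ := exists_forall_abs_pow_div_Gamma_le ha z
  exact (summable_const_mul_half_pow C).of_norm_bounded (hC a le_rfl)

lemma continuousAt_mittagLeffler_param {a : ℝ} (ha : 0 < a) (z : ℝ) :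
    ContinuousAt (fun a => mittagLeffler a 1 z) a := by
  obtain ⟨C, hC⟩ := exists_forall_abs_pow_div_Gamma_le (half_pos ha) z
  refine tendsto_tsum_of_dominated_convergence (summable_const_mul_half_pow C) (fun n => ?_) ?_
  · have hpos : 0 < 1 + a * n := by positivity
    have hcont : ContinuousAt Real.Gamma (1 + a * n) :=
      (Real.differentiableAt_Gamma fun m hm => by
        have : (0 : ℝ) ≤ m := by positivity
        linarith).continuousAt
    exact tendsto_const_nhds.div
      (ContinuousAt.comp (f := fun a : ℝ => 1 + a * n) hcont (by fun_prop))
      (Real.Gamma_pos_of_pos hpos).ne'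
  · filter_upwards [Ioi_mem_nhds (half_lt_self ha)] with b hb
    exact hC b hb.le

lemma mittagLeffler_zero (a : ℝ) : mittagLeffler a 1 0 = 1 := by
  rw [mittagLeffler, tsum_eq_single 0 fun n hn => by rw [zero_pow hn, zero_div]]
  simp

lemma one_lt_mittagLeffler {a z : ℝ} (ha : 0 < a) (hz : 0 < z) : 1 < mittagLeffler a 1 z := by
  have hterm (n : ℕ) : 0 < z ^ n / Real.Gamma (1 + a * n) :=
    div_pos (pow_pos hz n) (Real.Gamma_pos_of_pos (by positivity))
  have h := (summable_mittagLeffler ha z).sum_le_tsum (range 2) fun n _ => (hterm n).le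
  rw [sum_range_succ, sum_range_one, Nat.cast_zero, mul_zero, add_zero, Real.Gamma_one, pow_zero,
    div_one] at h
  exact (lt_add_of_pos_right 1 (hterm 1)).trans_le h

lemma mittagLeffler_one (z : ℝ) : mittagLeffler 1 1 z = Real.exp z := by
  rw [Real.exp_eq_exp_ℝ, NormedSpace.exp_eq_tsum_div, mittagLeffler]
  refine tsum_congr fun n => ?_
  rw [one_mul, add_comm, Real.Gamma_nat_eq_factorial]

/-- The generating function `∑ q j / (1 + y) ^ (j + 1)`, summed over `j ≤ n`. -/
noncomputable def geomTransform (q : ℕ → ℝ) (n : ℕ) (y : ℝ) : ℝ :=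
  ∑ j ∈ range (n + 1), q j * (1 + y)⁻¹ ^ (j + 1)

lemma natCast_add_choose_succ (j m : ℕ) : ((j + 1 + (m + 1)).choose (m + 1) : ℝ) =
    (j + (m + 1)).choose (m + 1) + (j + 1 + m).choose m := by
  rw [← add_assoc, Nat.choose_succ_succ, add_right_comm, add_assoc]
  push_cast
  ring

lemma inv_one_add_pow_succ_sub_sum {y : ℝ} (hy : 1 + y ≠ 0) (j M : ℕ) :
    (1 + y)⁻¹ ^ (j + 1 + 1) - ∑ m ∈ range (M + 1), (-y) ^ m * ((j + 1 + m).choose m : ℝ) =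
      ((1 + y)⁻¹ ^ (j + 1) - ∑ m ∈ range (M + 1), (-y) ^ m * ((j + m).choose m : ℝ)) -
      y * ((1 + y)⁻¹ ^ (j + 1 + 1) - ∑ m ∈ range M, (-y) ^ m * ((j + 1 + m).choose m : ℝ)) := by
  simp only [sum_range_succ', natCast_add_choose_succ, mul_add, sum_add_distrib, pow_succ' (-y),
    mul_sub, mul_sum]
  simp only [neg_mul, sum_neg_distrib, mul_assoc]
  rw [pow_succ (1 + y)⁻¹ (j + 1)]
  field_simp
  simp only [add_zero, Nat.choose_zero_right, Nat.cast_one]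
  ring

lemma abs_inv_one_add_pow_sub_sum_le {y : ℝ} (hy : 0 ≤ y) (j M : ℕ) :
    |(1 + y)⁻¹ ^ (j + 1) - ∑ m ∈ range M, (-y) ^ m * ((j + m).choose m : ℝ)| ≤
      y ^ M * ((j + M).choose M : ℝ) := by
  induction M generalizing j with
  | zero =>
    simpa [abs_of_nonneg (show 0 ≤ 1 + y by positivity)] using
      inv_le_one_of_one_le₀ (one_le_pow₀ (n := j + 1) (show 1 ≤ 1 + y by linarith))
  | succ M ihM =>
    induction j with
    | zero =>
      have hrec : (1 + y)⁻¹ ^ (0 + 1) -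
          ∑ m ∈ range (M + 1), (-y) ^ m * ((0 + m).choose m : ℝ) =
            -y * ((1 + y)⁻¹ ^ (0 + 1) - ∑ m ∈ range M, (-y) ^ m * ((0 + m).choose m : ℝ)) := by
        rw [sum_range_succ', mul_sub, mul_sum]
        simp only [zero_add, Nat.choose_self, Nat.cast_one, mul_one, pow_zero, pow_succ']
        field_simp
        ring
      rw [hrec, abs_mul, abs_neg, abs_of_nonneg hy, pow_succ' y, mul_assoc]
      simpa using mul_le_mul_of_nonneg_left (ihM 0) hy
    | succ j ihj =>
      rw [inv_one_add_pow_succ_sub_sum (by positivity), natCast_add_choose_succ, mul_add]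
      refine (abs_sub _ _).trans (add_le_add ihj ?_)
      rw [abs_mul, abs_of_nonneg hy, pow_succ' y, mul_assoc]
      exact mul_le_mul_of_nonneg_left (ihM (j + 1)) hy

lemma abs_geomTransform_sub_sum_le {q : ℕ → ℝ} (hq : ∀ j, 0 ≤ q j) {y : ℝ} (hy : 0 ≤ y)
    (n M : ℕ) :
    |geomTransform q n y -
        ∑ m ∈ range M, (-y) ^ m * ∑ j ∈ range (n + 1), q j * ((j + m).choose m : ℝ)| ≤
      y ^ M * ∑ j ∈ range (n + 1), q j * ((j + M).choose M : ℝ) := by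
  have hsum : geomTransform q n y -
      ∑ m ∈ range M, (-y) ^ m * ∑ j ∈ range (n + 1), q j * ((j + m).choose m : ℝ) =
        ∑ j ∈ range (n + 1), q j *
          ((1 + y)⁻¹ ^ (j + 1) - ∑ m ∈ range M, (-y) ^ m * ((j + m).choose m : ℝ)) := by
    simp only [geomTransform, mul_sub, sum_sub_distrib, mul_sum]
    rw [sum_comm]
    simp only [mul_left_comm]
  rw [hsum, mul_sum]
  refine (abs_sum_le_sum_abs _ _).trans (sum_le_sum fun j _ => ?_)
  rw [abs_mul, abs_of_nonneg (hq j), mul_left_comm]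
  exact mul_le_mul_of_nonneg_left (abs_inv_one_add_pow_sub_sum_le hy j M) (hq j)

lemma tendsto_tsum_of_abs_sub_sum_le {ι : Type*} {l : Filter ι} {x : ι → ℝ} {c : ι → ℕ → ℝ}
    {d : ℕ → ℝ} (hd : Summable d) (hc : ∀ m, Tendsto (c · m) l (𝓝 (d m)))
    (hx : ∀ i M, |x i - ∑ m ∈ range M, c i m| ≤ |c i M|) :
    Tendsto x l (𝓝 (∑' m, d m)) := by
  rw [Metric.tendsto_nhds]
  intro ε hε
  have hsum := (Metric.tendsto_nhds.1 hd.hasSum.tendsto_sum_nat) (ε / 3) (by positivity)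
  have hterm := (Metric.tendsto_nhds.1 hd.tendsto_atTop_zero) (ε / 3) (by positivity)
  obtain ⟨M, hM, hdM⟩ := (hsum.and hterm).exists
  have hcM : ∀ᶠ i in l, |c i M| < ε / 3 :=
    (hc M).abs.eventually_lt_const (by simpa [Real.dist_eq] using hdM)
  have hpartial := (Metric.tendsto_nhds.1 (tendsto_finsetSum (range M) fun m _ => hc m)) (ε / 3)
    (by positivity)
  filter_upwards [hcM, hpartial] with i hi hi'
  have htri := (dist_triangle4 (x i) (∑ m ∈ range M, c i m) (∑ m ∈ range M, d m) (∑' m, d m))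
  have hxi : dist (x i) (∑ m ∈ range M, c i m) < ε / 3 := (hx i M).trans_lt hi
  linarith

lemma tendsto_geomTransform_tableLaw {a t : ℝ} (ha₀ : 0 < a) (ha₁ : a ≤ 1) (ht : 0 ≤ t) :
    Tendsto (fun n : ℕ => geomTransform (tableLaw a n) n (t * (n : ℝ) ^ (-a))) atTop
      (𝓝 (mittagLeffler a 1 (-t))) := by
  refine tendsto_tsum_of_abs_sub_sum_le (summable_mittagLeffler ha₀ (-t))
    (c := fun (n : ℕ) m => (-(t * (n : ℝ) ^ (-a))) ^ m * pochhammerRatio (a * m) n)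
    (fun m => ?_) fun n M => ?_
  · refine ((tendsto_pochhammerRatio_mul_rpow (a * m)).const_mul ((-t) ^ m)).congr fun n => ?_
    rw [← neg_mul t, mul_pow, ← Real.rpow_mul_natCast n.cast_nonneg, neg_mul a]
    ring
  · have h := abs_geomTransform_sub_sum_le (tableLaw_nonneg ha₀.le ha₁ n)
      (y := t * (n : ℝ) ^ (-a)) (by positivity) n M
    simp only [sum_tableLaw_mul_choose] at h
    rw [abs_mul, abs_pow, abs_neg, abs_of_nonneg (by positivity : 0 ≤ t * (n : ℝ) ^ (-a))]
    exact h.trans (mul_le_mul_of_nonneg_left (le_abs_self _) (by positivity))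

lemma antitoneOn_geomTransform {q : ℕ → ℝ} (hq : ∀ j, 0 ≤ q j) (n : ℕ) :
    AntitoneOn (geomTransform q n) (Set.Ici 0) := by
  intro x (hx : 0 ≤ x) y _ hxy
  refine sum_le_sum fun j _ => mul_le_mul_of_nonneg_left ?_ (hq j)
  have hinv : (1 + y)⁻¹ ≤ (1 + x)⁻¹ := inv_anti₀ (by linarith) (by linarith)
  exact pow_le_pow_left₀ (inv_nonneg.2 (by linarith)) hinv _

lemma exp_neg_mul_le_geomTransform {q : ℕ → ℝ} (hq : ∀ j, 0 ≤ q j) {n : ℕ}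
    (hsum : ∑ j ∈ range (n + 1), q j = 1) {y : ℝ} (hy : 0 ≤ y) :
    Real.exp (-(y * ∑ j ∈ range (n + 1), q j * (j + 1))) ≤ geomTransform q n y := by
  calc Real.exp (-(y * ∑ j ∈ range (n + 1), q j * (j + 1)))
      = Real.exp (∑ j ∈ range (n + 1), q j • (-(y * (j + 1)))) := by
        rw [mul_sum, ← sum_neg_distrib]
        simp only [smul_eq_mul, mul_neg, mul_left_comm y]
    _ ≤ ∑ j ∈ range (n + 1), q j • Real.exp (-(y * (j + 1))) :=
        convexOn_exp.map_sum_le (fun j _ => hq j) hsum fun _ _ => Set.mem_univ _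
    _ ≤ geomTransform q n y := by
        refine sum_le_sum fun j _ => mul_le_mul_of_nonneg_left ?_ (hq j)
        rw [Real.exp_neg, inv_pow, mul_comm, ← Nat.cast_succ, Real.exp_nat_mul]
        gcongr
        linarith [Real.add_one_le_exp y]

lemma exp_neg_div_Gamma_le_mittagLeffler {a t : ℝ} (ha₀ : 0 < a) (ha₁ : a ≤ 1) (ht : 0 ≤ t) :
    Real.exp (-(t * (Real.Gamma (1 + a))⁻¹)) ≤ mittagLeffler a 1 (-t) := by
  have hlim := (Real.continuous_exp.tendsto _).comp
    ((tendsto_pochhammerRatio_mul_rpow a).const_mul t).neg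
  refine le_of_tendsto_of_tendsto' hlim (tendsto_geomTransform_tableLaw ha₀ ha₁ ht) fun n => ?_
  have hmean : ∑ j ∈ range (n + 1), tableLaw a n j * (j + 1) = pochhammerRatio a n := by
    simpa using sum_tableLaw_mul_choose a 1 n
  have h := exp_neg_mul_le_geomTransform (tableLaw_nonneg ha₀.le ha₁ n) (sum_tableLaw a n)
    (y := t * (n : ℝ) ^ (-a)) (by positivity)
  rwa [hmean, mul_assoc, mul_comm (_ ^ _)] at h

lemma mittagLeffler_neg_pos {a t : ℝ} (ha₀ : 0 < a) (ha₁ : a ≤ 1) (ht : 0 ≤ t) :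
    0 < mittagLeffler a 1 (-t) :=
  (Real.exp_pos _).trans_le (exp_neg_div_Gamma_le_mittagLeffler ha₀ ha₁ ht)

lemma monotoneOn_mittagLeffler {a : ℝ} (ha₀ : 0 < a) (ha₁ : a ≤ 1) :
    MonotoneOn (mittagLeffler a 1) (Set.Iic 0) := by
  intro x (hx : x ≤ 0) y (hy : y ≤ 0) hxy
  have hlim {z : ℝ} (hz : z ≤ 0) := tendsto_geomTransform_tableLaw ha₀ ha₁ (neg_nonneg.2 hz)
  rw [← neg_neg x, ← neg_neg y]
  refine le_of_tendsto_of_tendsto' (hlim hx) (hlim hy) fun n => ?_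
  have hscale {z : ℝ} (hz : z ≤ 0) : -z * (n : ℝ) ^ (-a) ∈ Set.Ici 0 :=
    mul_nonneg (neg_nonneg.2 hz) (by positivity)
  exact antitoneOn_geomTransform (tableLaw_nonneg ha₀.le ha₁ n) n (hscale hy) (hscale hx)
    (by gcongr)

lemma mittagLeffler_mem_Ioc {a z : ℝ} (ha₀ : 0 < a) (ha₁ : a ≤ 1) (hz : z ≤ 0) :
    mittagLeffler a 1 z ∈ Set.Ioc 0 1 := by
  have hpos := mittagLeffler_neg_pos ha₀ ha₁ (neg_nonneg.2 hz)
  rw [neg_neg] at hpos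
  exact ⟨hpos, (monotoneOn_mittagLeffler ha₀ ha₁ hz Set.self_mem_Iic hz).trans_eq
    (mittagLeffler_zero a)⟩

/-! ### Convexity of reciprocals and inverses -/

lemma convexOn_of_tendsto {E ι : Type*} [AddCommMonoid E] [SMul ℝ E] {s : Set E} {l : Filter ι}
    [l.NeBot] {f : ι → E → ℝ} {g : E → ℝ} (hf : ∀ᶠ i in l, ConvexOn ℝ s (f i))
    (hg : ∀ x ∈ s, Tendsto (f · x) l (𝓝 (g x))) : ConvexOn ℝ s g := by
  obtain ⟨i, hi⟩ := hf.exists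
  refine ⟨hi.1, fun x hx y hy a b ha hb hab => ?_⟩
  refine le_of_tendsto_of_tendsto (hg _ (hi.1 hx hy ha hb hab))
    (((hg x hx).const_smul a).add ((hg y hy).const_smul b)) ?_
  filter_upwards [hf] with i hi using hi.2 hx hy ha hb hab

lemma convexOn_mul_comp_inv {s : Set ℝ} (hs : s ⊆ Set.Ioi 0) {φ : ℝ → ℝ}
    (hφ : ConvexOn ℝ s φ) : ConvexOn ℝ s⁻¹ (fun x => x * φ x⁻¹) := by
  have key {x y a b : ℝ} (hx : x ∈ s⁻¹) (hy : y ∈ s⁻¹) (ha : 0 ≤ a) (hb : 0 ≤ b)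
      (hab : a + b = 1) : (a * x + b * y)⁻¹ ∈ s ∧
        (a * x + b * y) * φ (a * x + b * y)⁻¹ ≤ a * (x * φ x⁻¹) + b * (y * φ y⁻¹) := by
    have hx₀ : 0 < x := inv_pos.1 (hs hx)
    have hy₀ : 0 < y := inv_pos.1 (hs hy)
    have hz₀ : 0 < a * x + b * y := convex_Ioi (0 : ℝ) hx₀ hy₀ ha hb hab
    set z := a * x + b * y with hz
    have hweights : a * x / z + b * y / z = 1 := by rw [← add_div, ← hz, div_self hz₀.ne']
    have hz_inv : z⁻¹ = (a * x / z) * x⁻¹ + (b * y / z) * y⁻¹ := by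
      field_simp
      exact hab.symm
    rw [hz_inv]
    refine ⟨hφ.1 hx hy (by positivity) (by positivity) hweights, ?_⟩
    calc z * φ ((a * x / z) * x⁻¹ + (b * y / z) * y⁻¹)
        ≤ z * ((a * x / z) * φ x⁻¹ + (b * y / z) * φ y⁻¹) :=
          mul_le_mul_of_nonneg_left (hφ.2 hx hy (by positivity) (by positivity) hweights) hz₀.le
      _ = a * (x * φ x⁻¹) + b * (y * φ y⁻¹) := by field_simp
  exact ⟨fun x hx y hy a b ha hb hab => (key hx hy ha hb hab).1,
    fun x hx y hy a b ha hb hab => (key hx hy ha hb hab).2⟩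

lemma convexOn_mul_comp_inv_iff {s : Set ℝ} (hs : s ⊆ Set.Ioi 0) {φ : ℝ → ℝ} :
    ConvexOn ℝ s⁻¹ (fun x => x * φ x⁻¹) ↔ ConvexOn ℝ s φ := by
  refine ⟨fun h => ?_, convexOn_mul_comp_inv hs⟩
  have hs' : s⁻¹ ⊆ Set.Ioi 0 := fun x hx => Set.mem_Ioi.2 (inv_pos.1 (hs hx))
  have h' := convexOn_mul_comp_inv hs' h
  rw [inv_inv] at h'
  refine h'.congr fun x hx => ?_
  have hx₀ : x ≠ 0 := (show 0 < x from hs hx).ne'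
  simp only [inv_inv, mul_inv_cancel_left₀ hx₀]

lemma concaveOn_of_rightInvOn {s t : Set ℝ} {f g : ℝ → ℝ} (hf : ConvexOn ℝ s f)
    (hmono : StrictMonoOn f s) (ht : Convex ℝ t) (hg : Set.MapsTo g t s)
    (hinv : Set.RightInvOn g f t) : ConcaveOn ℝ t g := by
  refine ⟨ht, fun x hx y hy a b ha hb hab => ?_⟩
  have hz := ht hx hy ha hb hab
  rw [← hmono.le_iff_le (hf.1 (hg hx) (hg hy) ha hb hab) (hg hz), hinv hz]
  simpa only [hinv hx, hinv hy] using hf.2 (hg hx) (hg hy) ha hb hab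

lemma convexOn_of_rightInvOn {s t : Set ℝ} {f g : ℝ → ℝ} (hf : ConcaveOn ℝ s f)
    (hmono : StrictMonoOn f s) (ht : Convex ℝ t) (hg : Set.MapsTo g t s)
    (hinv : Set.RightInvOn g f t) : ConvexOn ℝ t g := by
  refine ⟨ht, fun x hx y hy a b ha hb hab => ?_⟩
  have hz := ht hx hy ha hb hab
  rw [← hmono.le_iff_le (hg hz) (hf.1 (hg hx) (hg hy) ha hb hab), hinv hz]
  simpa only [hinv hx, hinv hy] using hf.2 (hg hx) (hg hy) ha hb hab

lemma concaveOn_iff_convexOn_of_invOn {s t : Set ℝ} {f g : ℝ → ℝ} (hs : Convex ℝ s)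
    (ht : Convex ℝ t) (hmono : StrictMonoOn f s) (hf : Set.MapsTo f s t) (hg : Set.MapsTo g t s)
    (hinv : Set.InvOn g f s t) : ConcaveOn ℝ t g ↔ ConvexOn ℝ s f := by
  have hmono' : StrictMonoOn g t := fun x hx y hy hxy => by
    rwa [← hmono.lt_iff_lt (hg hx) (hg hy), hinv.2 hx, hinv.2 hy]
  exact ⟨fun h => convexOn_of_rightInvOn h hmono' hs hf hinv.1,
    fun h => concaveOn_of_rightInvOn h hmono ht hg hinv.2⟩

/- `x ↦ -(x * L x)` is the perspective of `x ↦ -L x⁻¹`, which inverts `y ↦ (E (-y))⁻¹`. -/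
lemma concaveOn_neg_mul_iff_convexOn_inv {E L : ℝ → ℝ} {s t : Set ℝ} (hs : s ⊆ Set.Ioi 0)
    (hs' : Convex ℝ s⁻¹) (ht : Convex ℝ t) (hmono : StrictMonoOn E t) (hE : Set.MapsTo E t s)
    (hL : Set.MapsTo L s t) (hinv : Set.InvOn L E t s) :
    ConcaveOn ℝ s (fun x => -(x * L x)) ↔ ConvexOn ℝ (-t) (fun y => (E (-y))⁻¹) := by
  have hs_inv : s⁻¹ ⊆ Set.Ioi 0 := fun x hx => Set.mem_Ioi.2 (inv_pos.1 (hs hx))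
  have hpersp := convexOn_mul_comp_inv_iff hs_inv (φ := fun u => L u⁻¹)
  simp only [inv_inv] at hpersp
  rw [← Pi.neg_def, neg_concaveOn_iff, hpersp, ← neg_concaveOn_iff]
  refine concaveOn_iff_convexOn_of_invOn ht.neg hs' (fun x hx y hy hxy => ?_) (fun y hy => ?_)
    (fun u hu => ?_) ⟨fun y hy => ?_, fun u hu => ?_⟩
  · exact inv_strictAnti₀ (hs (hE hy)) (hmono hy hx (neg_lt_neg hxy))
  · simpa using hE hy
  · simpa using hL hu
  · simp [hinv.1 hy]
  · simp [hinv.2 hu]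

lemma inv_Ioc_zero_left {b : ℝ} (hb : 0 < b) : (Set.Ioc 0 b)⁻¹ = Set.Ici b⁻¹ := by
  ext x
  simp only [Set.mem_inv, Set.mem_Ioc, inv_pos, Set.mem_Ici]
  exact ⟨fun h => (inv_le_comm₀ h.1 hb).1 h.2, fun h =>
    have hx : 0 < x := (inv_pos.2 hb).trans_le h
    ⟨hx, (inv_le_comm₀ hx hb).2 h⟩⟩

lemma convexOn_inv_of_mul_deriv2_le {s : Set ℝ} (hs : Convex ℝ s) {f f' f'' : ℝ → ℝ}
    (hf : ∀ x ∈ s, HasDerivAt f (f' x) x) (hf' : ∀ x ∈ s, HasDerivAt f' (f'' x) x)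
    (hpos : ∀ x ∈ s, 0 < f x) (hle : ∀ x ∈ s, f x * f'' x ≤ 2 * f' x ^ 2) :
    ConvexOn ℝ s (fun x => (f x)⁻¹) := by
  have hd (x : ℝ) (hx : x ∈ s) : HasDerivAt (fun x => (f x)⁻¹) (-f' x / f x ^ 2) x :=
    (hf x hx).fun_inv (hpos x hx).ne'
  have hd₂ (x : ℝ) (hx : x ∈ s) : HasDerivAt (fun x => -f' x / f x ^ 2)
      ((2 * f' x ^ 2 - f x * f'' x) / f x ^ 3) x := by
    have hne := (hpos x hx).ne'
    refine ((hf' x hx).fun_neg.fun_div ((hf x hx).fun_pow 2) (pow_ne_zero 2 hne)).congr_deriv ?_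
    field_simp
    ring
  refine convexOn_of_hasDerivWithinAt2_nonneg hs
    (fun x hx => (hd x hx).continuousAt.continuousWithinAt)
    (fun x hx => (hd x (interior_subset hx)).hasDerivWithinAt)
    (fun x hx => (hd₂ x (interior_subset hx)).hasDerivWithinAt) fun x hx => ?_
  have hx := interior_subset hx
  exact div_nonneg (sub_nonneg.2 (hle x hx)) (pow_nonneg (hpos x hx).le 3)

lemma sum_range_mul_sub (s : ℕ) :
    ∑ i ∈ range (s + 1), (3 * ((i : ℝ) * (s - i)) - s * (s - 1) / 2) = 0 := by
  have h (m : ℕ) : ∑ i ∈ range m, (3 * ((i : ℝ) * (s - i)) - s * (s - 1) / 2) =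
      3 * (s * (m * (m - 1) / 2) - m * (m - 1) * (2 * m - 1) / 6) - m * (s * (s - 1) / 2) := by
    induction m with
    | zero => simp
    | succ m ih =>
      rw [sum_range_succ, ih]
      push_cast
      ring
  rw [h]
  push_cast
  ring

/-- A sequence supported exactly on `{0, …, n}` and log-concave there. -/
structure IsLogConcaveUpTo (q : ℕ → ℝ) (n : ℕ) : Prop where
  pos : ∀ j ≤ n, 0 < q j
  eq_zero : ∀ j, n < j → q j = 0
  mul_le_sq : ∀ j, q j * q (j + 2) ≤ q (j + 1) ^ 2

namespace IsLogConcaveUpTo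

variable {q : ℕ → ℝ} {n : ℕ}

lemma nonneg (hq : IsLogConcaveUpTo q n) (j : ℕ) : 0 ≤ q j :=
  (le_or_gt j n).elim (fun h => (hq.pos j h).le) fun h => (hq.eq_zero j h).ge

lemma mul_succ_le (hq : IsLogConcaveUpTo q n) (i d : ℕ) :
    q i * q (i + d + 1) ≤ q (i + 1) * q (i + d) := by
  induction d with
  | zero => exact (mul_comm _ _).le
  | succ d ih =>
    simp only [← add_assoc]
    rcases lt_or_ge n (i + d + 2) with h | h
    · rw [hq.eq_zero _ h, mul_zero]
      exact mul_nonneg (hq.nonneg _) (hq.nonneg _)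
    · refine le_of_mul_le_mul_left ?_
        (mul_pos (hq.pos (i + d) (by lia)) (hq.pos (i + d + 1) (by lia)))
      calc q (i + d) * q (i + d + 1) * (q i * q (i + d + 2))
          = q i * q (i + d + 1) * (q (i + d) * q (i + d + 2)) := by ring
        _ ≤ q (i + 1) * q (i + d) * q (i + d + 1) ^ 2 :=
          mul_le_mul ih (hq.mul_le_sq _) (mul_nonneg (hq.nonneg _) (hq.nonneg _))
            (mul_nonneg (hq.nonneg _) (hq.nonneg _))
        _ = q (i + d) * q (i + d + 1) * (q (i + 1) * q (i + d + 1)) := by ring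

lemma mul_le_mul_of_le_half (hq : IsLogConcaveUpTo q n) {s i k : ℕ} (hik : i ≤ k)
    (hk : 2 * k ≤ s) : q i * q (s - i) ≤ q k * q (s - k) := by
  induction k, hik using Nat.le_induction with
  | base => exact le_rfl
  | succ k hik ih =>
    refine (ih (by lia)).trans ?_
    have h := hq.mul_succ_le k (s - 2 * k - 1)
    rwa [show k + (s - 2 * k - 1) + 1 = s - k by lia,
      show k + (s - 2 * k - 1) = s - (k + 1) by lia] at h

lemma mul_le_mul_of_add_le (hq : IsLogConcaveUpTo q n) {s i k : ℕ} (hik : i ≤ k)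
    (hs : i + k ≤ s) : q i * q (s - i) ≤ q k * q (s - k) := by
  rcases le_total (2 * k) s with hk | hk
  · exact hq.mul_le_mul_of_le_half hik hk
  · have h := hq.mul_le_mul_of_le_half (s := s) (i := i) (k := s - k) (by lia) (by lia)
    rwa [Nat.sub_sub_self (by lia), mul_comm (q (s - k))] at h

lemma monovaryOn_antidiagonal (hq : IsLogConcaveUpTo q n) (s : ℕ) :
    MonovaryOn (fun i => q i * q (s - i)) (fun i : ℕ => (i : ℝ) * (s - i)) (range (s + 1)) := by
  intro i hi k _ hlt
  have hi : i ≤ s := Nat.lt_succ_iff.1 (mem_range.1 hi)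
  have hprod : 0 < ((k : ℝ) - i) * (s - i - k) := by
    simp only at hlt
    linarith
  have hcast : ((s - i - k : ℤ) : ℝ) = s - i - k := by push_cast; ring
  rcases pos_and_pos_or_neg_and_neg_of_mul_pos hprod with ⟨h₁, h₂⟩ | ⟨h₁, h₂⟩
  · have h₁ : i < k := by exact_mod_cast sub_pos.1 h₁
    have h₂ : i + k < s := by rw [← hcast] at h₂; have := Int.cast_pos.1 h₂; lia
    exact hq.mul_le_mul_of_add_le h₁.le h₂.le
  · have h₁ : k < i := by exact_mod_cast sub_neg.1 h₁
    have h₂ : s < i + k := by rw [← hcast] at h₂; have := Int.cast_lt_zero.1 h₂; lia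
    have h := hq.mul_le_mul_of_add_le (s := s) (i := s - i) (k := k) (by lia) (by lia)
    rwa [Nat.sub_sub_self hi, mul_comm] at h

/- Symmetrising in `i ↔ k` turns the weight `2ik - k(k-1)` into `3ik - s(s-1)/2`, which has sum
zero over the antidiagonal and is similarly ordered to `q i * q k`. -/
lemma sum_antidiagonal_nonneg (hq : IsLogConcaveUpTo q n) (s : ℕ) :
    0 ≤ ∑ p ∈ antidiagonal s, q p.1 * q p.2 * (2 * (p.1 * p.2) - p.2 * (p.2 - 1)) := by
  have hcheb : 0 ≤ ∑ i ∈ range (s + 1),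
      q i * q (s - i) * (3 * ((i : ℝ) * (s - i)) - s * (s - 1) / 2) := by
    have hmono : MonovaryOn (fun i => q i * q (s - i))
        (fun i : ℕ => 3 * ((i : ℝ) * (s - i)) - s * (s - 1) / 2) (range (s + 1)) :=
      fun i hi k hk hlt => hq.monovaryOn_antidiagonal s hi hk (by simp only at hlt ⊢; linarith)
    have h := hmono.sum_mul_sum_le_card_mul_sum
    rw [sum_range_mul_sub, mul_zero, card_range] at h
    exact nonneg_of_mul_nonneg_right h (by positivity)
  rw [← Nat.sum_antidiagonal_eq_sum_range_succ
    (fun i k => q i * q k * (3 * ((i : ℝ) * (s - i)) - s * (s - 1) / 2))] at hcheb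
  refine nonneg_of_mul_nonneg_right (a := 2) ?_ two_pos
  convert mul_nonneg zero_le_two hcheb using 1
  rw [two_mul]
  nth_rewrite 2 [← Nat.sum_antidiagonal_swap]
  rw [← sum_add_distrib, mul_sum]
  refine sum_congr rfl fun p hp => ?_
  rw [← mem_antidiagonal.1 hp]
  simp only [Prod.fst_swap, Prod.snd_swap]
  push_cast
  ring

open Polynomial in
lemma eval_mul_eval_deriv2_le {p : ℝ[X]} (hp : IsLogConcaveUpTo p.coeff n) {x : ℝ}
    (hx : 0 < x) :
    p.eval x * p.derivative.derivative.eval x ≤ 2 * p.derivative.eval x ^ 2 := by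
  set r : ℝ[X] := 2 * (X * derivative p) ^ 2 - p * (X ^ 2 * derivative (derivative p)) with hr
  have hcoeff₁ (k : ℕ) : (X * derivative p).coeff k = k * p.coeff k := by
    cases k <;> simp [coeff_X_mul, coeff_derivative, mul_comm]
  have hcoeff₂ (k : ℕ) : (X ^ 2 * derivative (derivative p)).coeff k =
      k * (k - 1) * p.coeff k := by
    rcases k with _ | _ | k
    · simp
    · simp [coeff_X_pow_mul']
    · rw [coeff_X_pow_mul, coeff_derivative, coeff_derivative]
      push_cast
      ring
  have hr_coeff (s : ℕ) : 0 ≤ r.coeff s := by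
    convert hp.sum_antidiagonal_nonneg s using 1
    rw [hr, sq, coeff_sub, coeff_ofNat_mul, coeff_mul, coeff_mul, mul_sum, ← sum_sub_distrib]
    refine sum_congr rfl fun i _ => ?_
    rw [hcoeff₁, hcoeff₁, hcoeff₂]
    ring
  have hr_eval : 0 ≤ r.eval x := by
    rw [eval_eq_sum_range]
    exact sum_nonneg fun i _ => mul_nonneg (hr_coeff i) (by positivity)
  have : 0 ≤ x ^ 2 * (2 * p.derivative.eval x ^ 2 -
      p.eval x * p.derivative.derivative.eval x) := by
    convert hr_eval using 1
    simp only [hr, eval_sub, eval_mul, eval_ofNat, eval_pow, eval_X]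
    ring
  exact sub_nonneg.1 (nonneg_of_mul_nonneg_right this (by positivity))

open Polynomial in
lemma convexOn_inv_eval {p : ℝ[X]} (hp : IsLogConcaveUpTo p.coeff n) :
    ConvexOn ℝ (Set.Ioi 0) (fun x => (p.eval x)⁻¹) := by
  refine convexOn_inv_of_mul_deriv2_le (convex_Ioi 0) (fun x _ => p.hasDerivAt x)
    (fun x _ => p.derivative.hasDerivAt x) (fun x (hx : 0 < x) => ?_)
    fun x hx => hp.eval_mul_eval_deriv2_le hx
  rw [eval_eq_sum_range]
  exact sum_pos' (fun i _ => mul_nonneg (hp.nonneg i) (by positivity))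
    ⟨0, by simp, mul_pos (hp.pos 0 n.zero_le) (by positivity)⟩

open Polynomial in
lemma convexOn_inv_geomTransform (hq : IsLogConcaveUpTo q n) :
    ConvexOn ℝ (Set.Ici 0) (fun y => (geomTransform q n y)⁻¹) := by
  set p : ℝ[X] := ∑ j ∈ range (n + 1), C (q j) * X ^ j with hp_def
  have hcoeff : p.coeff = q := by
    ext k
    simp only [hp_def, finsetSum_coeff, coeff_C_mul_X_pow]
    rw [sum_ite_eq, ite_eq_left_iff, mem_range, not_lt]
    exact fun hk => (hq.eq_zero k hk).symm
  have hp : IsLogConcaveUpTo p.coeff n := hcoeff ▸ hq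
  have hpersp := (convexOn_mul_comp_inv subset_rfl hp.convexOn_inv_eval).translate_right 1
  refine (hpersp.subset (fun y (hy : 0 ≤ y) => ?_) (convex_Ici 0)).congr fun y _ => ?_
  · exact inv_pos.2 (show 0 < 1 + y by positivity)
  · have heval : geomTransform q n y = (1 + y)⁻¹ * p.eval (1 + y)⁻¹ := by
      simp only [hp_def, geomTransform, eval_finsetSum, eval_mul, eval_C, eval_pow, eval_X,
        mul_sum, pow_succ', mul_left_comm]
    simp [heval, mul_comm]

end IsLogConcaveUpTo

/-! ### Log-concavity for parameters at most one half -/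

lemma pochhammerRatio_neg_mul_le_sq {a : ℝ} (ha₀ : 0 ≤ a) (ha : a ≤ 1 / 2) (n : ℕ) :
    pochhammerRatio (-a) n * pochhammerRatio (-(3 * a)) n ≤ pochhammerRatio (-(2 * a)) n ^ 2 := by
  induction n with
  | zero => simp [pochhammerRatio]
  | succ n ih =>
    rcases Nat.eq_zero_or_pos n with rfl | hn
    · simp only [pochhammerRatio, zero_add, range_one, prod_singleton, Nat.cast_zero, div_one]
      nlinarith
    set b := a / (n + 1) with hb_def
    have hn : (1 : ℝ) ≤ n := by exact_mod_cast hn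
    have hb₀ : 0 ≤ b := by positivity
    have hb : b ≤ 1 / 4 := by
      rw [hb_def, div_le_iff₀ (by positivity)]
      linarith
    have hfactor : 0 ≤ (1 - b) * (1 - 3 * b) := mul_nonneg (by linarith) (by linarith)
    calc pochhammerRatio (-a) (n + 1) * pochhammerRatio (-(3 * a)) (n + 1)
        = pochhammerRatio (-a) n * pochhammerRatio (-(3 * a)) n * ((1 - b) * (1 - 3 * b)) := by
          rw [pochhammerRatio_succ, pochhammerRatio_succ]
          ring
      _ ≤ pochhammerRatio (-(2 * a)) n ^ 2 * (1 - 2 * b) ^ 2 :=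
          mul_le_mul ih (by nlinarith) hfactor (sq_nonneg _)
      _ = pochhammerRatio (-(2 * a)) (n + 1) ^ 2 := by
          rw [pochhammerRatio_succ]
          ring

lemma tableLaw_one_sq_sub (a : ℝ) (n : ℕ) :
    tableLaw a n 1 ^ 2 - tableLaw a n 0 * tableLaw a n 2 =
      pochhammerRatio (-(2 * a)) n ^ 2 - pochhammerRatio (-a) n * pochhammerRatio (-(3 * a)) n := by
  have h (i : ℝ) {c : ℝ} (hc : i + 1 = c) : a * (i + 1) = c * a := by rw [hc, mul_comm]
  simp only [tableLaw_eq_sum_pochhammerRatio, sum_range_succ, range_zero, sum_empty,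
    Nat.cast_zero, Nat.cast_one, Nat.cast_ofNat, h 1 one_add_one_eq_two, h 2 two_add_one_eq_three,
    zero_add, mul_one]
  norm_num
  ring

lemma mul_tableLaw_succ_succ (a : ℝ) (n j : ℕ) :
    (n + 1) * tableLaw a (n + 1) (j + 1) =
      (n + 1 - a * (j + 2)) * tableLaw a n (j + 1) + a * (j + 1) * tableLaw a n j := by
  rw [tableLaw_succ, Nat.add_sub_cancel]
  push_cast
  field_simp
  ring

lemma antitone_tableLaw {a : ℝ} (ha₀ : 0 ≤ a) (ha : a ≤ 1 / 2) (n : ℕ) :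
    Antitone (tableLaw a n) := by
  refine antitone_nat_of_succ_le fun j => ?_
  induction n generalizing j with
  | zero => simp [tableLaw, ite_nonneg]
  | succ n ih =>
    rcases lt_or_ge n j with hj | hj
    · rw [tableLaw_eq_zero_of_lt a (by lia)]
      exact tableLaw_nonneg ha₀ (by linarith) _ _
    have hstay : 0 ≤ (n : ℝ) + 1 - a * (j + 2) := by
      have : (j : ℝ) ≤ n := by exact_mod_cast hj
      nlinarith
    refine le_of_mul_le_mul_left ?_ (n.cast_add_one_pos (α := ℝ))
    have hdrop := mul_le_mul_of_nonneg_left (ih j) hstay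
    rw [mul_tableLaw_succ_succ]
    cases j with
    | zero =>
      rw [tableLaw_succ]
      field_simp
      push_cast at hdrop ⊢
      linarith
    | succ j =>
      have hdrop' := mul_le_mul_of_nonneg_left (ih j) (by positivity : 0 ≤ a * (j + 1))
      rw [mul_tableLaw_succ_succ]
      push_cast at hdrop ⊢
      linarith

lemma tableLaw_succ_sq_sub (a : ℝ) (n j : ℕ) {A B : ℝ} (hA : A = n + 1 - a * (j + 3))
    (hB : B = a * (j + 2)) {q : ℕ → ℝ} (hq : q = tableLaw a n) :
    (n + 1 : ℝ) ^ 2 * (tableLaw a (n + 1) (j + 2) ^ 2 -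
      tableLaw a (n + 1) (j + 1) * tableLaw a (n + 1) (j + 3)) =
    A ^ 2 * (q (j + 2) ^ 2 - q (j + 1) * q (j + 3)) + B ^ 2 * (q (j + 1) ^ 2 - q j * q (j + 2)) +
      (A * B - a * (A + B)) * (q (j + 1) * q (j + 2) - q j * q (j + 3)) +
      a ^ 2 * ((q (j + 2) - q (j + 3)) * (q j - q (j + 1))) := by
  have h₁ := mul_tableLaw_succ_succ a n j
  have h₂ := mul_tableLaw_succ_succ a n (j + 1)
  have h₃ := mul_tableLaw_succ_succ a n (j + 2)
  push_cast at h₂ h₃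
  rw [mul_sub, ← mul_pow, sq (n + 1 : ℝ), mul_mul_mul_comm, h₁, h₂, h₃, ← hq, hA, hB]
  ring

lemma tableLaw_succ_mul_le_sq {a : ℝ} (ha₀ : 0 ≤ a) (ha : a ≤ 1 / 2) {n j : ℕ}
    (hlc : IsLogConcaveUpTo (tableLaw a n) n) (hj : j + 2 ≤ n) :
    tableLaw a (n + 1) (j + 1) * tableLaw a (n + 1) (j + 3) ≤ tableLaw a (n + 1) (j + 2) ^ 2 := by
  have hanti := antitone_tableLaw ha₀ ha n
  set A := (n + 1 : ℝ) - a * (j + 3) with hA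
  set B := a * (j + 2 : ℝ) with hB
  have hAB : 0 ≤ A * B - a * (A + B) := by
    have hj : (j : ℝ) + 2 ≤ n := by exact_mod_cast hj
    have hA₂ : (n + 1 : ℝ) / 2 ≤ A := by nlinarith
    have : A * B - a * (A + B) = a * ((j + 2) * A - (n + 1) + a) := by rw [hA, hB]; ring
    rw [this]
    exact mul_nonneg ha₀ (by nlinarith)
  refine sub_nonneg.1 (nonneg_of_mul_nonneg_right (a := (n + 1 : ℝ) ^ 2) ?_ (by positivity))
  rw [tableLaw_succ_sq_sub a n j hA hB rfl]
  refine add_nonneg (add_nonneg (add_nonneg ?_ ?_) ?_) ?_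
  · exact mul_nonneg (sq_nonneg A) (sub_nonneg.2 (hlc.mul_le_sq (j + 1)))
  · exact mul_nonneg (sq_nonneg B) (sub_nonneg.2 (hlc.mul_le_sq j))
  · exact mul_nonneg hAB (sub_nonneg.2 (hlc.mul_succ_le j 2))
  · exact mul_nonneg (sq_nonneg a) (mul_nonneg (sub_nonneg.2 (hanti (j + 2).le_succ))
      (sub_nonneg.2 (hanti j.le_succ)))

lemma isLogConcaveUpTo_tableLaw_of_le_half {a : ℝ} (ha₀ : 0 < a) (ha : a ≤ 1 / 2) (n : ℕ) :
    IsLogConcaveUpTo (tableLaw a n) n := by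
  induction n with
  | zero =>
    exact ⟨fun j => tableLaw_pos ha₀ (by linarith), fun j => tableLaw_eq_zero_of_lt a,
      fun j => by simp [tableLaw]⟩
  | succ n ih =>
    refine ⟨fun j => tableLaw_pos ha₀ (by linarith), fun j => tableLaw_eq_zero_of_lt a,
      fun j => ?_⟩
    rcases j with _ | j
    · rw [← sub_nonneg, tableLaw_one_sq_sub, sub_nonneg]
      exact pochhammerRatio_neg_mul_le_sq ha₀.le ha _
    rcases lt_or_ge n (j + 2) with hj | hj
    · rw [tableLaw_eq_zero_of_lt a (show n + 1 < j + 1 + 2 by lia), mul_zero]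
      positivity
    · exact tableLaw_succ_mul_le_sq ha₀.le ha ih hj

/-! ### Asymptotic expansion at infinity -/

lemma geomTransform_fwdDiff {q : ℕ → ℝ} {n : ℕ} (hq : ∀ j, n < j → q j = 0) {y : ℝ}
    (hy : 1 + y ≠ 0) : geomTransform (Δ_[1] q) n y = y * geomTransform q n y - q 0 := by
  have hshift : ∑ j ∈ range (n + 1), q (j + 1) * (1 + y)⁻¹ ^ (j + 1) =
      ∑ j ∈ range (n + 1), q j * (1 + y)⁻¹ ^ j - q 0 := by
    have h := sum_range_succ' (fun j => q j * (1 + y)⁻¹ ^ j) (n + 1)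
    rw [sum_range_succ, hq _ n.lt_succ_self, zero_mul, add_zero, pow_zero, mul_one] at h
    rw [h, add_sub_cancel_right]
  have hscale : ∑ j ∈ range (n + 1), q j * (1 + y)⁻¹ ^ j = (1 + y) * geomTransform q n y := by
    rw [geomTransform, mul_sum]
    exact sum_congr rfl fun j _ => by rw [pow_succ]; field_simp
  simp only [geomTransform, fwdDiff, sub_mul, sum_sub_distrib, hshift]
  rw [hscale, geomTransform]
  ring

lemma geomTransform_eq_sum_add {q : ℕ → ℝ} {n : ℕ} (hq : ∀ j, n < j → q j = 0) {y : ℝ}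
    (hy : 0 < y) (m : ℕ) :
    geomTransform q n y =
      ∑ k ∈ range m, Δ_[1] ^[k] q 0 / y ^ (k + 1) + geomTransform (Δ_[1] ^[m] q) n y / y ^ m := by
  induction m with
  | zero => simp
  | succ m ih =>
    rw [ih, sum_range_succ, Function.iterate_succ_apply', geomTransform_fwdDiff
      (fun j => fwdDiff_iter_eq_zero_of_support hq m) (by positivity)]
    field_simp
    ring

lemma abs_geomTransform_le {q : ℕ → ℝ} {B : ℝ} (hB : ∀ j, |q j| ≤ B) (n : ℕ) {y : ℝ}
    (hy : 0 < y) : |geomTransform q n y| ≤ B / y := by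
  have hB₀ : 0 ≤ B := (abs_nonneg _).trans (hB 0)
  set v := (1 + y)⁻¹ with hv_def
  have hv₀ : 0 < v := by positivity
  have hv₁ : v < 1 := inv_lt_one_of_one_lt₀ (by linarith)
  calc |geomTransform q n y| ≤ ∑ j ∈ range (n + 1), B * v * v ^ j := by
        refine (abs_sum_le_sum_abs _ _).trans (sum_le_sum fun j _ => ?_)
        rw [abs_mul, abs_of_nonneg (pow_nonneg hv₀.le _), mul_assoc, ← pow_succ']
        exact mul_le_mul_of_nonneg_right (hB j) (by positivity)
    _ ≤ B * v * (1 - v)⁻¹ := by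
        rw [← mul_sum, ← tsum_geometric_of_lt_one hv₀.le hv₁]
        gcongr
        exact (summable_geometric_of_lt_one hv₀.le hv₁).sum_le_tsum _ fun j _ => by positivity
    _ = B / y := by
        have : 1 - v = v * y := by rw [hv_def]; field_simp; ring
        rw [this]
        field_simp

/- The recursion for `Δ^m` contracts the supremum norm by the factor `1 - a(m+1)/(n+1)`, which is
at most `(n / (n+1)) ^ (a(m+1))` by Bernoulli's inequality. -/
lemma abs_fwdDiff_iter_tableLaw_succ_le {a : ℝ} (ha₀ : 0 ≤ a) {m n : ℕ} (hn : 0 < n)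
    (hm : 1 ≤ a * (m + 1)) (hlarge : a * (m + 1) ≤ (1 - a) * (n + 1)) {C : ℝ}
    (hC : ∀ j, |Δ_[1] ^[m] (tableLaw a n) j| ≤ C * (n : ℝ) ^ (-(a * (m + 1)))) (j : ℕ) :
    |Δ_[1] ^[m] (tableLaw a (n + 1)) j| ≤ C * ((n + 1 : ℕ) : ℝ) ^ (-(a * (m + 1))) := by
  set s := a * (m + 1 : ℝ) with hs
  set D := C * (n : ℝ) ^ (-s) with hD
  have hD₀ : 0 ≤ D := (abs_nonneg _).trans (hC 0)
  rcases lt_or_ge (n + 1) j with hj | hj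
  · rw [fwdDiff_iter_eq_zero_of_support (fun i => tableLaw_eq_zero_of_lt a) m hj, abs_zero]
    have hC₀ : 0 ≤ C := nonneg_of_mul_nonneg_left hD₀ (by positivity)
    positivity
  have hstay : 0 ≤ 1 - a * (j + 1 + m) / (n + 1) := by
    have : (j : ℝ) ≤ n + 1 := by exact_mod_cast hj
    rw [sub_nonneg, div_le_one (by positivity)]
    nlinarith
  have hbernoulli : 1 + s * -(1 / (n + 1 : ℝ)) ≤ (1 + -(1 / (n + 1 : ℝ))) ^ s := by
    refine one_add_mul_self_le_rpow_one_add ?_ hm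
    rw [neg_le_neg_iff, div_le_one (by positivity)]
    linarith [n.cast_nonneg (α := ℝ)]
  calc |Δ_[1] ^[m] (tableLaw a (n + 1)) j|
      ≤ (1 - a * (j + 1 + m) / (n + 1)) * D + a * j / (n + 1) * D := by
        rw [fwdDiff_iter_tableLaw_succ]
        refine (abs_add_le _ _).trans ?_
        rw [abs_mul, abs_mul, abs_of_nonneg hstay,
          abs_of_nonneg (by positivity : 0 ≤ a * j / (n + 1))]
        gcongr
        exacts [hC j, hC (j - 1)]
    _ = (1 + s * -(1 / (n + 1 : ℝ))) * D := by
        rw [hs]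
        field_simp
        ring
    _ ≤ (1 + -(1 / (n + 1 : ℝ))) ^ s * D := by gcongr
    _ = C * ((n + 1 : ℕ) : ℝ) ^ (-s) := by
        have : 1 + -(1 / (n + 1 : ℝ)) = n / (n + 1) := by field_simp; ring
        rw [this, hD, Real.div_rpow n.cast_nonneg (by positivity), Real.rpow_neg n.cast_nonneg,
          Real.rpow_neg (by positivity)]
        push_cast
        field_simp

lemma exists_eventually_abs_fwdDiff_iter_tableLaw_le {a : ℝ} (ha₀ : 0 ≤ a) (ha₁ : a < 1) {m : ℕ}
    (hm : 1 ≤ a * (m + 1)) :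
    ∃ C, ∀ᶠ n : ℕ in atTop, ∀ j,
      |Δ_[1] ^[m] (tableLaw a n) j| ≤ C * (n : ℝ) ^ (-(a * (m + 1))) := by
  obtain ⟨N, hN⟩ := exists_nat_gt (a * (m + 1) / (1 - a))
  have hN₀ : (0 : ℝ) < N := lt_trans (by have := sub_pos.2 ha₁; positivity) hN
  set S := ∑ j ∈ range (N + 1), |Δ_[1] ^[m] (tableLaw a N) j| with hS
  refine ⟨S * (N : ℝ) ^ (a * (m + 1)), eventually_atTop.2 ⟨N, fun n hn => ?_⟩⟩
  induction n, hn using Nat.le_induction with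
  | base =>
    intro j
    rw [mul_assoc, ← Real.rpow_add hN₀, add_neg_cancel, Real.rpow_zero, mul_one]
    rcases lt_or_ge N j with hj | hj
    · rw [fwdDiff_iter_eq_zero_of_support (fun i => tableLaw_eq_zero_of_lt a) m hj, abs_zero]
      positivity
    · exact single_le_sum (f := fun j => |Δ_[1] ^[m] (tableLaw a N) j|)
        (fun _ _ => abs_nonneg _) (by simpa using Nat.lt_succ_of_le hj)
  | succ n hn ih =>
    have hn' : (N : ℝ) ≤ n := by exact_mod_cast hn
    refine abs_fwdDiff_iter_tableLaw_succ_le ha₀ (by exact_mod_cast hN₀.trans_le hn') hm ?_ ih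
    rw [div_lt_iff₀ (sub_pos.2 ha₁)] at hN
    nlinarith

lemma exists_abs_mittagLeffler_neg_sub_sum_le {a : ℝ} (ha₀ : 0 < a) (ha₁ : a < 1) {m : ℕ}
    (hm : 1 ≤ a * (m + 1)) :
    ∃ C, ∀ t, 0 < t →
      |mittagLeffler a 1 (-t) -
        ∑ k ∈ range m, (-1) ^ k * (Real.Gamma (1 - a * (k + 1)))⁻¹ / t ^ (k + 1)| ≤
      C / t ^ (m + 1) := by
  obtain ⟨C, hC⟩ := exists_eventually_abs_fwdDiff_iter_tableLaw_le ha₀.le ha₁ hm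
  refine ⟨C, fun t ht => ?_⟩
  have hterm (k : ℕ) : Tendsto (fun n : ℕ => (-1) ^ k *
      (pochhammerRatio (-(a * (k + 1))) n * (n : ℝ) ^ (a * (k + 1))) / t ^ (k + 1)) atTop
      (𝓝 ((-1) ^ k * (Real.Gamma (1 - a * (k + 1)))⁻¹ / t ^ (k + 1))) := by
    simpa [← sub_eq_add_neg] using
      ((tendsto_pochhammerRatio_mul_rpow (-(a * (k + 1)))).const_mul _).div_const _
  refine le_of_tendsto ((tendsto_geomTransform_tableLaw ha₀ ha₁.le ht.le).sub
    (tendsto_finsetSum (range m) fun k _ => hterm k)).abs ?_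
  filter_upwards [hC, eventually_gt_atTop 0] with n hCn hn
  have hn : (0 : ℝ) < n := by exact_mod_cast hn
  have hpow (k : ℕ) : (t * (n : ℝ) ^ (-a)) ^ (k + 1) = t ^ (k + 1) / (n : ℝ) ^ (a * (k + 1)) := by
    rw [mul_pow, ← Real.rpow_mul_natCast hn.le, neg_mul, Real.rpow_neg hn.le, div_eq_mul_inv]
    push_cast
    rfl
  rw [geomTransform_eq_sum_add (fun j => tableLaw_eq_zero_of_lt a)
    (by positivity : 0 < t * (n : ℝ) ^ (-a)) m]
  simp_rw [fwdDiff_iter_tableLaw_zero, hpow, div_div_eq_mul_div, mul_assoc]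
  rw [add_sub_cancel_left, abs_div, abs_of_pos (by positivity : 0 < (t * (n : ℝ) ^ (-a)) ^ m)]
  calc _ ≤ C * (n : ℝ) ^ (-(a * (m + 1))) / (t * (n : ℝ) ^ (-a)) / (t * (n : ℝ) ^ (-a)) ^ m := by
        gcongr
        exact abs_geomTransform_le hCn n (by positivity)
    _ = C / t ^ (m + 1) := by
        rw [div_div, ← pow_succ', hpow, Real.rpow_neg hn.le]
        field_simp

lemma nonneg_of_convexOn_of_tendsto_mul_sub_affine {g : ℝ → ℝ} {c A B κ : ℝ}
    (hg : ConvexOn ℝ (Set.Ici c) g)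
    (hκ : Tendsto (fun t => t * (g t - (A * t + B))) atTop (𝓝 κ)) : 0 ≤ κ := by
  set h := fun t => t * (g t - (A * t + B)) with hh
  have h₂ : Tendsto (fun t => h (2 * t)) atTop (𝓝 κ) :=
    hκ.comp (tendsto_id.const_mul_atTop two_pos)
  have h₃ : Tendsto (fun t => h (3 * t)) atTop (𝓝 κ) :=
    hκ.comp (tendsto_id.const_mul_atTop three_pos)
  have hlim : κ / 2 ≤ κ / 2 + κ / 6 := by
    refine le_of_tendsto_of_tendsto (h₂.div_const 2) ((hκ.div_const 2).add (h₃.div_const 6)) ?_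
    filter_upwards [eventually_gt_atTop 0, eventually_ge_atTop c] with t ht htc
    have hmid := hg.2 (Set.mem_Ici.2 htc) (Set.mem_Ici.2 (by linarith : c ≤ 3 * t))
      (by norm_num : (0 : ℝ) ≤ 1 / 2) (by norm_num : (0 : ℝ) ≤ 1 / 2) (by norm_num)
    simp only [smul_eq_mul, show 1 / 2 * t + 1 / 2 * (3 * t) = 2 * t by ring] at hmid
    simp only [hh]
    linarith [mul_le_mul_of_nonneg_left hmid ht.le]
  linarith

lemma tendsto_mul_inv_sub_affine {f : ℝ → ℝ} {a₁ a₂ a₃ : ℝ} (ha₁ : a₁ ≠ 0)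
    (hf : Tendsto (fun t => t ^ 3 * f t - a₁ * t ^ 2 + a₂ * t) atTop (𝓝 a₃)) :
    Tendsto (fun t => t * ((f t)⁻¹ - (a₁⁻¹ * t + a₂ / a₁ ^ 2))) atTop
      (𝓝 ((a₂ ^ 2 - a₁ * a₃) / a₁ ^ 3)) := by
  set r := fun t => t ^ 3 * f t - a₁ * t ^ 2 + a₂ * t with hr
  have hu : Tendsto (fun t : ℝ => t⁻¹) atTop (𝓝 0) := tendsto_inv_atTop_zero
  have hden : Tendsto (fun t => a₁ - a₂ * t⁻¹ + r t * t⁻¹ ^ 2) atTop (𝓝 a₁) := by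
    simpa using (((hu.const_mul a₂).const_sub a₁).add (hf.mul (hu.pow 2)))
  have hnum : Tendsto (fun t => a₂ ^ 2 - a₁ * r t - a₂ * r t * t⁻¹) atTop
      (𝓝 (a₂ ^ 2 - a₁ * a₃)) := by
    simpa using ((hf.const_mul a₁).const_sub (a₂ ^ 2)).sub ((hf.const_mul a₂).mul hu)
  have hlim := hnum.div (hden.const_mul (a₁ ^ 2)) (by positivity)
  rw [← pow_succ] at hlim
  refine hlim.congr' ?_
  filter_upwards [hden.eventually_ne ha₁, eventually_ne_atTop 0] with t hD ht
  have hft : f t = (a₁ - a₂ * t⁻¹ + r t * t⁻¹ ^ 2) / t := by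
    simp only [hr]
    field_simp
    ring
  have hrt : r t = (a₁ - a₂ * t⁻¹ + r t * t⁻¹ ^ 2 - a₁ + a₂ * t⁻¹) * t ^ 2 := by
    field_simp
    ring
  rw [Pi.div_apply, hft, inv_div]
  generalize a₁ - a₂ * t⁻¹ + r t * t⁻¹ ^ 2 = D at hD hrt ⊢
  rw [hrt]
  field_simp
  ring

lemma mul_le_sq_of_convexOn_inv {f : ℝ → ℝ} {c a₁ a₂ a₃ : ℝ} (ha₁ : 0 < a₁)
    (hf : Tendsto (fun t => t ^ 3 * f t - a₁ * t ^ 2 + a₂ * t) atTop (𝓝 a₃))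
    (hconv : ConvexOn ℝ (Set.Ici c) (fun t => (f t)⁻¹)) : a₁ * a₃ ≤ a₂ ^ 2 := by
  have h := nonneg_of_convexOn_of_tendsto_mul_sub_affine hconv
    (tendsto_mul_inv_sub_affine ha₁.ne' hf)
  rwa [le_div_iff₀ (by positivity), zero_mul, sub_nonneg] at h

lemma tendsto_pow_three_mul_mittagLeffler_neg {a : ℝ} (ha₀ : 1 / 4 ≤ a) (ha₁ : a < 1) :
    Tendsto (fun t => t ^ 3 * mittagLeffler a 1 (-t) - (Real.Gamma (1 - a))⁻¹ * t ^ 2 +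
      (Real.Gamma (1 - 2 * a))⁻¹ * t) atTop (𝓝 (Real.Gamma (1 - 3 * a))⁻¹) := by
  obtain ⟨C, hC⟩ := exists_abs_mittagLeffler_neg_sub_sum_le (m := 3) (by linarith) ha₁
    (by norm_num; linarith)
  rw [tendsto_iff_dist_tendsto_zero]
  refine squeeze_zero' (g := fun t => C / t) (Eventually.of_forall fun _ => dist_nonneg) ?_
    (tendsto_id.const_div_atTop C)
  filter_upwards [eventually_gt_atTop 0] with t ht
  calc dist _ _ = t ^ 3 * |mittagLeffler a 1 (-t) -
        ∑ k ∈ range 3, (-1) ^ k * (Real.Gamma (1 - a * (k + 1)))⁻¹ / t ^ (k + 1)| := by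
        rw [Real.dist_eq, ← abs_of_pos (pow_pos ht 3), ← abs_mul, abs_of_pos (pow_pos ht 3)]
        congr 1
        simp only [sum_range_succ, range_zero, sum_empty, Nat.cast_zero, Nat.cast_one,
          Nat.cast_ofNat, mul_comm a]
        norm_num
        field_simp
        ring
    _ ≤ t ^ 3 * (C / t ^ (3 + 1)) := mul_le_mul_of_nonneg_left (hC t ht) (by positivity)
    _ = C / t := by
        field_simp
        ring

/-! ### A Beta integral on rays -/

/-- The measure `t ^ (s - 1) dt` on the positive half-line. Its moment generating function at
`-r` is `Γ(s) r ^ (-s)`; Mathlib's `complexMGF` then provides the holomorphy in `r`. -/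
noncomputable def rpowMeasure (s : ℝ) : Measure ℝ :=
  (volume.restrict (Set.Ioi 0)).withDensity fun t => (t ^ (s - 1)).toNNReal

lemma toNNReal_rpow_smul_ae_eq (s : ℝ) {E : Type*} [AddCommGroup E] [Module ℝ E] (g : ℝ → E) :
    (fun t => (t ^ (s - 1)).toNNReal • g t) =ᵐ[volume.restrict (Set.Ioi 0)]
      fun t => t ^ (s - 1) • g t := by
  filter_upwards [ae_restrict_mem measurableSet_Ioi] with t ht
  rw [NNReal.smul_def, Real.coe_toNNReal _ (Real.rpow_nonneg (Set.mem_Ioi.1 ht).le _)]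

lemma integral_rpowMeasure (s : ℝ) {E : Type*} [NormedAddCommGroup E] [NormedSpace ℝ E]
    (g : ℝ → E) :
    ∫ t, g t ∂rpowMeasure s = ∫ t in Set.Ioi 0, t ^ (s - 1) • g t := by
  rw [rpowMeasure, integral_withDensity_eq_integral_smul (by fun_prop)]
  exact integral_congr_ae (toNNReal_rpow_smul_ae_eq s g)

lemma integrable_rpowMeasure_iff {s : ℝ} {E : Type*} [NormedAddCommGroup E] [NormedSpace ℝ E]
    {g : ℝ → E} :
    Integrable g (rpowMeasure s) ↔ IntegrableOn (fun t => t ^ (s - 1) • g t) (Set.Ioi 0) := by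
  rw [rpowMeasure, integrable_withDensity_iff_integrable_smul (by fun_prop)]
  exact integrable_congr (toNNReal_rpow_smul_ae_eq s g)

lemma integrable_exp_mul_rpowMeasure {s x : ℝ} (hs : 0 < s) (hx : x < 0) :
    Integrable (fun t => Real.exp (x * t)) (rpowMeasure s) := by
  rw [integrable_rpowMeasure_iff]
  simpa using integrableOn_rpow_mul_exp_neg_mul_rpow (p := 1) (s := s - 1) (b := -x)
    (by linarith) one_pos (by linarith)

lemma integrable_cexp_mul_rpowMeasure {s : ℝ} {z : ℂ} (hs : 0 < s) (hz : z.re < 0) :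
    Integrable (fun t : ℝ => Complex.exp (z * t)) (rpowMeasure s) := by
  rw [← integrable_norm_iff (by fun_prop)]
  simpa [Complex.norm_exp] using integrable_exp_mul_rpowMeasure hs hz

lemma mgf_rpowMeasure {s x : ℝ} (hs : 0 < s) (hx : x < 0) :
    ProbabilityTheory.mgf id (rpowMeasure s) x = (-x) ^ (-s) * Real.Gamma s := by
  have h := Real.integral_rpow_mul_exp_neg_mul_Ioi hs (neg_pos.2 hx)
  rw [one_div, Real.inv_rpow (by linarith), ← Real.rpow_neg (by linarith)] at h
  rw [ProbabilityTheory.mgf, integral_rpowMeasure, ← h]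
  simp

lemma complexMGF_rpowMeasure {s : ℝ} {z : ℂ} (hs : 0 < s) (hz : z.re < 0) :
    ProbabilityTheory.complexMGF id (rpowMeasure s) z = (-z) ^ (-s : ℂ) * Real.Gamma s := by
  have hsub : Set.Iio 0 ⊆ interior (ProbabilityTheory.integrableExpSet id (rpowMeasure s)) :=
    interior_maximal (fun x hx => integrable_exp_mul_rpowMeasure hs hx) isOpen_Iio
  have hleft : AnalyticOnNhd ℂ (ProbabilityTheory.complexMGF id (rpowMeasure s))
      {z | z.re < 0} := fun z hz => ProbabilityTheory.analyticAt_complexMGF (hsub hz)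
  have hright : AnalyticOnNhd ℂ (fun z : ℂ => (-z) ^ (-s : ℂ) * Real.Gamma s) {z | z.re < 0} :=
    fun z hz => (analyticAt_id.neg.cpow analyticAt_const
      (.inl (by simpa using hz))).mul analyticAt_const
  have hreal : ∃ᶠ x : ℝ in 𝓝[≠] (-1), ProbabilityTheory.complexMGF id (rpowMeasure s) x =
      (-(x : ℂ)) ^ (-s : ℂ) * Real.Gamma s := by
    refine Eventually.frequently (nhdsWithin_le_nhds ?_)
    filter_upwards [Iio_mem_nhds (show (-1 : ℝ) < 0 by norm_num)] with x hx
    have hx' : 0 ≤ -x := (neg_pos.2 hx).le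
    rw [ProbabilityTheory.complexMGF_ofReal, mgf_rpowMeasure hs hx, Complex.ofReal_mul,
      Complex.ofReal_cpow hx']
    simp
  have hofReal : Tendsto ((↑) : ℝ → ℂ) (𝓝[≠] (-1)) (𝓝[≠] ((-1 : ℝ) : ℂ)) :=
    Complex.continuous_ofReal.continuousWithinAt.tendsto_nhdsWithin
      fun x hx => Complex.ofReal_injective.ne hx
  exact hleft.eqOn_of_preconnected_of_frequently_eq hright
    (convex_halfSpace_re_lt 0).isPreconnected (z₀ := ((-1 : ℝ) : ℂ)) (by simp)
    (hofReal.frequently hreal) hz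

instance (s : ℝ) : SFinite (rpowMeasure s) := by
  unfold rpowMeasure; infer_instance

lemma rpow_smul_rpow_smul_ae_eq (s c : ℝ) {E : Type*} [AddCommGroup E] [Module ℝ E]
    (g : ℝ → E) :
    (fun t => t ^ (s - 1) • t ^ c • g t) =ᵐ[volume.restrict (Set.Ioi 0)]
      fun t => t ^ (s + c - 1) • g t := by
  filter_upwards [ae_restrict_mem measurableSet_Ioi] with t ht
  rw [smul_smul, ← Real.rpow_add ht, sub_add_eq_add_sub]

lemma integral_rpow_smul_rpowMeasure (s c : ℝ) {E : Type*} [NormedAddCommGroup E]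
    [NormedSpace ℝ E] (g : ℝ → E) :
    ∫ t, t ^ c • g t ∂rpowMeasure s = ∫ t, g t ∂rpowMeasure (s + c) := by
  rw [integral_rpowMeasure, integral_rpowMeasure]
  exact integral_congr_ae (rpow_smul_rpow_smul_ae_eq s c g)

lemma integrable_rpow_smul_rpowMeasure_iff {s c : ℝ} {E : Type*} [NormedAddCommGroup E]
    [NormedSpace ℝ E] {g : ℝ → E} :
    Integrable (fun t => t ^ c • g t) (rpowMeasure s) ↔ Integrable g (rpowMeasure (s + c)) := by
  rw [integrable_rpowMeasure_iff, integrable_rpowMeasure_iff]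
  exact integrable_congr (rpow_smul_rpow_smul_ae_eq s c g)

lemma ae_rpowMeasure_pos (s : ℝ) : ∀ᵐ t ∂rpowMeasure s, 0 < t :=
  (withDensity_absolutelyContinuous _ _).ae_le (ae_restrict_mem measurableSet_Ioi)

lemma ofReal_mul_cpow {x : ℝ} (hx : 0 < x) {z : ℂ} (hz : z ≠ 0) (w : ℂ) :
    (x * z) ^ w = (x : ℂ) ^ w * z ^ w := by
  have hx' : (x : ℂ) ≠ 0 := by exact_mod_cast hx.ne'
  rw [Complex.cpow_def_of_ne_zero (mul_ne_zero hx' hz), Complex.cpow_def_of_ne_zero hx',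
    Complex.cpow_def_of_ne_zero hz, Complex.log_ofReal_mul hx hz, Complex.ofReal_log hx.le,
    add_mul, Complex.exp_add]

section Beta

variable {b s : ℝ} {h k : ℂ}

lemma integral_cexp_neg_add_mul_rpowMeasure (hs : 0 < s) (hh : 0 < h.re) (hk : 0 < k.re)
    {σ : ℝ} (hσ : 0 < σ) :
    ∫ τ : ℝ, Complex.exp (-h * τ) * Complex.exp (-k * τ * σ) ∂rpowMeasure s =
      (h + k * σ) ^ (-s : ℂ) * Real.Gamma s := by
  have hre : (-(h + k * σ)).re < 0 := by
    have := mul_pos hk hσ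
    simp only [Complex.neg_re, Complex.add_re, Complex.re_mul_ofReal]
    linarith
  rw [← neg_neg (h + k * σ), ← complexMGF_rpowMeasure hs hre, ProbabilityTheory.complexMGF]
  refine integral_congr_ae (.of_forall fun τ => ?_)
  simp only [id_eq, ← Complex.exp_add]
  ring_nf

lemma integral_cexp_neg_mul_mul_rpowMeasure (hb : 0 < b) (hk : 0 < k.re) {τ : ℝ} (hτ : 0 < τ) :
    ∫ σ : ℝ, Complex.exp (-h * τ) * Complex.exp (-k * τ * σ) ∂rpowMeasure b =
      k ^ (-b : ℂ) * Real.Gamma b * τ ^ (-b) • Complex.exp (-h * τ) := by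
  have hre : (-(τ * k)).re < 0 := by simpa using mul_pos hτ hk
  have hmgf := complexMGF_rpowMeasure hb hre
  rw [ProbabilityTheory.complexMGF, neg_neg] at hmgf
  have hcpow : (τ * k) ^ (-b : ℂ) = (τ ^ (-b) : ℝ) * k ^ (-b : ℂ) := by
    rw [ofReal_mul_cpow hτ, Complex.ofReal_cpow hτ.le, Complex.ofReal_neg]
    rintro rfl
    exact hk.ne rfl
  simp only [id_eq, neg_mul, hcpow] at hmgf
  simp only [integral_const_mul, neg_mul, mul_comm k, hmgf, Complex.real_smul]
  ring

lemma integrable_cexp_mul_cexp_prod (hb : 0 < b) (hbs : b < s) (hh : 0 < h.re) (hk : 0 < k.re) :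
    Integrable (fun p : ℝ × ℝ => Complex.exp (-h * p.1) * Complex.exp (-k * p.1 * p.2))
      ((rpowMeasure s).prod (rpowMeasure b)) := by
  rw [integrable_prod_iff (by fun_prop)]
  refine ⟨?_, ?_⟩
  · filter_upwards [ae_rpowMeasure_pos s] with τ hτ
    refine (integrable_cexp_mul_rpowMeasure hb ?_).const_mul _
    simpa using mul_pos hk hτ
  · have hint : Integrable (fun τ => k.re ^ (-b) * Real.Gamma b * τ ^ (-b) • Real.exp (-h.re * τ))
        (rpowMeasure s) :=
      (integrable_rpow_smul_rpowMeasure_iff.2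
        (integrable_exp_mul_rpowMeasure (by linarith) (by linarith))).const_mul _
    refine hint.congr ?_
    filter_upwards [ae_rpowMeasure_pos s] with τ hτ
    have hmgf := mgf_rpowMeasure hb (x := -(k.re * τ)) (by simpa using mul_pos hk hτ)
    rw [ProbabilityTheory.mgf, neg_neg, Real.mul_rpow hk.le hτ.le] at hmgf
    have hre : (-k * τ).re = -(k.re * τ) := by simp
    simp only [norm_mul, Complex.norm_exp, integral_const_mul, Complex.re_mul_ofReal, hre,
      Complex.neg_re, smul_eq_mul]
    simp only [id_eq] at hmgf
    rw [hmgf]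
    ring

theorem integral_add_mul_cpow_rpowMeasure (hb : 0 < b) (hbs : b < s) (hh : 0 < h.re)
    (hk : 0 < k.re) :
    ∫ σ : ℝ, (h + k * σ) ^ (-s : ℂ) ∂rpowMeasure b =
      k ^ (-b : ℂ) * h ^ (b - s : ℂ) * (Real.Gamma b * Real.Gamma (s - b) / Real.Gamma s) := by
  have hΓ : (Real.Gamma s : ℂ) ≠ 0 := by exact_mod_cast (Real.Gamma_pos_of_pos (hb.trans hbs)).ne'
  have hsb : 0 < s - b := by linarith
  have hinner : (∫ σ : ℝ, (h + k * σ) ^ (-s : ℂ) ∂rpowMeasure b) * Real.Gamma s =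
      ∫ σ : ℝ, ∫ τ : ℝ, Complex.exp (-h * τ) * Complex.exp (-k * τ * σ)
        ∂rpowMeasure s ∂rpowMeasure b := by
    rw [← integral_mul_const]
    refine integral_congr_ae ?_
    filter_upwards [ae_rpowMeasure_pos b] with σ hσ
    exact (integral_cexp_neg_add_mul_rpowMeasure (hb.trans hbs) hh hk hσ).symm
  have houter : ∫ τ : ℝ, ∫ σ : ℝ, Complex.exp (-h * τ) * Complex.exp (-k * τ * σ)
        ∂rpowMeasure b ∂rpowMeasure s =
      k ^ (-b : ℂ) * Real.Gamma b * (h ^ (b - s : ℂ) * Real.Gamma (s - b)) := by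
    have hmgf := complexMGF_rpowMeasure hsb (z := -h) (by simpa using hh)
    rw [ProbabilityTheory.complexMGF, sub_eq_add_neg s b, ← integral_rpow_smul_rpowMeasure,
      neg_neg] at hmgf
    rw [integral_congr_ae ((ae_rpowMeasure_pos s).mono fun τ hτ =>
      integral_cexp_neg_mul_mul_rpowMeasure hb hk hτ), integral_const_mul]
    simp only [id_eq] at hmgf
    rw [hmgf]
    push_cast
    ring_nf
  rw [← mul_left_inj' hΓ, hinner, ← integral_integral_swap
    (integrable_cexp_mul_cexp_prod hb hbs hh hk), houter]
  field_simp

theorem integrable_add_mul_cpow_rpowMeasure (hb : 0 < b) (hbs : b < s) (hh : 0 < h.re)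
    (hk : 0 < k.re) :
    Integrable (fun σ : ℝ => (h + k * σ) ^ (-s : ℂ)) (rpowMeasure b) := by
  have hΓ : (Real.Gamma s : ℂ) ≠ 0 := by exact_mod_cast (Real.Gamma_pos_of_pos (hb.trans hbs)).ne'
  rw [← integrable_mul_const_iff (isUnit_iff_ne_zero.2 hΓ)]
  refine (integrable_cexp_mul_cexp_prod hb hbs hh hk).integral_prod_right.congr ?_
  filter_upwards [ae_rpowMeasure_pos b] with σ hσ
  exact integral_cexp_neg_add_mul_rpowMeasure (hb.trans hbs) hh hk hσ

end Beta

/-! ### Oscillating weights and their moments -/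

/-- The weight `π⁻¹ Im (1 + e ^ (-iψ) σ) ^ (-N)` on the half-line. It changes sign about `Nψ / π`
times; the factor `π⁻¹` normalizes its moments. -/
noncomputable def oscillatingWeight (ψ : ℝ) (N : ℕ) (σ : ℝ) : ℝ :=
  π⁻¹ * (((1 + Complex.exp (-(ψ * Complex.I)) * σ) ^ N)⁻¹).im

section OscillatingWeight

variable {b ψ : ℝ} {n : ℕ}

lemma re_cexp_half_mul_I_pos (hψ : |ψ| < π) : 0 < (Complex.exp (ψ / 2 * Complex.I)).re := by
  have := abs_lt.1 hψ
  rw [show (ψ / 2 : ℂ) = (ψ / 2 : ℝ) by push_cast; rfl, Complex.exp_ofReal_mul_I_re]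
  exact Real.cos_pos_of_mem_Ioo ⟨by linarith, by linarith⟩

lemma cexp_half_mul_I_cpow (hψ : |ψ| < π) (w : ℂ) :
    Complex.exp (ψ / 2 * Complex.I) ^ w = Complex.exp (ψ / 2 * Complex.I * w) := by
  have := abs_lt.1 hψ
  rw [Complex.cpow_def_of_ne_zero (Complex.exp_ne_zero _), Complex.log_exp] <;>
    simp <;> linarith

/-- Rotating by half the angle moves the pole into the range of the Laplace transform: both
`e ^ (iψ/2)` and `e ^ (-iψ/2)` have positive real part. -/
lemma inv_one_add_cexp_mul_pow (ψ σ : ℝ) (N : ℕ) :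
    ((1 + Complex.exp (-(ψ * Complex.I)) * σ) ^ N)⁻¹ =
      Complex.exp (ψ / 2 * Complex.I) ^ N * (Complex.exp (ψ / 2 * Complex.I) +
        Complex.exp ((-ψ : ℝ) / 2 * Complex.I) * σ) ^ (-(N : ℝ) : ℂ) := by
  have hsplit : Complex.exp ((-ψ : ℝ) / 2 * Complex.I) =
      Complex.exp (ψ / 2 * Complex.I) * Complex.exp (-(ψ * Complex.I)) := by
    rw [← Complex.exp_add]
    push_cast
    ring_nf
  have hne : Complex.exp (ψ / 2 * Complex.I) ^ N ≠ 0 := pow_ne_zero _ (Complex.exp_ne_zero _)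
  rw [Complex.ofReal_natCast, Complex.cpow_neg, Complex.cpow_natCast, hsplit, mul_assoc,
    ← mul_one_add, mul_pow, mul_inv, mul_inv_cancel_left₀ hne]

lemma integrable_inv_one_add_cexp_mul_pow {N : ℕ} (hb : 0 < b) (hbN : b < N) (hψ : |ψ| < π) :
    Integrable (fun σ : ℝ => ((1 + Complex.exp (-(ψ * Complex.I)) * σ) ^ N)⁻¹)
      (rpowMeasure b) := by
  simp only [inv_one_add_cexp_mul_pow]
  exact (integrable_add_mul_cpow_rpowMeasure hb hbN (re_cexp_half_mul_I_pos hψ)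
    (re_cexp_half_mul_I_pos (by rwa [abs_neg]))).const_mul _

lemma integral_inv_one_add_cexp_mul_pow {N : ℕ} (hb : 0 < b) (hbN : b < N) (hψ : |ψ| < π) :
    ∫ σ : ℝ, ((1 + Complex.exp (-(ψ * Complex.I)) * σ) ^ N)⁻¹ ∂rpowMeasure b =
      (Real.Gamma b * Real.Gamma (N - b) / Real.Gamma N : ℝ) *
        Complex.exp ((b * ψ : ℝ) * Complex.I) := by
  have hneg : |-ψ| < π := by rwa [abs_neg]
  have hphase : Complex.exp (ψ / 2 * Complex.I) ^ N * (Complex.exp ((-ψ : ℝ) / 2 * Complex.I *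
      (-b : ℂ)) * Complex.exp (ψ / 2 * Complex.I * (b - (N : ℝ)))) =
      Complex.exp ((b * ψ : ℝ) * Complex.I) := by
    rw [← Complex.exp_nat_mul, ← Complex.exp_add, ← Complex.exp_add]
    push_cast
    ring_nf
  simp only [inv_one_add_cexp_mul_pow]
  rw [integral_const_mul, integral_add_mul_cpow_rpowMeasure hb hbN (re_cexp_half_mul_I_pos hψ)
    (re_cexp_half_mul_I_pos hneg), cexp_half_mul_I_cpow hψ, cexp_half_mul_I_cpow hneg, ← hphase]
  push_cast
  ring

lemma integrable_oscillatingWeight (hb : 0 < b) (hbn : b < n + 1) (hψ : |ψ| < π) :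
    Integrable (oscillatingWeight ψ (n + 1)) (rpowMeasure b) :=
  (integrable_inv_one_add_cexp_mul_pow hb (by exact_mod_cast hbn) hψ).im.const_mul _

lemma integral_oscillatingWeight (hb : 0 < b) (hbn : b < n + 1) (hψ : |ψ| < π) :
    ∫ σ, oscillatingWeight ψ (n + 1) σ ∂rpowMeasure b =
      Real.sin (b * ψ) * (Real.Gamma b * Real.Gamma (n + 1 - b)) / (π * n.factorial) := by
  have hbn' : b < (n + 1 : ℕ) := by exact_mod_cast hbn
  have him := integral_im (𝕜 := ℂ) (integrable_inv_one_add_cexp_mul_pow hb hbn' hψ)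
  rw [integral_inv_one_add_cexp_mul_pow hb hbn' hψ, RCLike.im_eq_complex_im,
    Complex.im_ofReal_mul, Complex.exp_ofReal_mul_I_im] at him
  simp only [oscillatingWeight, integral_const_mul]
  refine (congrArg (π⁻¹ * ·) him).trans ?_
  push_cast
  rw [Real.Gamma_nat_eq_factorial]
  field_simp

end OscillatingWeight

lemma sin_mul_Gamma_mul_Gamma {b : ℝ} (hs : Real.sin (π * b) ≠ 0) (n : ℕ) :
    Real.sin (π * b) * (Real.Gamma b * Real.Gamma (n + 1 - b)) =
      π * (n.factorial * pochhammerRatio (-b) n) := by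
  induction n with
  | zero =>
    simp only [Nat.cast_zero, zero_add, Real.Gamma_mul_Gamma_one_sub]
    simp only [Nat.factorial_zero, Nat.cast_one, pochhammerRatio, range_zero, prod_empty, mul_one]
    field_simp
  | succ n ih =>
    have hne : (n : ℝ) + 1 - b ≠ 0 := by
      intro h0
      refine hs ?_
      rw [show b = ((n + 1 : ℕ) : ℝ) by push_cast; linarith, mul_comm]
      exact Real.sin_nat_mul_pi _
    rw [show ((n + 1 : ℕ) : ℝ) + 1 - b = (n + 1 - b) + 1 by push_cast; ring,
      Real.Gamma_add_one hne, pochhammerRatio_succ, Nat.factorial_succ]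
    push_cast
    field_simp
    linear_combination ((n : ℝ) + 1 - b) * ih

lemma sin_mul_Gamma_mul_Gamma_of_lt {b : ℝ} {n : ℕ} (hb : 0 < b) (hbn : b < n + 1) :
    Real.sin (π * b) * (Real.Gamma b * Real.Gamma (n + 1 - b)) =
      π * (n.factorial * pochhammerRatio (-b) n) := by
  by_cases hs : Real.sin (π * b) = 0
  · obtain ⟨k, hk⟩ := Real.sin_eq_zero_iff.1 hs
    obtain rfl : (k : ℝ) = b := mul_left_cancel₀ Real.pi_ne_zero (by rw [mul_comm, hk])
    have hk0 : 0 < k := by exact_mod_cast hb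
    lift k to ℕ using hk0.le
    rw [Int.cast_natCast] at hbn ⊢
    have hkn : k < n + 1 := by exact_mod_cast hbn
    have hk1 : k ≠ 0 := by lia
    rw [pochhammerRatio_neg_natCast_of_le hk1 (by lia)]
    simpa using Or.inl hs
  · exact sin_mul_Gamma_mul_Gamma hs n

/-- The sequence `Y 0, …, Y D` consists of the moments of the function `u` with respect to the
signed measure `w dμ`. -/
def HasMoments {Ω : Type*} [MeasurableSpace Ω] (μ : Measure Ω) (w u : Ω → ℝ) (Y : ℕ → ℝ)
    (D : ℕ) : Prop :=
  ∀ j ≤ D, Integrable (fun ω => w ω * u ω ^ j) μ ∧ ∫ ω, w ω * u ω ^ j ∂μ = Y j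

namespace HasMoments

variable {Ω : Type*} [MeasurableSpace Ω] {μ : Measure Ω} {w u : Ω → ℝ} {Y : ℕ → ℝ} {D : ℕ}

lemma mul_const_sub (h : HasMoments μ w u Y (D + 1)) (c : ℝ) :
    HasMoments μ (fun ω => w ω * (c - u ω)) u (fun j => c * Y j - Y (j + 1)) D := by
  intro j hj
  obtain ⟨hint, hmom⟩ := h j (by lia)
  obtain ⟨hint', hmom'⟩ := h (j + 1) (by lia)
  have hsplit : (fun ω => w ω * (c - u ω) * u ω ^ j) =
      fun ω => c * (w ω * u ω ^ j) - w ω * u ω ^ (j + 1) := by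
    ext ω
    ring
  rw [hsplit, integral_sub (hint.const_mul c) hint', integral_const_mul, hmom, hmom']
  exact ⟨(hint.const_mul c).sub hint', rfl⟩

end HasMoments

lemma sin_mul_pi_div_sub_pi {a : ℝ} (ha : a ≠ 0) (i : ℕ) :
    Real.sin (a * (i + 1) * (π / a - π)) = (-1) ^ i * Real.sin (π * (a * (i + 1))) := by
  rw [show a * ((i : ℝ) + 1) * (π / a - π) = ((i + 1 : ℕ) : ℝ) * π - π * (a * (i + 1)) by
    push_cast; field_simp, Real.sin_nat_mul_pi_sub]
  ring

section TableLawMoments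

variable {a : ℝ} {n i : ℕ}

lemma pi_div_sub_pi_mem_Ioo (ha : 1 / 2 < a) (ha' : a < 1) : π / a - π ∈ Set.Ioo 0 π := by
  have hπ := Real.pi_pos
  constructor
  · rw [sub_pos, lt_div_iff₀ (by linarith)]
    nlinarith
  · rw [sub_lt_iff_lt_add, div_lt_iff₀ (by linarith)]
    nlinarith

lemma abs_pi_div_sub_pi_lt (ha : 1 / 2 < a) (ha' : a < 1) : |π / a - π| < π := by
  obtain ⟨h0, hπ⟩ := pi_div_sub_pi_mem_Ioo ha ha'
  rwa [abs_of_pos h0]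

/-- With the angle `π / a - π` the reflection formula cancels the phase up to sign. -/
lemma integral_oscillatingWeight_pi_div_sub_pi (ha : 1 / 2 < a) (ha' : a < 1)
    (hi : a * (i + 1) < n + 1) :
    ∫ σ, oscillatingWeight (π / a - π) (n + 1) σ ∂rpowMeasure (a * (i + 1)) =
      (-1) ^ i * pochhammerRatio (-(a * (i + 1))) n := by
  have hpos : 0 < a * ((i : ℝ) + 1) := mul_pos (by linarith) (by positivity)
  rw [integral_oscillatingWeight hpos hi (abs_pi_div_sub_pi_lt ha ha'),
    sin_mul_pi_div_sub_pi (by linarith), mul_assoc, sin_mul_Gamma_mul_Gamma_of_lt hpos hi]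
  field_simp

lemma oscillatingWeight_mul_one_add_pow_ae_eq (a ψ : ℝ) (N j : ℕ) :
    (fun σ => oscillatingWeight ψ N σ * (1 + σ ^ a) ^ j) =ᵐ[rpowMeasure a]
      fun σ => ∑ i ∈ range (j + 1), (j.choose i : ℝ) *
        (σ ^ (a * i) • oscillatingWeight ψ N σ) := by
  filter_upwards [ae_rpowMeasure_pos a] with σ hσ
  rw [add_comm (1 : ℝ), add_pow, mul_sum]
  refine sum_congr rfl fun i _ => ?_
  rw [Real.rpow_mul hσ.le, Real.rpow_natCast, one_pow, smul_eq_mul]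
  ring

theorem hasMoments_tableLaw (ha : 1 / 2 < a) (ha' : a < 1) {D : ℕ}
    (hD : a * (D + 1) < n + 1) :
    HasMoments (rpowMeasure a) (oscillatingWeight (π / a - π) (n + 1)) (fun σ => 1 + σ ^ a)
      (tableLaw a n) D := by
  intro j hj
  have hexp (i : ℕ) : a + a * i = a * (i + 1) := by ring
  have hlt {i : ℕ} (hi : i ∈ range (j + 1)) : a * (i + 1) < n + 1 := by
    have : (i : ℝ) ≤ D := by exact_mod_cast (mem_range_succ_iff.1 hi).trans hj
    exact lt_of_le_of_lt (by gcongr) hD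
  have hint (i : ℕ) (hi : i ∈ range (j + 1)) : Integrable (fun σ => (j.choose i : ℝ) *
      (σ ^ (a * i) • oscillatingWeight (π / a - π) (n + 1) σ)) (rpowMeasure a) := by
    refine (integrable_rpow_smul_rpowMeasure_iff.2 ?_).const_mul _
    rw [hexp]
    exact integrable_oscillatingWeight (mul_pos (by linarith) (by positivity)) (hlt hi)
      (abs_pi_div_sub_pi_lt ha ha')
  have hae := oscillatingWeight_mul_one_add_pow_ae_eq a (π / a - π) (n + 1) j
  refine ⟨(integrable_congr hae).2 (integrable_finsetSum _ hint), ?_⟩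
  rw [integral_congr_ae hae, integral_finsetSum _ hint, tableLaw_eq_sum_pochhammerRatio]
  refine sum_congr rfl fun i hi => ?_
  rw [integral_const_mul, integral_rpow_smul_rpowMeasure, hexp,
    integral_oscillatingWeight_pi_div_sub_pi ha ha' (hlt hi)]
  ring

end TableLawMoments

/-! ### Sign changes -/

lemma sin_mul_prod_nonneg {m : ℕ} {y : ℝ} {c : ℕ → ℝ} (hy : 0 ≤ y) (hym : y ≤ (m + 1) * π)
    (hc : ∀ k < m, 0 ≤ c k * ((k + 1) * π - y)) :
    0 ≤ Real.sin y * ∏ k ∈ range m, c k := by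
  induction m with
  | zero => simpa using Real.sin_nonneg_of_nonneg_of_le_pi hy (by simpa using hym)
  | succ m ih =>
    rcases lt_trichotomy y ((m + 1) * π) with hlt | heq | hgt
    · have hcm : 0 ≤ c m := nonneg_of_mul_nonneg_left (hc m (by lia)) (by linarith)
      rw [prod_range_succ, ← mul_assoc]
      exact mul_nonneg (ih hlt.le fun k hk => hc k (by lia)) hcm
    · have hsin : Real.sin y = 0 := by
        rw [heq, show ((m : ℝ) + 1) * π = (m + 1 : ℕ) * π by push_cast; ring,
          Real.sin_nat_mul_pi]
      rw [hsin, zero_mul]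
    · have hshift : (-1) ^ (m + 1) * Real.sin y = Real.sin (y - (m + 1 : ℕ) * π) :=
        (Real.sin_sub_nat_mul_pi _ _).symm
      have hneg (k : ℕ) (hk : k ∈ range (m + 1)) : 0 ≤ -c k := by
        have hkm : ((k : ℝ) + 1) * π ≤ (m + 1) * π := by
          gcongr
          exact mem_range_succ_iff.1 hk
        have := hc k (mem_range.1 hk)
        nlinarith
      have hprod : ∏ k ∈ range (m + 1), c k = (-1) ^ (m + 1) * ∏ k ∈ range (m + 1), -c k := by
        rw [prod_neg, card_range, ← mul_assoc, ← mul_pow]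
        simp
      rw [hprod, ← mul_assoc, mul_comm (Real.sin y), hshift]
      push_cast at hym ⊢
      exact mul_nonneg (Real.sin_nonneg_of_nonneg_of_le_pi (by linarith) (by linarith))
        (prod_nonneg hneg)

/-- The modulus of the point of the ray `e ^ (-iψ) ℝ₊` whose translate by `1` has argument
`-ϑ`. -/
noncomputable def sinRatio (ψ ϑ : ℝ) : ℝ :=
  Real.sin ϑ / Real.sin (ψ - ϑ)

section SinRatio

variable {ψ ϑ σ : ℝ}

lemma sin_sub_pos (hψ : ψ ≤ π) (hϑ : ϑ ∈ Set.Ioo 0 ψ) : 0 < Real.sin (ψ - ϑ) :=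
  Real.sin_pos_of_pos_of_lt_pi (by linarith [hϑ.2]) (by linarith [hϑ.1])

lemma sinRatio_pos (hψ : ψ ≤ π) (hϑ : ϑ ∈ Set.Ioo 0 ψ) : 0 < sinRatio ψ ϑ :=
  div_pos (Real.sin_pos_of_pos_of_lt_pi hϑ.1 (by linarith [hϑ.2])) (sin_sub_pos hψ hϑ)

lemma monotoneOn_sinRatio (hψ : ψ ∈ Set.Ioo 0 π) :
    MonotoneOn (sinRatio ψ) (Set.Ioo 0 ψ) := by
  intro x hx y hy hxy
  have hdiff : Real.sin y * Real.sin (ψ - x) - Real.sin x * Real.sin (ψ - y) =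
      Real.sin ψ * Real.sin (y - x) := by
    rw [Real.sin_sub, Real.sin_sub, Real.sin_sub]
    ring
  have hnonneg : 0 ≤ Real.sin ψ * Real.sin (y - x) :=
    mul_nonneg (Real.sin_nonneg_of_nonneg_of_le_pi hψ.1.le hψ.2.le)
      (Real.sin_nonneg_of_nonneg_of_le_pi (by linarith) (by linarith [hx.1, hy.2, hψ.2]))
  rw [sinRatio, sinRatio, div_le_div_iff₀ (sin_sub_pos hψ.2.le hx) (sin_sub_pos hψ.2.le hy)]
  linarith

lemma exists_sinRatio_eq (hψ : ψ ∈ Set.Ioo 0 π) (hσ : 0 < σ) :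
    ∃ ϑ ∈ Set.Ioo 0 ψ, sinRatio ψ ϑ = σ := by
  have hsin : 0 < Real.sin ψ := Real.sin_pos_of_mem_Ioo hψ
  obtain ⟨ϑ, hϑ, hroot⟩ := intermediate_value_Ioo hψ.1.le
    (f := fun ϑ => Real.sin ϑ - σ * Real.sin (ψ - ϑ)) (by fun_prop)
    (show (0 : ℝ) ∈ _ by simpa using ⟨mul_pos hσ hsin, hsin⟩)
  exact ⟨ϑ, hϑ, (div_eq_iff (sin_sub_pos hψ.2.le hϑ).ne').2 (sub_eq_zero.1 hroot)⟩

lemma one_add_cexp_mul_sinRatio (hψ : ψ ∈ Set.Ioo 0 π) (hϑ : ϑ ∈ Set.Ioo 0 ψ) :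
    1 + Complex.exp (-(ψ * Complex.I)) * sinRatio ψ ϑ =
      (Real.sin ψ / Real.sin (ψ - ϑ) : ℝ) * Complex.exp ((-ϑ : ℝ) * Complex.I) := by
  have hsin := (sin_sub_pos hψ.2.le hϑ).ne'
  rw [show -((ψ : ℂ) * Complex.I) = (-ψ : ℝ) * Complex.I by push_cast; ring, sinRatio]
  apply Complex.ext
  · rw [Complex.add_re, Complex.re_mul_ofReal, Complex.re_ofReal_mul, Complex.one_re,
      Complex.exp_ofReal_mul_I_re, Complex.exp_ofReal_mul_I_re, Real.cos_neg, Real.cos_neg]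
    field_simp
    rw [Real.sin_sub]
    ring
  · rw [Complex.add_im, Complex.im_mul_ofReal, Complex.im_ofReal_mul, Complex.one_im,
      Complex.exp_ofReal_mul_I_im, Complex.exp_ofReal_mul_I_im, Real.sin_neg, Real.sin_neg]
    field_simp
    ring

lemma oscillatingWeight_sinRatio (hψ : ψ ∈ Set.Ioo 0 π) (hϑ : ϑ ∈ Set.Ioo 0 ψ) (N : ℕ) :
    oscillatingWeight ψ N (sinRatio ψ ϑ) =
      π⁻¹ * ((Real.sin ψ / Real.sin (ψ - ϑ)) ^ N)⁻¹ * Real.sin (N * ϑ) := by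
  rw [oscillatingWeight, one_add_cexp_mul_sinRatio hψ hϑ, mul_pow, mul_inv, ← Complex.exp_nat_mul,
    ← Complex.exp_neg, ← Complex.ofReal_pow, ← Complex.ofReal_inv, Complex.im_ofReal_mul,
    show -((N : ℂ) * ((-ϑ : ℝ) * Complex.I)) = (N * ϑ : ℝ) * Complex.I by push_cast; ring,
    Complex.exp_ofReal_mul_I_im, mul_assoc]

lemma succ_mul_pi_div_mem_Ioo {m N k : ℕ} (hN : N ≠ 0) (hm : m * π < N * ψ) (hk : k < m) :
    (k + 1) * π / N ∈ Set.Ioo 0 ψ := by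
  have hN' : (0 : ℝ) < N := by positivity
  have hkm : ((k : ℝ) + 1) * π ≤ m * π := by gcongr; exact_mod_cast hk
  exact ⟨by positivity, by rw [div_lt_iff₀ hN']; linarith⟩

theorem oscillatingWeight_mul_prod_nonneg {m N : ℕ} (hψ : ψ ∈ Set.Ioo 0 π) (hN : N ≠ 0)
    (hm : m * π < N * ψ) (hm' : N * ψ ≤ (m + 1) * π) {f : ℝ → ℝ}
    (hf : MonotoneOn f (Set.Ioi 0)) (hσ : 0 < σ) :
    0 ≤ oscillatingWeight ψ N σ *
      ∏ k ∈ range m, (f (sinRatio ψ ((k + 1) * π / N)) - f σ) := by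
  have hN' : (0 : ℝ) < N := by positivity
  obtain ⟨ϑ, hϑ, rfl⟩ := exists_sinRatio_eq hψ hσ
  have hmono : MonotoneOn (f ∘ sinRatio ψ) (Set.Ioo 0 ψ) :=
    hf.comp (monotoneOn_sinRatio hψ) fun x hx => sinRatio_pos hψ.2.le hx
  have hsign : 0 ≤ Real.sin (N * ϑ) *
      ∏ k ∈ range m, (f (sinRatio ψ ((k + 1) * π / N)) - f (sinRatio ψ ϑ)) := by
    have hϑN : N * ϑ ≤ N * ψ := by gcongr; exact hϑ.2.le
    refine sin_mul_prod_nonneg (mul_nonneg hN'.le hϑ.1.le) (hϑN.trans hm') fun k hk => ?_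
    have hk : (k + 1) * π / N ∈ Set.Ioo 0 ψ := succ_mul_pi_div_mem_Ioo hN hm hk
    have hscale : (k + 1) * π - N * ϑ = N * ((k + 1) * π / N - ϑ) := by field_simp
    rw [hscale]
    rcases le_total ((k + 1) * π / N) ϑ with h | h
    · exact mul_nonneg_of_nonpos_of_nonpos (sub_nonpos.2 (hmono hk hϑ h))
        (mul_nonpos_of_nonneg_of_nonpos hN'.le (sub_nonpos.2 h))
    · exact mul_nonneg (sub_nonneg.2 (hmono hϑ hk h)) (mul_nonneg hN'.le (sub_nonneg.2 h))
  rw [oscillatingWeight_sinRatio hψ hϑ, mul_assoc]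
  have hsin := Real.sin_pos_of_mem_Ioo hψ
  have hsin' := sin_sub_pos hψ.2.le hϑ
  exact mul_nonneg (by positivity) hsign

end SinRatio

/-- The sequence `Y` is supported in `{0, …, n}` and takes, in this order, a negative, a positive,
a negative and a positive value. The count of three sign changes is what the variation-diminishing
argument preserves. -/
structure AlternatesUpTo (Y : ℕ → ℝ) (n : ℕ) : Prop where
  eq_zero : ∀ j, n < j → Y j = 0
  exists_signs : ∃ i₁ i₂ i₃ i₄, i₁ < i₂ ∧ i₂ < i₃ ∧ i₃ < i₄ ∧ i₄ ≤ n ∧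
    Y i₁ < 0 ∧ 0 < Y i₂ ∧ Y i₃ < 0 ∧ 0 < Y i₄

lemma exists_mul_sub_succ_neg {Y : ℕ → ℝ} {c : ℝ} (hc : 0 < c) {i k : ℕ} (hik : i < k)
    (hi : Y i < 0) (hk : 0 ≤ Y k) : ∃ j, i ≤ j ∧ j < k ∧ c * Y j - Y (j + 1) < 0 := by
  induction k, hik using Nat.le_induction with
  | base => exact ⟨i, le_rfl, by lia, by nlinarith⟩
  | succ k hik ih =>
    rcases lt_or_ge (Y k) 0 with hneg | hnonneg
    · exact ⟨k, by lia, by lia, by nlinarith⟩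
    · obtain ⟨j, hij, hjk, hj⟩ := ih hnonneg
      exact ⟨j, hij, by lia, hj⟩

lemma exists_mul_sub_succ_pos {Y : ℕ → ℝ} {c : ℝ} (hc : 0 < c) {i k : ℕ} (hik : i < k)
    (hi : 0 < Y i) (hk : Y k ≤ 0) : ∃ j, i ≤ j ∧ j < k ∧ 0 < c * Y j - Y (j + 1) := by
  obtain ⟨j, hij, hjk, hj⟩ := exists_mul_sub_succ_neg (Y := fun j => -Y j) hc hik
    (neg_neg_iff_pos.2 hi) (neg_nonneg.2 hk)
  exact ⟨j, hij, hjk, by linarith⟩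

lemma AlternatesUpTo.mul_sub_succ {Y : ℕ → ℝ} {n : ℕ} (hY : AlternatesUpTo Y n) {c : ℝ}
    (hc : 0 < c) : AlternatesUpTo (fun j => c * Y j - Y (j + 1)) n := by
  obtain ⟨i₁, i₂, i₃, i₄, h₁₂, h₂₃, h₃₄, h₄, hi₁, hi₂, hi₃, hi₄⟩ := hY.exists_signs
  obtain ⟨j₁, _, hj₁, hneg₁⟩ := exists_mul_sub_succ_neg hc h₁₂ hi₁ hi₂.le
  obtain ⟨j₂, hj₂, hj₂', hpos₂⟩ := exists_mul_sub_succ_pos hc h₂₃ hi₂ hi₃.le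
  obtain ⟨j₃, hj₃, hj₃', hneg₃⟩ := exists_mul_sub_succ_neg hc h₃₄ hi₃ hi₄.le
  obtain ⟨j₄, hj₄, hj₄', hpos₄⟩ :=
    exists_mul_sub_succ_pos hc (Nat.lt_succ_of_le h₄) hi₄ (hY.eq_zero _ n.lt_succ_self).le
  refine ⟨fun j hj => ?_, j₁, j₂, j₃, j₄, by lia, by lia, by lia, by lia, hneg₁, hpos₂,
    hneg₃, hpos₄⟩
  simp only [hY.eq_zero j hj, hY.eq_zero (j + 1) (by lia), mul_zero, sub_zero]

/-- Each of the `m` factors `c k - u` uses up one moment and none of the sign changes. -/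
theorem HasMoments.not_alternatesUpTo {Ω : Type*} [MeasurableSpace Ω] {μ : Measure Ω}
    {w u : Ω → ℝ} {Y c : ℕ → ℝ} {n D m : ℕ} (h : HasMoments μ w u Y (D + m)) (hn : n ≤ D + 3)
    (hc : ∀ k < m, 0 < c k) (hu : ∀ᵐ ω ∂μ, 0 ≤ u ω)
    (hw : ∀ᵐ ω ∂μ, 0 ≤ w ω * ∏ k ∈ range m, (c k - u ω)) : ¬ AlternatesUpTo Y n := by
  intro hY
  induction m generalizing w Y with
  | zero =>
    obtain ⟨i, i₂, i₃, i₄, h₁₂, h₂₃, h₃₄, h₄, hi, -⟩ := hY.exists_signs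
    rw [← (h i (by lia)).2] at hi
    refine hi.not_ge (integral_nonneg_of_ae ?_)
    filter_upwards [hu, hw] with ω huω hwω
    simp only [range_zero, prod_empty, mul_one] at hwω
    exact mul_nonneg hwω (pow_nonneg huω i)
  | succ m ih =>
    refine ih (h.mul_const_sub (c m)) (fun k hk => hc k (by lia)) ?_
      (hY.mul_sub_succ (hc m (by lia)))
    filter_upwards [hw] with ω hω
    rwa [prod_range_succ, mul_comm (∏ k ∈ range m, _), ← mul_assoc] at hω

section NotLogConcave

variable {q : ℕ → ℝ} {n : ℕ}

lemma div_lt_div_of_mul_lt_sq {k : ℕ} (hpos : ∀ j ≤ k, 0 < q j) (h₀ : q 0 * q 2 < q 1 ^ 2)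
    (hlc : ∀ j < k, q j * q (j + 2) ≤ q (j + 1) ^ 2) (hk : 1 ≤ k) :
    q (k + 1) / q k < q 1 / q 0 := by
  induction k, hk using Nat.le_induction with
  | base =>
    rw [div_lt_div_iff₀ (hpos 1 le_rfl) (hpos 0 (by lia))]
    linarith
  | succ k _ ih =>
    refine lt_of_le_of_lt ?_ (ih (fun j hj => hpos j (by lia)) fun j hj => hlc j (by lia))
    rw [div_le_div_iff₀ (hpos (k + 1) le_rfl) (hpos k (by lia))]
    linarith [hlc k (by lia)]

lemma exists_alternatesUpTo_mul_sub_succ (hpos : ∀ j ≤ n, 0 < q j)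
    (hzero : ∀ j, n < j → q j = 0) (h₀ : q 0 * q 2 < q 1 ^ 2)
    (hlc : ∃ j, q (j + 1) ^ 2 < q j * q (j + 2)) :
    ∃ v > 0, AlternatesUpTo (fun j => v * q j - q (j + 1)) n := by
  obtain ⟨k, hk, hmin⟩ : ∃ k, q (k + 1) ^ 2 < q k * q (k + 2) ∧
      ∀ j < k, q j * q (j + 2) ≤ q (j + 1) ^ 2 := by
    classical
    exact ⟨Nat.find hlc, Nat.find_spec hlc, fun j hj => not_lt.1 (Nat.find_min hlc hj)⟩
  have hk₀ : 1 ≤ k := by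
    rcases k.eq_zero_or_pos with rfl | hk'
    · exact absurd h₀ hk.not_gt
    · exact hk'
  have hkn : k + 2 ≤ n := by
    by_contra! hlt
    rw [hzero (k + 2) hlt, mul_zero] at hk
    exact hk.not_ge (sq_nonneg _)
  have h_lt_first : q (k + 1) / q k < q 1 / q 0 :=
    div_lt_div_of_mul_lt_sq (fun j hj => hpos j (by lia)) h₀ hmin hk₀
  have h_lt_next : q (k + 1) / q k < q (k + 2) / q (k + 1) := by
    rw [div_lt_div_iff₀ (hpos k (by lia)) (hpos (k + 1) (by lia))]
    linarith
  obtain ⟨v, hv, hv'⟩ := exists_between (lt_min h_lt_first h_lt_next)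
  have hv₀ : 0 < v := (div_pos (hpos _ (by lia)) (hpos _ (by lia))).trans hv
  rw [lt_min_iff, lt_div_iff₀ (hpos 0 (by lia)), lt_div_iff₀ (hpos _ (by lia))] at hv'
  rw [div_lt_iff₀ (hpos k (by lia))] at hv
  refine ⟨v, hv₀, fun j hj => ?_, 0, k, k + 1, n, by lia, by lia, by lia, le_rfl,
    by linarith, by linarith, by linarith, ?_⟩
  · simp only [hzero j hj, hzero (j + 1) (by lia), mul_zero, sub_zero]
  · simp only [hzero (n + 1) n.lt_succ_self, sub_zero]
    exact mul_pos hv₀ (hpos n le_rfl)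

end NotLogConcave

lemma exists_nat_mul_lt_le_add_one_mul {x c : ℝ} (hx : 0 < x) (hc : 0 < c) :
    ∃ m : ℕ, m * c < x ∧ x ≤ (m + 1) * c := by
  have hceil : ⌈x / c⌉₊ - 1 + 1 = ⌈x / c⌉₊ := Nat.sub_add_cancel (Nat.ceil_pos.2 (div_pos hx hc))
  refine ⟨⌈x / c⌉₊ - 1, (lt_div_iff₀ hc).1 (Nat.lt_ceil.1 (by lia)), (div_le_iff₀ hc).1 ?_⟩
  exact_mod_cast hceil.symm ▸ Nat.le_ceil (x / c)

section TableLaw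

variable {a : ℝ} {n : ℕ}

/-- The square `(v - u) ^ 2` and the `m` nodes at which the oscillating weight changes sign turn
the moment functional of `tableLaw a n` into a nonnegative one. -/
lemma not_alternatesUpTo_tableLaw_mul_sub_succ (ha : 1 / 2 < a) (ha' : a < 1) {v : ℝ}
    (hv : 0 < v) : ¬ AlternatesUpTo (fun j => v * tableLaw a n j - tableLaw a n (j + 1)) n := by
  intro halt
  obtain ⟨D, rfl⟩ : ∃ D, n = D + 3 := by
    obtain ⟨i₁, i₂, i₃, i₄, h₁₂, h₂₃, h₃₄, h₄, -⟩ := halt.exists_signs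
    exact ⟨n - 3, by lia⟩
  set N : ℕ := D + 3 + 1 with hN
  have hN₀ : N ≠ 0 := by lia
  set ψ := π / a - π with hψ_def
  have hψ : ψ ∈ Set.Ioo 0 π := pi_div_sub_pi_mem_Ioo ha ha'
  obtain ⟨m, hm, hm'⟩ := exists_nat_mul_lt_le_add_one_mul
    (mul_pos (by positivity : 0 < (N : ℝ)) hψ.1) Real.pi_pos
  have hmoments : HasMoments (rpowMeasure a) (oscillatingWeight ψ N) (fun σ => 1 + σ ^ a)
      (tableLaw a (D + 3)) (D + m + 1 + 1) := by
    have ha₀ : 0 < a := by linarith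
    have hNa : N * ψ = (N / a - N) * π := by rw [hψ_def]; field_simp
    have hmN : m < N / a - N := lt_of_mul_lt_mul_right (hNa ▸ hm) Real.pi_pos.le
    rw [lt_sub_iff_add_lt, lt_div_iff₀ ha₀, hN] at hmN
    refine hasMoments_tableLaw ha ha' ?_
    push_cast at hmN ⊢
    linarith
  have hmono : MonotoneOn (fun σ : ℝ => 1 + σ ^ a) (Set.Ioi 0) := fun x hx y _ hxy =>
    add_le_add_right (Real.rpow_le_rpow (le_of_lt hx) hxy (by linarith)) 1
  refine HasMoments.not_alternatesUpTo
    (c := fun k => 1 + sinRatio ψ ((k + 1) * π / N) ^ a)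
    ((hmoments.mul_const_sub v).mul_const_sub v) le_rfl (fun k hk => ?_) ?_ ?_
    (halt.mul_sub_succ hv)
  · have := sinRatio_pos hψ.2.le (succ_mul_pi_div_mem_Ioo hN₀ hm hk)
    positivity
  · filter_upwards [ae_rpowMeasure_pos a] with σ hσ
    positivity
  · filter_upwards [ae_rpowMeasure_pos a] with σ hσ
    have hsign := oscillatingWeight_mul_prod_nonneg hψ hN₀ hm hm' hmono hσ
    have := mul_nonneg (sq_nonneg (v - (1 + σ ^ a))) hsign
    linarith

theorem isLogConcaveUpTo_tableLaw_of_lt (ha : 1 / 2 < a) (ha' : a < 1)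
    (h₀ : tableLaw a n 0 * tableLaw a n 2 < tableLaw a n 1 ^ 2) :
    IsLogConcaveUpTo (tableLaw a n) n := by
  have hpos (j : ℕ) (hj : j ≤ n) : 0 < tableLaw a n j := tableLaw_pos (by linarith) ha' hj
  have hzero (j : ℕ) (hj : n < j) : tableLaw a n j = 0 := tableLaw_eq_zero_of_lt a hj
  refine ⟨hpos, hzero, ?_⟩
  by_contra! hlc
  obtain ⟨v, hv, halt⟩ := exists_alternatesUpTo_mul_sub_succ hpos hzero h₀ hlc
  exact not_alternatesUpTo_tableLaw_mul_sub_succ ha ha' hv halt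

lemma eventually_isLogConcaveUpTo_tableLaw (ha : 1 / 2 < a) (ha' : a < 1)
    (hgap : (Real.Gamma (1 - a))⁻¹ * (Real.Gamma (1 - 3 * a))⁻¹ <
      (Real.Gamma (1 - 2 * a))⁻¹ ^ 2) :
    ∀ᶠ n in atTop, IsLogConcaveUpTo (tableLaw a n) n := by
  have h₁ := tendsto_pochhammerRatio_mul_rpow (-a)
  have h₂ := tendsto_pochhammerRatio_mul_rpow (-(2 * a))
  have h₃ := tendsto_pochhammerRatio_mul_rpow (-(3 * a))
  simp only [← sub_eq_add_neg, neg_neg] at h₁ h₂ h₃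
  filter_upwards [(h₁.mul h₃).eventually_lt (h₂.pow 2) hgap, eventually_gt_atTop 0] with n hlt hn
  refine isLogConcaveUpTo_tableLaw_of_lt ha ha' (sub_pos.1 ?_)
  have hn' : (0 : ℝ) < n := by exact_mod_cast hn
  have hpow₃ : (n : ℝ) ^ (3 * a) = n ^ a * n ^ (2 * a) := by
    rw [← Real.rpow_add hn']
    ring_nf
  have hpow₂ : (n : ℝ) ^ (2 * a) = n ^ a * n ^ a := by
    rw [← Real.rpow_add hn']
    ring_nf
  rw [tableLaw_one_sq_sub]
  rw [hpow₃, hpow₂] at hlt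
  refine pos_of_mul_pos_right (a := (n : ℝ) ^ a * n ^ a * (n ^ a * n ^ a)) ?_ (by positivity)
  linarith

end TableLaw

/-! ### The critical parameter -/

/-- The limit of `n ^ (4 * a) * (q 1 ^ 2 - q 0 * q 2)` for `q = tableLaw a n`. Its zero in `(0, 1)`
is the critical parameter. -/
noncomputable def gammaGap (a : ℝ) : ℝ :=
  (Real.Gamma (1 - 2 * a))⁻¹ ^ 2 - (Real.Gamma (1 - a))⁻¹ * (Real.Gamma (1 - 3 * a))⁻¹

lemma inv_Gamma_eq_self_mul_inv_Gamma_add_one (s : ℝ) :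
    (Real.Gamma s)⁻¹ = s * (Real.Gamma (s + 1))⁻¹ := by
  rcases eq_or_ne s 0 with rfl | hs
  · simp [Real.Gamma_zero]
  · rw [Real.Gamma_add_one hs, mul_inv, mul_inv_cancel_left₀ hs]

lemma continuous_inv_Gamma_comp {X : Type*} [TopologicalSpace X] {f : X → ℝ}
    (hf : Continuous f) : Continuous fun x => (Real.Gamma (f x))⁻¹ := by
  have h := Complex.continuous_re.comp (Complex.differentiable_one_div_Gamma.continuous.comp
    (Complex.continuous_ofReal.comp hf))
  refine h.congr fun x => ?_
  simp only [Function.comp_apply, Complex.Gamma_ofReal, ← Complex.ofReal_inv, Complex.ofReal_re]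

lemma continuous_gammaGap : Continuous gammaGap :=
  ((continuous_inv_Gamma_comp (by fun_prop)).pow 2).sub
    ((continuous_inv_Gamma_comp (by fun_prop)).mul (continuous_inv_Gamma_comp (by fun_prop)))

lemma gammaGap_one_half_pos : 0 < gammaGap (1 / 2) := by
  have hpos : 0 < (Real.Gamma (1 / 2))⁻¹ := inv_pos.2 (Real.Gamma_pos_of_pos (by norm_num))
  have hrec : (Real.Gamma (-1 / 2))⁻¹ = -1 / 2 * (Real.Gamma (1 / 2))⁻¹ := by
    rw [inv_Gamma_eq_self_mul_inv_Gamma_add_one]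
    norm_num
  have hzero : (Real.Gamma (1 - 2 * (1 / 2)))⁻¹ = 0 := by norm_num [Real.Gamma_zero]
  rw [gammaGap, hzero, show (1 : ℝ) - 1 / 2 = 1 / 2 by norm_num,
    show (1 : ℝ) - 3 * (1 / 2) = -1 / 2 by norm_num, hrec]
  nlinarith

/-- The recurrence for `Γ` extracts the zeros of all the factors of `gammaGap` at `a = 1`. -/
lemma gammaGap_eq_sq_mul (a : ℝ) :
    gammaGap a = (1 - a) ^ 2 * (4 * (1 - 2 * a) ^ 2 * (Real.Gamma (3 - 2 * a))⁻¹ ^ 2 -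
      3 * (1 - 3 * a) * (2 - 3 * a) *
        ((Real.Gamma (2 - a))⁻¹ * (Real.Gamma (4 - 3 * a))⁻¹)) := by
  rw [gammaGap, inv_Gamma_eq_self_mul_inv_Gamma_add_one (1 - 2 * a),
    inv_Gamma_eq_self_mul_inv_Gamma_add_one (1 - 2 * a + 1),
    inv_Gamma_eq_self_mul_inv_Gamma_add_one (1 - a),
    inv_Gamma_eq_self_mul_inv_Gamma_add_one (1 - 3 * a),
    inv_Gamma_eq_self_mul_inv_Gamma_add_one (1 - 3 * a + 1),
    inv_Gamma_eq_self_mul_inv_Gamma_add_one (1 - 3 * a + 1 + 1)]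
  ring_nf

lemma eventually_gammaGap_neg : ∀ᶠ a in 𝓝[<] 1, gammaGap a < 0 := by
  set H : ℝ → ℝ := fun a => 4 * (1 - 2 * a) ^ 2 * (Real.Gamma (3 - 2 * a))⁻¹ ^ 2 -
    3 * (1 - 3 * a) * (2 - 3 * a) * ((Real.Gamma (2 - a))⁻¹ * (Real.Gamma (4 - 3 * a))⁻¹)
    with hH_def
  have hH : Continuous H :=
    (Continuous.mul (by fun_prop) ((continuous_inv_Gamma_comp (by fun_prop)).pow 2)).sub
      (Continuous.mul (by fun_prop) ((continuous_inv_Gamma_comp (by fun_prop)).mul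
        (continuous_inv_Gamma_comp (by fun_prop))))
  have hH_one : H 1 < 0 := by norm_num [hH_def]
  filter_upwards [nhdsWithin_le_nhds (hH.continuousAt.eventually_lt_const hH_one),
    self_mem_nhdsWithin] with a hHa (ha : a < 1)
  rw [gammaGap_eq_sq_mul]
  exact mul_neg_of_pos_of_neg (pow_pos (sub_pos.2 ha) 2) hHa

section CriticalParameter

variable {αs : ℝ}

lemma pos_of_continuous_of_ne_zero {f : ℝ → ℝ} (hf : Continuous f) {x y : ℝ}
    (hne : ∀ z ∈ Set.uIcc x y, f z ≠ 0) (hx : 0 < f x) : 0 < f y := by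
  by_contra! hy
  obtain ⟨z, hz, hz₀⟩ := intermediate_value_uIcc hf.continuousOn
    (Set.mem_uIcc.2 (.inr ⟨hy, hx.le⟩))
  exact hne z hz hz₀

lemma one_half_lt_of_gammaGap_eq_zero_unique
    (huniq : ∀ a ∈ Set.Ioo (0 : ℝ) 1, gammaGap a = 0 → a = αs) : 1 / 2 < αs := by
  obtain ⟨b, hneg, hb⟩ := (eventually_gammaGap_neg.and
    (Ioo_mem_nhdsLT (by norm_num : (1 / 2 : ℝ) < 1))).exists
  obtain ⟨z, hz, hz₀⟩ := intermediate_value_Ioo' hb.1.le continuous_gammaGap.continuousOn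
    ⟨hneg, gammaGap_one_half_pos⟩
  exact huniq z ⟨by linarith [hz.1], hz.2.trans hb.2⟩ hz₀ ▸ hz.1

lemma gammaGap_pos_of_lt (hαs : αs < 1)
    (huniq : ∀ a ∈ Set.Ioo (0 : ℝ) 1, gammaGap a = 0 → a = αs) {a : ℝ} (ha : 1 / 2 ≤ a)
    (haαs : a < αs) : 0 < gammaGap a := by
  refine pos_of_continuous_of_ne_zero continuous_gammaGap (fun z hz hz₀ => ?_)
    gammaGap_one_half_pos
  rw [Set.uIcc_of_le ha] at hz
  linarith [hz.2, huniq z ⟨by linarith [hz.1], by linarith [hz.2]⟩ hz₀]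

lemma gammaGap_neg_of_gt (hαs : 0 < αs)
    (huniq : ∀ a ∈ Set.Ioo (0 : ℝ) 1, gammaGap a = 0 → a = αs) {a : ℝ} (haαs : αs < a)
    (ha : a < 1) : gammaGap a < 0 := by
  obtain ⟨b, hneg, hb⟩ := (eventually_gammaGap_neg.and (Ioo_mem_nhdsLT ha)).exists
  refine neg_pos.1 (pos_of_continuous_of_ne_zero continuous_gammaGap.neg (x := b)
    (fun z hz hz₀ => ?_) (neg_pos.2 hneg))
  rw [Set.uIcc_of_ge hb.1.le] at hz
  linarith [hz.1, huniq z ⟨by linarith [hz.1], hz.2.trans_lt hb.2⟩ (neg_eq_zero.1 hz₀)]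

end CriticalParameter

lemma convexOn_inv_mittagLeffler_neg_of_eventually {a : ℝ} (ha₀ : 0 < a) (ha₁ : a ≤ 1)
    (h : ∀ᶠ n in atTop, IsLogConcaveUpTo (tableLaw a n) n) :
    ConvexOn ℝ (Set.Ici 0) (fun t => (mittagLeffler a 1 (-t))⁻¹) := by
  have hlim (t : ℝ) (ht : 0 ≤ t) := (tendsto_geomTransform_tableLaw ha₀ ha₁ ht).inv₀
    (mittagLeffler_neg_pos ha₀ ha₁ ht).ne'
  refine convexOn_of_tendsto ?_ hlim
  filter_upwards [h] with n hn
  refine (hn.convexOn_inv_geomTransform.comp_linearMap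
    (LinearMap.mulRight ℝ ((n : ℝ) ^ (-a)))).subset (fun t (ht : 0 ≤ t) => ?_) (convex_Ici 0)
  exact mul_nonneg ht (by positivity)

section Criterion

variable {a αs : ℝ}

lemma gammaGap_nonneg_of_convexOn (ha₀ : 1 / 4 ≤ a) (ha₁ : a < 1)
    (h : ConvexOn ℝ (Set.Ici 0) (fun t => (mittagLeffler a 1 (-t))⁻¹)) : 0 ≤ gammaGap a :=
  sub_nonneg.2 (mul_le_sq_of_convexOn_inv (inv_pos.2 (Real.Gamma_pos_of_pos (by linarith)))
    (tendsto_pow_three_mul_mittagLeffler_neg ha₀ ha₁) h)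

lemma convexOn_inv_mittagLeffler_neg_of_gammaGap_pos (ha₀ : 1 / 2 < a) (ha₁ : a < 1)
    (hgap : 0 < gammaGap a) :
    ConvexOn ℝ (Set.Ici 0) (fun t => (mittagLeffler a 1 (-t))⁻¹) :=
  convexOn_inv_mittagLeffler_neg_of_eventually (by linarith) ha₁.le
    (eventually_isLogConcaveUpTo_tableLaw ha₀ ha₁ (sub_pos.1 hgap))

lemma convexOn_inv_mittagLeffler_neg_of_le (ha₀ : 0 < a) (haαs : a ≤ αs) (hαs : αs < 1)
    (huniq : ∀ b ∈ Set.Ioo (0 : ℝ) 1, gammaGap b = 0 → b = αs) :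
    ConvexOn ℝ (Set.Ici 0) (fun t => (mittagLeffler a 1 (-t))⁻¹) := by
  rcases le_or_gt a (1 / 2) with ha | ha
  · exact convexOn_inv_mittagLeffler_neg_of_eventually ha₀ (by linarith)
      (Eventually.of_forall (isLogConcaveUpTo_tableLaw_of_le_half ha₀ ha))
  · refine convexOn_of_tendsto (l := 𝓝[<] a) (f := fun b t => (mittagLeffler b 1 (-t))⁻¹) ?_
      fun t ht => ((continuousAt_mittagLeffler_param ha₀ (-t)).tendsto.mono_left
        nhdsWithin_le_nhds).inv₀ (mittagLeffler_neg_pos ha₀ (by linarith) ht).ne'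
    filter_upwards [Ioo_mem_nhdsLT ha] with b hb
    exact convexOn_inv_mittagLeffler_neg_of_gammaGap_pos hb.1 (by linarith [hb.2])
      (gammaGap_pos_of_lt hαs huniq hb.1.le (hb.2.trans_le haαs))

theorem convexOn_inv_mittagLeffler_neg_iff (ha : a ∈ Set.Ioc (0 : ℝ) 1) (hαs : αs < 1)
    (huniq : ∀ b ∈ Set.Ioo (0 : ℝ) 1, gammaGap b = 0 → b = αs) :
    ConvexOn ℝ (Set.Ici 0) (fun t => (mittagLeffler a 1 (-t))⁻¹) ↔ a ≤ αs ∨ a = 1 := by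
  constructor
  · intro h
    by_contra! ⟨hlt, hne⟩
    have ha₁ : a < 1 := ha.2.lt_of_ne hne
    have hhalf : 1 / 2 < αs := one_half_lt_of_gammaGap_eq_zero_unique huniq
    exact (gammaGap_neg_of_gt (by linarith) huniq hlt ha₁).not_ge
      (gammaGap_nonneg_of_convexOn (by linarith) ha₁ h)
  · rintro (hle | rfl)
    · exact convexOn_inv_mittagLeffler_neg_of_le ha.1 hle hαs huniq
    · simp only [mittagLeffler_one, Real.exp_neg, inv_inv]
      exact convexOn_exp.subset (Set.subset_univ _) (convex_Ici 0)

end Criterion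

/-- Theorem C: let `α ∈ (0,1]` and let `L` be the inverse on `(0,1]` of the restriction
of `E_α` to `(-∞,0]`. Then `x ↦ -x·L(x)` is concave on `(0,1]` iff `α ≤ α_*` or `α = 1`,
where `α_*` is the unique solution in `(0,1)` of `1/Γ(1-2a)² = 1/(Γ(1-a)Γ(1-3a))`. -/
theorem neg_mul_log_concave_iff (α : ℝ) (hα : α ∈ Set.Ioc (0 : ℝ) 1) (L : ℝ → ℝ)
    (hL1 : ∀ x ∈ Set.Ioc (0 : ℝ) 1, mittagLeffler α 1 (L x) = x)
    (hL2 : ∀ z : ℝ, z ≤ 0 → L (mittagLeffler α 1 z) = z)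
    (αs : ℝ) (hαs : αs ∈ Set.Ioo (0 : ℝ) 1)
    (heq : 1 / Real.Gamma (1 - 2 * αs) ^ 2
      = 1 / (Real.Gamma (1 - αs) * Real.Gamma (1 - 3 * αs)))
    (huniq : ∀ a ∈ Set.Ioo (0 : ℝ) 1,
      1 / Real.Gamma (1 - 2 * a) ^ 2
        = 1 / (Real.Gamma (1 - a) * Real.Gamma (1 - 3 * a)) → a = αs) :
    ConcaveOn ℝ (Set.Ioc (0 : ℝ) 1) (fun x => -(x * L x)) ↔ (α ≤ αs ∨ α = 1) := by
  have hinv : Set.InvOn L (mittagLeffler α 1) (Set.Iic 0) (Set.Ioc 0 1) :=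
    ⟨fun z hz => hL2 z hz, fun x hx => hL1 x hx⟩
  have hmono : StrictMonoOn (mittagLeffler α 1) (Set.Iic 0) :=
    (monotoneOn_mittagLeffler hα.1 hα.2).strictMonoOn_of_injOn hinv.1.injOn
  have hE : Set.MapsTo (mittagLeffler α 1) (Set.Iic 0) (Set.Ioc 0 1) :=
    fun z hz => mittagLeffler_mem_Ioc hα.1 hα.2 hz
  have hL : Set.MapsTo L (Set.Ioc 0 1) (Set.Iic 0) := fun x hx => by
    by_contra hpos
    exact ((one_lt_mittagLeffler hα.1 (not_le.1 hpos)).trans_eq (hL1 x hx)).not_ge hx.2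
  have hIci : (Set.Ioc (0 : ℝ) 1)⁻¹ = Set.Ici 1 := by
    rw [inv_Ioc_zero_left one_pos, inv_one]
  have hgap (a : ℝ) (ha : a ∈ Set.Ioo (0 : ℝ) 1) (h : gammaGap a = 0) : a = αs :=
    huniq a ha (by simpa only [one_div, mul_inv, inv_pow] using sub_eq_zero.1 h)
  rw [concaveOn_neg_mul_iff_convexOn_inv (fun x hx => hx.1) (hIci ▸ convex_Ici 1) (convex_Iic 0)
    hmono hE hL hinv, Set.neg_Iic, neg_zero]
  exact convexOn_inv_mittagLeffler_neg_iff hα hαs.2 hgap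
end

section
/- Let α ∈ (0,1), let E_α(z) = ∑_{n=0}^∞ z^n / Γ(1 + αn), and let L : (0,∞) → ℝ satisfy E_α(L(x)) = x for all x ∈ (0,1] and L(E_α(z)) = z for all z ≤ 0. Then the following are equivalent: (i) x ↦ − x · L(x) is concave on (0,1); (ii) E_α(z) · E_α''(z) ≤ 2 · E_α'(z)² for all z ≤ 0; (iii) z ↦ 1 / E_α(z) is convex on (-∞, 0]. -/
/-!
The function `y ↦ L (1 / y)` inverts the decreasing function `1 / E_α`, and the inverse of a
decreasing function is convex exactly when the function is. On the other hand the perspective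
`x ↦ x * f (1 / x)` is a convexity-preserving involution which exchanges `y ↦ L (1 / y)` and
`x ↦ x * L x`. Hence concavity of `-x * L x` on `(0, 1)` is convexity of `1 / E_α` on `(-∞, 0)`,
which, as `(1 / E)'' = (2 * E' ^ 2 - E * E'') / E ^ 3`, is the differential inequality.

This needs `E_α` to be increasing and positive on `(-∞, 0]`. Being continuous and left invertible
there, it is strictly monotone, and it increases because it takes the value `1 / 2 < E_α(0)`. Thus
`E_{α,α} = α * E_α'` is nonnegative on `(-∞, 0]`, and so is `E_α`, since `Γ(1 - α) * E_α(z)` is the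
integral over `(0, 1)` of `r ^ (α - 1) * (1 - r) ^ (-α)` times `E_{α,α}(z * r ^ α)`.
-/

open Filter MeasureTheory Set Topology

section Convexity

section OrderedField

variable {𝕜 β : Type*} [Field 𝕜] [LinearOrder 𝕜] [IsStrictOrderedRing 𝕜]

lemma convex_inv_of_subset_Ioi {s : Set 𝕜} (hs : Convex 𝕜 s) (hpos : s ⊆ Ioi 0) :
    Convex 𝕜 s⁻¹ := by
  rw [convex_iff_ordConnected] at hs ⊢
  refine ⟨fun x hx y hy z hz => hs.out hy hx ?_⟩
  have hx0 : 0 < x := inv_pos.1 (hpos hx)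
  have hz0 : 0 < z := hx0.trans_le hz.1
  exact ⟨inv_anti₀ hz0 hz.2, inv_anti₀ hx0 hz.1⟩

variable [AddCommGroup β] [PartialOrder β] [Module 𝕜 β] [PosSMulMono 𝕜 β]

-- This is the perspective `(x, t) ↦ t • f (t⁻¹ • x)` of `f`, restricted to the line `x = 1`.
lemma convexOn_inv_smul_comp_inv {s : Set 𝕜} {f : 𝕜 → β} (hf : ConvexOn 𝕜 s f)
    (hpos : s ⊆ Ioi 0) : ConvexOn 𝕜 s⁻¹ fun x => x • f x⁻¹ := by
  have hconv := convex_inv_of_subset_Ioi hf.1 hpos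
  refine ⟨hconv, fun x hx y hy a b ha hb hab => ?_⟩
  have hx0 : 0 < x := inv_pos.1 (hpos hx)
  have hy0 : 0 < y := inv_pos.1 (hpos hy)
  have hw0 : 0 < a * x + b * y := inv_pos.1 (hpos (hconv hx hy ha hb hab))
  simp only [smul_eq_mul]
  set w := a * x + b * y with hw
  have hsum : a * x / w + b * y / w = 1 := by rw [← add_div, ← hw, div_self hw0.ne']
  have hinv : (a * x / w) • x⁻¹ + (b * y / w) • y⁻¹ = w⁻¹ := by
    simp only [smul_eq_mul]
    field_simp
    exact hab
  calc w • f w⁻¹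
      ≤ w • ((a * x / w) • f x⁻¹ + (b * y / w) • f y⁻¹) := by
        rw [← hinv]
        gcongr
        exact hf.2 hx hy (by positivity) (by positivity) hsum
    _ = a • x • f x⁻¹ + b • y • f y⁻¹ := by
        simp only [smul_add, smul_smul, mul_div_cancel₀ _ hw0.ne']

lemma convexOn_inv_smul_comp_inv_iff {s : Set 𝕜} {f : 𝕜 → β} (hpos : s ⊆ Ioi 0) :
    ConvexOn 𝕜 s⁻¹ (fun x => x • f x⁻¹) ↔ ConvexOn 𝕜 s f := by
  refine ⟨fun h => ?_, (convexOn_inv_smul_comp_inv · hpos)⟩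
  have hpos_inv : s⁻¹ ⊆ Ioi 0 := fun x hx => inv_pos.1 (hpos hx)
  have h_twice := convexOn_inv_smul_comp_inv h hpos_inv
  rw [inv_inv] at h_twice
  refine h_twice.congr fun x hx => ?_
  simp only [inv_inv, smul_inv_smul₀ (hpos hx : (0 : 𝕜) < x).ne']

end OrderedField

section Inverse

variable {𝕜 E F : Type*} [Semiring 𝕜] [PartialOrder 𝕜]
  [AddCommMonoid E] [LinearOrder E] [SMul 𝕜 E] [AddCommMonoid F] [PartialOrder F] [SMul 𝕜 F]

lemma convexOn_of_strictAntiOn_of_rightInvOn {s : Set E} {t : Set F} {f : E → F} {g : F → E}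
    (hf : ConvexOn 𝕜 s f) (hanti : StrictAntiOn f s) (ht : Convex 𝕜 t) (hg : MapsTo g t s)
    (hfg : RightInvOn g f t) : ConvexOn 𝕜 t g := by
  refine ⟨ht, fun x hx y hy a b ha hb hab => ?_⟩
  have hmem := ht hx hy ha hb hab
  rw [← hanti.le_iff_ge (hf.1 (hg hx) (hg hy) ha hb hab) (hg hmem), hfg hmem]
  simpa only [hfg hx, hfg hy] using hf.2 (hg hx) (hg hy) ha hb hab

end Inverse

section LinearOrderedField

variable {𝕜 : Type*} [Field 𝕜] [LinearOrder 𝕜] [IsStrictOrderedRing 𝕜]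

-- `y ↦ L y⁻¹` is at once the inverse of the decreasing function `E⁻¹` and, up to inversion of the
-- variable, the perspective of `x ↦ x * L x`.
lemma convexOn_mul_iff_convexOn_inv_of_invOn {s t : Set 𝕜} {E L : 𝕜 → 𝕜} (hs : Convex 𝕜 s)
    (ht : Convex 𝕜 t) (htpos : t ⊆ Ioi 0) (hE : MapsTo E s t) (hL : MapsTo L t s)
    (hinv : InvOn L E s t) (hmono : StrictMonoOn E s) :
    ConvexOn 𝕜 t (fun x => x * L x) ↔ ConvexOn 𝕜 s fun z => (E z)⁻¹ := by
  have htinv_pos : t⁻¹ ⊆ Ioi 0 := fun x hx => inv_pos.1 (htpos hx)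
  have hperspective : ConvexOn 𝕜 t (fun x => x * L x) ↔ ConvexOn 𝕜 t⁻¹ fun y => L y⁻¹ := by
    simpa using convexOn_inv_smul_comp_inv_iff (f := fun y => L y⁻¹) htinv_pos
  have hEinv : MapsTo (fun z => (E z)⁻¹) s t⁻¹ := fun z hz => by simpa using hE hz
  have hLinv : MapsTo (fun y => L y⁻¹) t⁻¹ s := fun y hy => hL hy
  have hleft : LeftInvOn (fun y => L y⁻¹) (fun z => (E z)⁻¹) s := fun z hz => by
    simpa using hinv.1 hz
  have hright : RightInvOn (fun y => L y⁻¹) (fun z => (E z)⁻¹) t⁻¹ := fun y hy => by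
    simp only [hinv.2 hy, inv_inv]
  have hanti : StrictAntiOn (fun z => (E z)⁻¹) s := fun x hx y hy hxy =>
    inv_strictAnti₀ (htpos (hE hx)) (hmono hx hy hxy)
  have hanti_inv : StrictAntiOn (fun y => L y⁻¹) t⁻¹ := fun x hx y hy hxy => by
    refine (hanti.lt_iff_gt (hLinv hx) (hLinv hy)).1 ?_
    simpa only [hright hx, hright hy] using hxy
  rw [hperspective]
  exact ⟨fun h => convexOn_of_strictAntiOn_of_rightInvOn h hanti_inv hs hEinv hleft,
    fun h => convexOn_of_strictAntiOn_of_rightInvOn h hanti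
      (convex_inv_of_subset_Ioi ht htpos) hLinv hright⟩

end LinearOrderedField

lemma convexOn_iff_deriv_deriv_nonneg {s : Set ℝ} {f : ℝ → ℝ} (hs : Convex ℝ s)
    (hne : (interior s).Nonempty) (hf : ContDiff ℝ 2 f) :
    ConvexOn ℝ s f ↔ ∀ x ∈ closure s, 0 ≤ deriv (deriv f) x := by
  have hderiv : ContDiff ℝ 1 (deriv f) := hf.deriv'
  have hdiff : Differentiable ℝ f := hf.differentiable two_ne_zero
  refine ⟨fun h => ?_, fun h => convexOn_of_deriv2_nonneg' hs hdiff.differentiableOn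
    (hderiv.differentiable one_ne_zero).differentiableOn fun x hx => h x (subset_closure hx)⟩
  have hclosed : IsClosed {x | 0 ≤ deriv (deriv f) x} :=
    isClosed_le continuous_const (hderiv.continuous_deriv le_rfl)
  have hmono : MonotoneOn (deriv f) s := h.monotoneOn_deriv fun x _ => hdiff x
  have hinterior : ∀ x ∈ interior s, 0 ≤ deriv (deriv f) x := fun x hx => by
    rw [← derivWithin_of_mem_nhds (mem_interior_iff_mem_nhds.1 hx)]
    exact hmono.derivWithin_nonneg
  rw [← hs.closure_interior_eq_closure_of_nonempty_interior hne]
  exact closure_minimal hinterior hclosed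

lemma deriv_deriv_inv {E : ℝ → ℝ} (hE : ContDiff ℝ 2 E) (h0 : ∀ z, E z ≠ 0) (z : ℝ) :
    deriv (deriv fun z => (E z)⁻¹) z =
      (2 * deriv E z ^ 2 - E z * deriv (deriv E) z) / E z ^ 3 := by
  have hdiff : Differentiable ℝ E := hE.differentiable two_ne_zero
  have hdiff' : Differentiable ℝ (deriv E) := hE.deriv'.differentiable one_ne_zero
  have hfirst : (deriv fun z => (E z)⁻¹) = fun z => -deriv E z / E z ^ 2 :=
    funext fun z => deriv_fun_inv'' (hdiff z) (h0 z)
  have hsecond : HasDerivAt (fun z => -deriv E z / E z ^ 2) _ z :=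
    (hdiff' z).hasDerivAt.fun_neg.fun_div ((hdiff z).hasDerivAt.fun_pow 2) (pow_ne_zero 2 (h0 z))
  rw [hfirst, hsecond.deriv]
  field_simp [h0 z]
  push_cast
  ring

lemma convexOn_inv_iff_mul_deriv_deriv_le {s : Set ℝ} {E : ℝ → ℝ} (hs : Convex ℝ s)
    (hne : (interior s).Nonempty) (hE : ContDiff ℝ 2 E) (hpos : ∀ z, 0 < E z) :
    ConvexOn ℝ s (fun z => (E z)⁻¹) ↔
      ∀ z ∈ closure s, E z * deriv (deriv E) z ≤ 2 * deriv E z ^ 2 := by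
  have hinv : ContDiff ℝ 2 fun z => (E z)⁻¹ := hE.inv fun z => (hpos z).ne'
  rw [convexOn_iff_deriv_deriv_nonneg hs hne hinv]
  refine forall₂_congr fun z _ => ?_
  rw [deriv_deriv_inv hE (fun z => (hpos z).ne'), le_div_iff₀ (pow_pos (hpos z) 3), zero_mul,
    sub_nonneg]

end Convexity

lemma strictMonoOn_Iic_of_injOn {X Y : Type*} [ConditionallyCompleteLinearOrder X]
    [TopologicalSpace X] [OrderTopology X] [DenselyOrdered X] [LinearOrder Y] [TopologicalSpace Y]
    [OrderClosedTopology Y] {f : X → Y} {a b : X} (hf : ContinuousOn f (Iic b))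
    (hinj : InjOn f (Iic b)) (hab : a < b) (hfab : f a < f b) : StrictMonoOn f (Iic b) := by
  intro x hx y hy hxy
  have hcx : min x a ≤ x := min_le_left x a
  have hca : min x a ≤ a := min_le_right x a
  rcases (hf.mono Icc_subset_Iic_self).strictMonoOn_of_injOn_Icc' (hca.trans hab.le)
    (hinj.mono Icc_subset_Iic_self) with hmono | hanti
  · exact hmono ⟨hcx, hx⟩ ⟨hcx.trans hxy.le, hy⟩ hxy
  · exact absurd (hanti ⟨hca, hab.le⟩ ⟨hca.trans hab.le, le_rfl⟩ hab) hfab.not_gt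

lemma hasSum_deriv_of_hasFPowerSeriesOnBall {𝕜 F : Type*} [NontriviallyNormedField 𝕜]
    [NormedAddCommGroup F] [NormedSpace 𝕜 F] [CompleteSpace F] {f : 𝕜 → F}
    {p : FormalMultilinearSeries 𝕜 𝕜 F} {x y : 𝕜} {r : ENNReal}
    (hf : HasFPowerSeriesOnBall f p x r) (hy : y ∈ Metric.eball 0 r) :
    HasSum (fun n => y ^ n • (n + 1) • p.coeff (n + 1)) (deriv f (x + y)) := by
  have hsum := (hf.fderiv.hasSum hy).mapL (ContinuousLinearMap.apply 𝕜 F (1 : 𝕜))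
  simpa [FormalMultilinearSeries.apply_eq_pow_smul_coeff,
    FormalMultilinearSeries.derivSeries_coeff_one] using hsum

-- Compare the slopes of `log ∘ Γ` on `[x - 1, x]` and `[x, x + a]`; the former is `log (x - 1)`.
lemma rpow_mul_Gamma_le_Gamma_add {x a : ℝ} (hx : 1 < x) (ha : 0 < a) :
    (x - 1) ^ a * Real.Gamma x ≤ Real.Gamma (x + a) := by
  have hx1 : 0 < x - 1 := sub_pos.2 hx
  have hx0 : 0 < x := one_pos.trans hx
  have hΓ1 : 0 < Real.Gamma (x - 1) := Real.Gamma_pos_of_pos hx1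
  have hΓ : 0 < Real.Gamma x := Real.Gamma_pos_of_pos hx0
  have hΓa : 0 < Real.Gamma (x + a) := Real.Gamma_pos_of_pos (by positivity)
  have hlog : Real.log (Real.Gamma x) - Real.log (Real.Gamma (x - 1)) = Real.log (x - 1) := by
    rw [sub_eq_iff_eq_add, ← Real.log_mul hx1.ne' hΓ1.ne', ← Real.Gamma_add_one hx1.ne',
      sub_add_cancel]
  have hslope := Real.convexOn_log_Gamma.slope_mono_adjacent (mem_Ioi.2 hx1)
    (mem_Ioi.2 (by positivity : 0 < x + a)) (sub_one_lt x) (lt_add_of_pos_right x ha)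
  simp only [Function.comp_apply, sub_sub_cancel, div_one, add_sub_cancel_left, le_div_iff₀ ha,
    hlog] at hslope
  rw [← Real.log_le_log_iff (by positivity) hΓa, Real.log_mul (by positivity) hΓ.ne',
    Real.log_rpow hx1]
  linarith

lemma tendsto_Gamma_div_Gamma_add {a : ℝ} (ha : 0 < a) :
    Tendsto (fun x => Real.Gamma x / Real.Gamma (x + a)) atTop (𝓝 0) := by
  have hbound : Tendsto (fun x : ℝ => (x - 1) ^ (-a)) atTop (𝓝 0) :=
    (tendsto_rpow_neg_atTop ha).comp (tendsto_atTop_add_const_right _ (-1) tendsto_id)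
  refine squeeze_zero' ?_ ?_ hbound <;> filter_upwards [eventually_gt_atTop 1] with x hx
  · exact div_nonneg (Real.Gamma_pos_of_pos (by linarith)).le
      (Real.Gamma_pos_of_pos (by linarith)).le
  · have hx1 : 0 < x - 1 := sub_pos.2 hx
    rw [div_le_iff₀ (Real.Gamma_pos_of_pos (by linarith)), Real.rpow_neg hx1.le,
      le_inv_mul_iff₀ (by positivity)]
    exact rpow_mul_Gamma_le_Gamma_add hx ha

section MittagLeffler

variable {α β δ z : ℝ}

lemma Gamma_add_mul_natCast_pos (hα : 0 < α) (hβ : 0 < β) (n : ℕ) :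
    0 < Real.Gamma (β + α * n) :=
  Real.Gamma_pos_of_pos (by positivity)

lemma hasFPowerSeriesOnBall_mittagLeffler (hα : 0 < α) (hβ : 0 < β) :
    HasFPowerSeriesOnBall (mittagLeffler α β)
      (.ofScalars ℝ fun n : ℕ => (Real.Gamma (β + α * n))⁻¹) 0 ⊤ := by
  set c : ℕ → ℝ := fun n => (Real.Gamma (β + α * n))⁻¹
  have hratio (n : ℕ) : ‖c n.succ‖ / ‖c n‖ =
      Real.Gamma (β + α * n) / Real.Gamma (β + α * n + α) := by
    have hcast : β + α * (n.succ : ℝ) = β + α * n + α := by push_cast; ring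
    have hn := Gamma_add_mul_natCast_pos hα hβ n
    have hsucc := Gamma_add_mul_natCast_pos hα hβ n.succ
    rw [Real.norm_of_nonneg (inv_pos.2 hsucc).le, Real.norm_of_nonneg (inv_pos.2 hn).le, hcast,
      inv_div_inv]
  have harg : Tendsto (fun n : ℕ => β + α * (n : ℝ)) atTop atTop :=
    tendsto_atTop_add_const_left _ _ (tendsto_natCast_atTop_atTop.const_mul_atTop hα)
  have hradius : (FormalMultilinearSeries.ofScalars ℝ c).radius = ⊤ :=
    FormalMultilinearSeries.ofScalars_radius_eq_top_of_tendsto ℝ c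
      (.of_forall fun n => (inv_pos.2 (Gamma_add_mul_natCast_pos hα hβ n)).ne')
      (by simpa only [hratio, Function.comp_def] using (tendsto_Gamma_div_Gamma_add hα).comp harg)
  have hsum : (FormalMultilinearSeries.ofScalars ℝ c).sum = mittagLeffler α β := by
    funext z
    exact (FormalMultilinearSeries.ofScalars_sum_eq c z).trans
      (tsum_congr fun n => inv_mul_eq_div _ _)
  rw [← hsum, ← hradius]
  exact FormalMultilinearSeries.hasFPowerSeriesOnBall _ (by simp [hradius])

lemma contDiff_mittagLeffler (hα : 0 < α) (hβ : 0 < β) {n : WithTop ℕ∞} :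
    ContDiff ℝ n (mittagLeffler α β) :=
  AnalyticOnNhd.contDiff <| by
    simpa using (hasFPowerSeriesOnBall_mittagLeffler hα hβ).analyticOnNhd

lemma hasSum_mittagLeffler (hα : 0 < α) (hβ : 0 < β) (z : ℝ) :
    HasSum (fun n : ℕ => z ^ n / Real.Gamma (β + α * n)) (mittagLeffler α β z) := by
  simpa [FormalMultilinearSeries.ofScalars_apply_eq, div_eq_mul_inv] using
    (hasFPowerSeriesOnBall_mittagLeffler hα hβ).hasSum (y := z) (by simp)

lemma mittagLeffler_zero_s9 (α β : ℝ) : mittagLeffler α β 0 = (Real.Gamma β)⁻¹ := by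
  rw [mittagLeffler, tsum_eq_single 0 fun n hn => by simp [hn]]
  simp

lemma mittagLeffler_zero_le (hα : 0 < α) (hβ : 0 < β) (hz : 0 ≤ z) :
    mittagLeffler α β 0 ≤ mittagLeffler α β z := by
  have hterm (n : ℕ) : 0 ≤ z ^ n / Real.Gamma (β + α * n) :=
    div_nonneg (pow_nonneg hz n) (Gamma_add_mul_natCast_pos hα hβ n).le
  simpa [mittagLeffler_zero_s9] using
    le_hasSum (hasSum_mittagLeffler hα hβ z) 0 fun n _ => hterm n

lemma deriv_mittagLeffler_one (hα : 0 < α) (z : ℝ) :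
    deriv (mittagLeffler α 1) z = α⁻¹ * mittagLeffler α α z := by
  have hseries := hasSum_deriv_of_hasFPowerSeriesOnBall (y := z)
    (hasFPowerSeriesOnBall_mittagLeffler hα one_pos) (by simp)
  rw [zero_add] at hseries
  refine hseries.unique <| ((hasSum_mittagLeffler hα hα z).mul_left α⁻¹).congr_fun fun n => ?_
  have harg : α + α * (n : ℝ) ≠ 0 := by positivity
  have hshift : (1 : ℝ) + α * (n + 1 : ℕ) = α + α * n + 1 := by push_cast; ring
  have hΓ := (Gamma_add_mul_natCast_pos hα hα n).ne'
  rw [FormalMultilinearSeries.coeff_ofScalars, hshift, Real.Gamma_add_one harg]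
  simp only [smul_eq_mul, nsmul_eq_mul]
  push_cast
  field_simp [hΓ]
  ring

lemma ofReal_betaIntegrand {a b x : ℝ} (hx : x ∈ Icc (0 : ℝ) 1) :
    ((x ^ (a - 1) * (1 - x) ^ (b - 1) : ℝ) : ℂ) =
      (x : ℂ) ^ ((a : ℂ) - 1) * (1 - (x : ℂ)) ^ ((b : ℂ) - 1) := by
  simp [Complex.ofReal_cpow hx.1, Complex.ofReal_cpow (sub_nonneg.2 hx.2)]

lemma integrableOn_rpow_mul_one_sub_rpow {a b : ℝ} (ha : 0 < a) (hb : 0 < b) :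
    IntegrableOn (fun x : ℝ => x ^ (a - 1) * (1 - x) ^ (b - 1)) (Ioo 0 1) := by
  have hcomplex := Complex.betaIntegral_convergent (u := a) (v := b) (by simpa) (by simpa)
  rw [intervalIntegrable_iff_integrableOn_Ioo_of_le zero_le_one] at hcomplex
  refine IntegrableOn.congr_fun hcomplex.re (fun x hx => ?_) measurableSet_Ioo
  rw [← ofReal_betaIntegrand ⟨hx.1.le, hx.2.le⟩]
  rfl

lemma integral_rpow_mul_one_sub_rpow {a b : ℝ} (ha : 0 < a) (hb : 0 < b) :
    ∫ x in Ioo (0 : ℝ) 1, x ^ (a - 1) * (1 - x) ^ (b - 1) =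
      Real.Gamma a * Real.Gamma b / Real.Gamma (a + b) := by
  rw [← integral_Ioc_eq_integral_Ioo, ← intervalIntegral.integral_of_le zero_le_one]
  apply Complex.ofReal_injective
  rw [← intervalIntegral.integral_ofReal]
  push_cast [← Complex.Gamma_ofReal]
  rw [← Complex.betaIntegral_eq_Gamma_mul_div _ _ (by simpa) (by simpa), Complex.betaIntegral]
  refine intervalIntegral.integral_congr fun x hx => ?_
  rw [uIcc_of_le zero_le_one] at hx
  simpa using ofReal_betaIntegrand hx

-- Expand `E_{α,β}` and integrate term by term; each term is a beta integral.
lemma integral_rpow_mul_mittagLeffler (hα : 0 < α) (hβ : 0 < β) (hδ : 0 < δ) (z : ℝ) :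
    ∫ r in Ioo (0 : ℝ) 1, r ^ (β - 1) * (1 - r) ^ (δ - 1) * mittagLeffler α β (z * r ^ α) =
      Real.Gamma δ * mittagLeffler α (β + δ) z := by
  set F : ℝ → ℕ → ℝ → ℝ := fun w n r =>
    r ^ (β + α * n - 1) * (1 - r) ^ (δ - 1) * (w ^ n / Real.Gamma (β + α * n)) with hF
  have hint (w : ℝ) (n : ℕ) : IntegrableOn (F w n) (Ioo 0 1) :=
    (integrableOn_rpow_mul_one_sub_rpow (by positivity) hδ).mul_const _
  have hval (w : ℝ) (n : ℕ) : ∫ r in Ioo (0 : ℝ) 1, F w n r =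
      Real.Gamma δ * (w ^ n / Real.Gamma (β + δ + α * n)) := by
    have hΓ := (Gamma_add_mul_natCast_pos hα hβ n).ne'
    rw [integral_mul_const, integral_rpow_mul_one_sub_rpow (by positivity) hδ, add_right_comm]
    field_simp
  have hnorm (n : ℕ) : ∫ r in Ioo (0 : ℝ) 1, ‖F z n r‖ = ∫ r in Ioo (0 : ℝ) 1, F |z| n r := by
    refine setIntegral_congr_fun measurableSet_Ioo fun r ⟨hr0, hr1⟩ => ?_
    simp only [hF, norm_mul, norm_div, norm_pow, Real.norm_eq_abs]
    rw [abs_of_nonneg (Real.rpow_nonneg hr0.le _),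
      abs_of_nonneg (Real.rpow_nonneg (sub_pos.2 hr1).le _),
      abs_of_pos (Gamma_add_mul_natCast_pos hα hβ n)]
  have hseries (w : ℝ) : HasSum (fun n => ∫ r in Ioo (0 : ℝ) 1, F w n r)
      (Real.Gamma δ * mittagLeffler α (β + δ) w) := by
    simpa only [hval] using (hasSum_mittagLeffler hα (by positivity) w).mul_left _
  have hswap := hasSum_integral_of_summable_integral_norm (hint z) (by
    simpa only [hnorm] using (hseries |z|).summable)
  rw [← hswap.unique (hseries z)]
  refine setIntegral_congr_fun measurableSet_Ioo fun r ⟨hr0, _⟩ => ?_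
  rw [mittagLeffler, ← tsum_mul_left]
  refine tsum_congr fun n => ?_
  have hpow : r ^ (β + α * n - 1) = r ^ (β - 1) * (r ^ α) ^ n := by
    rw [← Real.rpow_mul_natCast hr0.le, ← Real.rpow_add hr0]
    ring_nf
  simp only [hF, hpow, mul_pow]
  ring

lemma mittagLeffler_add_nonneg (hα : 0 < α) (hβ : 0 < β) (hδ : 0 < δ)
    (h : ∀ z ≤ 0, 0 ≤ mittagLeffler α β z) (hz : z ≤ 0) : 0 ≤ mittagLeffler α (β + δ) z := by
  refine nonneg_of_mul_nonneg_right ?_ (Real.Gamma_pos_of_pos hδ)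
  rw [← integral_rpow_mul_mittagLeffler hα hβ hδ]
  refine setIntegral_nonneg measurableSet_Ioo fun r ⟨hr0, hr1⟩ => ?_
  have hE := h (z * r ^ α) (mul_nonpos_of_nonpos_of_nonneg hz (Real.rpow_nonneg hr0.le _))
  exact mul_nonneg (mul_nonneg (Real.rpow_nonneg hr0.le _)
    (Real.rpow_nonneg (sub_pos.2 hr1).le _)) hE

lemma mittagLeffler_one_zero (α : ℝ) : mittagLeffler α 1 0 = 1 := by
  simp [mittagLeffler_zero_s9]

lemma one_le_mittagLeffler_one (hα : 0 < α) (hz : 0 ≤ z) : 1 ≤ mittagLeffler α 1 z :=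
  (mittagLeffler_one_zero α).symm.trans_le (mittagLeffler_zero_le hα one_pos hz)

lemma mittagLeffler_one_pos_of_strictMonoOn (hα : α ∈ Ioo 0 1)
    (hmono : StrictMonoOn (mittagLeffler α 1) (Iic 0)) (z : ℝ) : 0 < mittagLeffler α 1 z := by
  obtain ⟨hα0, hα1⟩ := hα
  have hαα_nonneg : ∀ w ≤ 0, 0 ≤ mittagLeffler α α w := fun w hw => by
    have hdiff := (contDiff_mittagLeffler hα0 one_pos).differentiable one_ne_zero w
    have h := hmono.monotoneOn.derivWithin_nonneg (x := w)
    rw [hdiff.derivWithin (uniqueDiffOn_Iic 0 w hw), deriv_mittagLeffler_one hα0] at h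
    exact nonneg_of_mul_nonneg_right h (inv_pos.2 hα0)
  have hnonneg : ∀ w ≤ 0, 0 ≤ mittagLeffler α 1 w := fun w hw => by
    simpa using mittagLeffler_add_nonneg hα0 hα0 (sub_pos.2 hα1) hαα_nonneg hw
  rcases le_or_gt z 0 with hz | hz
  · have hz' : z - 1 ≤ 0 := by linarith
    exact (hnonneg _ hz').trans_lt (hmono hz' hz (sub_one_lt z))
  · exact one_pos.trans_le (one_le_mittagLeffler_one hα0 hz.le)

end MittagLeffler

/-- For `α ∈ (0,1)` and `L` the inverse of `E_α|_{(-∞,0]}`, the following are equivalent: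
(i) `x ↦ -x·L(x)` is concave on `(0,1)`;
(ii) `E_α(z)·E_α''(z) ≤ 2·E_α'(z)²` for all `z ≤ 0`;
(iii) `z ↦ 1/E_α(z)` is convex on `(-∞,0]`. -/
theorem concave_iff_deriv_ineq_iff_reciprocal_convex (α : ℝ)
    (hα : α ∈ Set.Ioo (0 : ℝ) 1) (L : ℝ → ℝ)
    (hL1 : ∀ x ∈ Set.Ioc (0 : ℝ) 1, mittagLeffler α 1 (L x) = x)
    (hL2 : ∀ z : ℝ, z ≤ 0 → L (mittagLeffler α 1 z) = z) :
    (ConcaveOn ℝ (Set.Ioo (0 : ℝ) 1) (fun x => -(x * L x)) ↔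
      ∀ z : ℝ, z ≤ 0 →
        mittagLeffler α 1 z * deriv (deriv (mittagLeffler α 1)) z ≤
          2 * (deriv (mittagLeffler α 1) z) ^ 2) ∧
    ((∀ z : ℝ, z ≤ 0 →
        mittagLeffler α 1 z * deriv (deriv (mittagLeffler α 1)) z ≤
          2 * (deriv (mittagLeffler α 1) z) ^ 2) ↔
      ConvexOn ℝ (Set.Iic (0 : ℝ)) (fun z => 1 / mittagLeffler α 1 z)) := by
  obtain ⟨hα0, hα1⟩ := hα
  have hE : ContDiff ℝ 2 (mittagLeffler α 1) := contDiff_mittagLeffler hα0 one_pos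
  have hL_neg : MapsTo L (Ioo 0 1) (Iio 0) := fun x hx => by
    refine mem_Iio.2 <| lt_of_not_ge fun hLx => hx.2.not_ge ?_
    simpa only [hL1 x ⟨hx.1, hx.2.le⟩] using one_le_mittagLeffler_one hα0 hLx
  have hmono : StrictMonoOn (mittagLeffler α 1) (Iic 0) := by
    have hhalf : (1 / 2 : ℝ) ∈ Ioo 0 1 := by norm_num
    refine strictMonoOn_Iic_of_injOn hE.continuous.continuousOn (LeftInvOn.injOn hL2)
      (hL_neg hhalf) ?_
    rw [hL1 _ ⟨hhalf.1, hhalf.2.le⟩, mittagLeffler_one_zero]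
    exact hhalf.2
  have hpos := mittagLeffler_one_pos_of_strictMonoOn ⟨hα0, hα1⟩ hmono
  have hE_mem : MapsTo (mittagLeffler α 1) (Iio 0) (Ioo 0 1) := fun z hz => ⟨hpos z, by
    simpa only [mittagLeffler_one_zero] using hmono (Iio_subset_Iic_self hz) self_mem_Iic hz⟩
  have hinv : InvOn L (mittagLeffler α 1) (Iio 0) (Ioo 0 1) :=
    ⟨fun z hz => hL2 z (le_of_lt hz), fun x hx => hL1 x (Ioo_subset_Ioc_self hx)⟩
  have hconcave := neg_concaveOn_iff.trans <| convexOn_mul_iff_convexOn_inv_of_invOn (convex_Iio 0)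
    (convex_Ioo 0 1) (fun _ hx => hx.1) hE_mem hL_neg hinv (hmono.mono Iio_subset_Iic_self)
  have hIio := convexOn_inv_iff_mul_deriv_deriv_le (convex_Iio 0) (by simp) hE hpos
  have hIic := convexOn_inv_iff_mul_deriv_deriv_le (convex_Iic 0) (by simp) hE hpos
  rw [closure_Iio] at hIio
  rw [closure_Iic] at hIic
  simp only [one_div]
  exact ⟨hconcave.trans hIio, hIic.symm⟩
end
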